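/- (Partial welding.) Let Â, B̂ ⊆ ℂ be open sets, let γ_A ⊆ ∂Â and γ_B ⊆ ∂B̂ be boundary arcs (images of continuous injective curves), and let f : γ_A → γ_B be a homeomorphism. Suppose ψ_A is a biholomorphism from Â onto the open upper half-plane ℍ that extends to a continuous injective map on Â ∪ γ_A carrying γ_A homeomorphically onto the interval [−1,1] ⊆ ℝ, and ψ_B is a biholomorphism from B̂ onto the open lower half-plane with the analogous continuous injective extension carrying γ_B onto [−1,1]. Assume that the induced map g = ψ_B ∘ f ∘ ψ_A⁻¹ : [−1,1] → [−1,1] is k-quasisymmetric on [−1,1] for some k > 0. Then there exist maps Φ_A and Φ_B such that: Φ_A is holomorphic and injective on Â and extends continuously to Â ∪ γ_A; Φ_B is holomorphic and injective on B̂ and extends continuously to B̂ ∪ γ_B; the images Φ_A(Â) and Φ_B(B̂) are disjoint; and Φ_A(x) = Φ_B(f(x)) for every x ∈ γ_A. -/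

import Mathlib

/-!
The two boundary arcs are first moved into a standard position. The map `KC`, a rescaled
`-1 / (1 + √(z + 2))`, sends the half-plane injectively into a vertical half-strip of width less
than `2π` and is bi-Lipschitz on `[-1, 1]`. In this coordinate the boundary correspondence `g` is an
increasing self-homeomorphism of a short interval; reflecting it oddly and extending it periodically
gives the lift `e` of a circle homeomorphism (`exists_circle_map`). Quasisymmetry is only used
through the doubling condition `Dbl`, which is linear in `e` and survives this extension. It
therefore suffices to weld two discs along a circle homeomorphism with doubling lift
(`exists_limit_welding`), in the logarithmic coordinate `z ↦ exp (i z)`.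

Averaging `e` against trigonometric kernels yields analytic lifts with the same doubling constant
(`exists_analytic_approx`), for which the discs are glued by a biholomorphism between neighbourhoods
of the circles (`Gluing`). The additive Cousin problem on the resulting sphere amounts to a pair of
coupled Cauchy integral equations. The operators are compact, and a homogeneous solution is a
holomorphic function on a glued sphere, hence trivial, so the Fredholm alternative solves the problem
(`Gluing.cousin`). One Cousin problem gives a meromorphic function with a single simple pole
(`Gluing.exists_welding`), further ones show that it is injective: multiplying it, minus its value
at `p`, by a function with a single simple pole at `p` gives a non-zero constant
(`Welding.injOn`, `Welding.injOn'`, `Welding.disjoint`).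

The estimates needed for a limit are uniform in the approximation. The area theorem bounds the
regular part at the pole (`Welding.coeff_le`), and the maximum principle then bounds the welding away
from the pole (`Welding.norm_le`). Injectivity turns this into a bound for the Dirichlet energy
(`exists_energy`). Around a point of the seam there are many disjoint rings, one of which carries
little energy; the doubling condition produces a curve in that ring, formed of vertical segments and
horizontal segments on both sides of the seam, along which the welding oscillates little, and the
maximum principle extends this to its inside (`Seam.one_scale`, `equicontinuity`). Hence the weldings
are equicontinuous up to the seam, an ultrafilter limit exists, and by Hurwitz' theorem injectivity
and disjointness of the images persist, the limit being non-constant by the normalisation at the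
pole.
-/

/-- A continuous, strictly increasing function `f` on an interval `I ⊆ ℝ` is
`k`-quasisymmetric on `I` if
`1/k ≤ (f (x+t) - f x)/(f x - f (x-t)) ≤ k`
for all `x, x - t, x + t ∈ I` with `t > 0`. -/
def QuasisymmetricOn (f : ℝ → ℝ) (k : ℝ) (I : Set ℝ) : Prop :=
  ContinuousOn f I ∧ StrictMonoOn f I ∧
    ∀ x t : ℝ, 0 < t → x ∈ I → x - t ∈ I → x + t ∈ I →
      1 / k ≤ (f (x + t) - f x) / (f x - f (x - t)) ∧
        (f (x + t) - f x) / (f x - f (x - t)) ≤ k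

namespace PartialWelding

open Set

/-! ### Doubling functions of a real variable -/

/-- `e` is *doubling* on `I` with constant `M`: enlarging an interval `[a, b]` by at most a factor
two, keeping one endpoint fixed, enlarges its `e`-increment by at most the factor `M`. Unlike
quasisymmetry this condition is stable under averaging, since it is linear in `e`. -/
def Dbl (M : ℝ) (I : Set ℝ) (e : ℝ → ℝ) : Prop :=
  (∀ a b y, a ∈ I → y ∈ I → a < b → b ≤ y → y - a ≤ 2 * (b - a) →
      e y - e a ≤ M * (e b - e a)) ∧
  (∀ y a b, y ∈ I → b ∈ I → y ≤ a → a < b → b - y ≤ 2 * (b - a) →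
      e b - e y ≤ M * (e b - e a))

/-- Quasisymmetric functions are doubling, by comparison with the adjacent interval of equal length. -/
lemma Dbl.of_qs {g : ℝ → ℝ} {k p q : ℝ} (hk : 0 < k) (h : QuasisymmetricOn g k (Icc p q)) :
    Dbl (1 + k) (Icc p q) g := by
  obtain ⟨-, hm, hq⟩ := h
  have mono : ∀ x y, x ∈ Icc p q → y ∈ Icc p q → x ≤ y → g x ≤ g y := fun x y hx hy hxy =>
    hm.monotoneOn hx hy hxy
  constructor
  · intro a b y ha hy hab hby hle
    have hb : b ∈ Icc p q := ⟨by linarith [ha.1], by linarith [hy.2]⟩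
    rcases hby.eq_or_lt with rfl | hby
    · nlinarith [mono a b ha hb hab.le]
    have hc : b - (y - b) ∈ Icc p q := ⟨by linarith [ha.1], by linarith [hb.2]⟩
    have := (hq b (y - b) (by linarith) hb hc (by simpa using hy)).2
    have hpos : 0 < g b - g (b - (y - b)) := sub_pos.2 (hm hc hb (by linarith))
    rw [div_le_iff₀ hpos] at this
    have h1 := mono a _ ha hc (by linarith)
    simp only [add_sub_cancel] at this
    nlinarith
  · intro y a b hy hb hya hab hle
    have ha : a ∈ Icc p q := ⟨by linarith [hy.1], by linarith [hb.2]⟩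
    rcases hya.eq_or_lt with rfl | hya
    · nlinarith [mono y b ha hb hab.le]
    have hc : a + (a - y) ∈ Icc p q := ⟨by linarith [ha.1], by linarith [hb.2]⟩
    have := (hq a (a - y) (by linarith) ha (by simpa using hy) hc).1
    simp only [sub_sub_cancel] at this
    have hpos : 0 < g a - g y := sub_pos.2 (hm hy ha (by linarith))
    rw [le_div_iff₀ hpos, one_div, inv_mul_le_iff₀ hk] at this
    have h1 := mono _ b hc hb (by linarith)
    nlinarith

lemma Dbl.mono_const {M M' : ℝ} {I : Set ℝ} [I.OrdConnected] {e : ℝ → ℝ} (h : Dbl M I e)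
    (he : MonotoneOn e I) (hM : M ≤ M') : Dbl M' I e := by
  constructor
  · intro a b y ha hy hab hby hle
    have hb : b ∈ I := OrdConnected.out' ha hy ⟨hab.le, hby⟩
    have := he ha hb hab.le
    nlinarith [h.1 a b y ha hy hab hby hle]
  · intro y a b hy hb hya hab hle
    have ha : a ∈ I := OrdConnected.out' hy hb ⟨hya, hab.le⟩
    have := he ha hb hab.le
    nlinarith [h.2 y a b hy hb hya hab hle]

lemma Dbl.iterate {M : ℝ} (hM : 0 ≤ M) {I : Set ℝ} [I.OrdConnected] {e : ℝ → ℝ} (h : Dbl M I e)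
    (q : ℕ) :
    (∀ a b y, a ∈ I → y ∈ I → a < b → b ≤ y → y - a ≤ 2 ^ q * (b - a) →
      e y - e a ≤ M ^ q * (e b - e a)) ∧
    (∀ y a b, y ∈ I → b ∈ I → y ≤ a → a < b → b - y ≤ 2 ^ q * (b - a) →
      e b - e y ≤ M ^ q * (e b - e a)) := by
  induction q with
  | zero =>
    constructor
    · intro a b y ha hy hab hby hle
      have : y = b := by linarith [pow_zero (2 : ℝ), show y - a ≤ b - a by simpa using hle]
      simp [this]
    · intro y a b hy hb hya hab hle
      have : y = a := by linarith [show b - y ≤ b - a by simpa using hle]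
      simp [this]
  | succ q ih =>
    constructor
    · intro a b y ha hy hab hby hle
      set c := min y (a + 2 * (b - a)) with hc
      have hbc : b ≤ c := le_min hby (by linarith)
      have hcy : c ≤ y := min_le_left _ _
      have hcI : c ∈ I := OrdConnected.out' ha hy ⟨by linarith, hcy⟩
      have h1 := h.1 a b c ha hcI hab hbc (by linarith [min_le_right y (a + 2 * (b - a))])
      have h2 : e y - e a ≤ M ^ q * (e c - e a) := by
        refine ih.1 a c y ha hy (by linarith) hcy ?_
        rcases min_cases y (a + 2 * (b - a)) with h' | h'
        · rw [hc, h'.1]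
          have : (1 : ℝ) ≤ 2 ^ q := one_le_pow₀ (by norm_num)
          nlinarith
        · rw [hc, h'.1]; rw [pow_succ] at hle; linarith
      calc e y - e a ≤ M ^ q * (e c - e a) := h2
        _ ≤ M ^ q * (M * (e b - e a)) := by gcongr
        _ = _ := by ring
    · intro y a b hy hb hya hab hle
      set c := max y (b - 2 * (b - a)) with hc
      have hbc : c ≤ a := max_le hya (by linarith)
      have hcy : y ≤ c := le_max_left _ _
      have hcI : c ∈ I := OrdConnected.out' hy hb ⟨hcy, by linarith⟩
      have h1 := h.2 c a b hcI hb hbc hab (by linarith [le_max_right y (b - 2 * (b - a))])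
      have h2 : e b - e y ≤ M ^ q * (e b - e c) := by
        refine ih.2 y c b hy hb hcy (by linarith) ?_
        rcases max_cases y (b - 2 * (b - a)) with h' | h'
        · rw [hc, h'.1]
          have : (1 : ℝ) ≤ 2 ^ q := one_le_pow₀ (by norm_num)
          nlinarith
        · rw [hc, h'.1]; rw [pow_succ] at hle; linarith
      calc e b - e y ≤ M ^ q * (e b - e c) := h2
        _ ≤ M ^ q * (M * (e b - e a)) := by gcongr
        _ = _ := by ring

/-- Conjugation by a bi-Lipschitz increasing map `K` preserves the doubling property. -/
lemma Dbl.conj {M c C : ℝ} (hM : 0 ≤ M) {p q p' q' : ℝ} {g e K J : ℝ → ℝ} (hc : 0 < c)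
    {n : ℕ} (hn : 2 * C ≤ 2 ^ n * c)
    (h : Dbl M (Icc p q) g) (hg : MapsTo g (Icc p q) (Icc p q)) (hgm : MonotoneOn g (Icc p q))
    (hJ : MapsTo J (Icc p' q') (Icc p q)) (hKJ : ∀ x ∈ Icc p' q', K (J x) = x)
    (hK1 : ∀ x ∈ Icc p q, ∀ y ∈ Icc p q, x ≤ y → c * (y - x) ≤ K y - K x)
    (hK2 : ∀ x ∈ Icc p q, ∀ y ∈ Icc p q, x ≤ y → K y - K x ≤ C * (y - x))
    (he : ∀ x ∈ Icc p' q', e x = K (g (J x))) :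
    Dbl (C / c * M ^ n) (Icc p' q') e := by
  have hJm : ∀ x ∈ Icc p' q', ∀ y ∈ Icc p' q', x < y → J x < J y := by
    intro x hx y hy hxy
    by_contra! hcon
    have := hK1 _ (hJ hy) _ (hJ hx) hcon
    rw [hKJ x hx, hKJ y hy] at this
    nlinarith
  have hJle : ∀ x ∈ Icc p' q', ∀ y ∈ Icc p' q', x ≤ y → J x ≤ J y := by
    intro x hx y hy hxy
    rcases hxy.eq_or_lt with rfl | h'
    · rfl
    · exact (hJm x hx y hy h').le
  have key : ∀ a b x y, a ∈ Icc p' q' → b ∈ Icc p' q' → x ∈ Icc p' q' → y ∈ Icc p' q' →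
      a < b → x ≤ y → y - x ≤ 2 * (b - a) → J y - J x ≤ 2 ^ n * (J b - J a) := by
    intro a b x y ha hb hx hy hab hxy hle
    have h1 := hK1 _ (hJ hx) _ (hJ hy) (hJle x hx y hy hxy)
    have h2 := hK2 _ (hJ ha) _ (hJ hb) (hJm a ha b hb hab).le
    rw [hKJ x hx, hKJ y hy] at h1
    rw [hKJ a ha, hKJ b hb] at h2
    have h3 := hJm a ha b hb hab
    have : c * (J y - J x) ≤ c * (2 ^ n * (J b - J a)) := by nlinarith
    exact le_of_mul_le_mul_left this hc
  have fin : ∀ a b x y, a ∈ Icc p' q' → b ∈ Icc p' q' → x ∈ Icc p' q' → y ∈ Icc p' q' →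
      a < b → x ≤ y → g (J y) - g (J x) ≤ M ^ n * (g (J b) - g (J a)) →
      e y - e x ≤ C / c * M ^ n * (e b - e a) := by
    intro a b x y ha hb hx hy hab hxy hle
    rw [he y hy, he x hx, he a ha, he b hb]
    have gx := hg (hJ hx)
    have h2 := hK2 _ (hg (hJ hx)) _ (hg (hJ hy))
      (hgm (hJ hx) (hJ hy) (hJle x hx y hy hxy))
    have h1 := hK1 _ (hg (hJ ha)) _ (hg (hJ hb))
      (hgm (hJ ha) (hJ hb) (hJle a ha b hb hab.le))
    have hC : 0 ≤ C := by
      have := hK2 _ (hJ ha) _ (hJ hb) (hJm a ha b hb hab).le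
      have h1 := hK1 _ (hJ ha) _ (hJ hb) (hJm a ha b hb hab).le
      have := hJm a ha b hb hab
      by_contra! hcon
      nlinarith
    calc _ ≤ C * (g (J y) - g (J x)) := h2
      _ ≤ C * (M ^ n * (g (J b) - g (J a))) := by gcongr
      _ = C / c * M ^ n * (c * (g (J b) - g (J a))) := by field_simp
      _ ≤ _ := by gcongr
  have hit := h.iterate hM n
  constructor
  · intro a b y ha hy hab hby hle
    have hb : b ∈ Icc p' q' := ⟨by linarith [ha.1], by linarith [hy.2]⟩
    exact fin a b a y ha hb ha hy hab (by linarith) (hit.1 _ _ _ (hJ ha) (hJ hy)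
      (hJm a ha b hb hab) (hJle b hb y hy hby) (key a b a y ha hb ha hy hab (by linarith) hle))
  · intro y a b hy hb hya hab hle
    have ha : a ∈ Icc p' q' := ⟨by linarith [hy.1], by linarith [hb.2]⟩
    exact fin a b y b ha hb hy hb hab (by linarith) (hit.2 _ _ _ (hJ hy) (hJ hb)
      (hJle y hy a ha hya) (hJm a ha b hb hab) (key a b y b ha hb hy hb hab (by linarith) hle))

/-- Odd reflection about `0` preserves the doubling property. -/
lemma Dbl.odd {M r : ℝ} (hM : 1 ≤ M) {e : ℝ → ℝ} (hodd : ∀ x, e (-x) = - e x)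
    (hm : Monotone e) (h : Dbl M (Icc 0 r) e) : Dbl (2 * M ^ 2) (Icc (-r) r) e := by
  have e0 : e 0 = 0 := by have := hodd 0; simp at this; linarith
  have hMM : M ≤ M ^ 2 := by nlinarith
  have first : ∀ a b y, a ∈ Icc (-r) r → y ∈ Icc (-r) r → a < b → b ≤ y → y - a ≤ 2 * (b - a) →
      e y - e a ≤ 2 * M ^ 2 * (e b - e a) := by
    intro a b y ha hy hab hby hle
    have hba : 0 ≤ e b - e a := sub_nonneg.2 (hm hab.le)
    rcases le_or_gt 0 a with h0 | h0
    · have := h.1 a b y ⟨h0, ha.2⟩ ⟨by linarith, hy.2⟩ hab hby hle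
      nlinarith
    rcases le_or_gt y 0 with hy0 | hy0
    · have := h.2 (-y) (-b) (-a) ⟨by linarith, by linarith [hy.1]⟩ ⟨by linarith, by linarith [ha.1]⟩
        (by linarith) (by linarith) (by linarith)
      simp only [hodd] at this
      nlinarith
    rcases le_or_gt b 0 with hb0 | hb0
    · have h1 := h.2 0 (-b) (-a) ⟨le_rfl, by linarith [hy.2]⟩ ⟨by linarith, by linarith [ha.1]⟩
        (by linarith) (by linarith) (by linarith)
      have h2 : e y ≤ e (-a) := hm (by linarith)
      simp only [hodd, e0] at h1 h2
      nlinarith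
    · set m := max b (-a) with hmdef
      have hmb : b ≤ m := le_max_left _ _
      have hma : -a ≤ m := le_max_right _ _
      have hmr : m ≤ r := max_le (by linarith [hy.2]) (by linarith [ha.1])
      have hm0 : 0 < m := lt_of_lt_of_le hb0 hmb
      have hym : e (max y m) ≤ M ^ 2 * e m := by
        have := (h.iterate (by linarith) 2).1 0 m (max y m) ⟨le_rfl, by linarith⟩
          ⟨by linarith [le_max_left y m], max_le hy.2 hmr⟩ hm0 (le_max_right _ _)
          (by rw [sub_zero, sub_zero]; exact max_le (by linarith) (by linarith))
        simpa [e0] using this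
      have hy' : e y ≤ e (max y m) := hm (le_max_left _ _)
      have hme : e m ≤ e b - e a := by
        have p1 : 0 ≤ e b := by rw [← e0]; exact hm hb0.le
        have p2 : e a ≤ 0 := by rw [← e0]; exact hm h0.le
        rcases max_cases b (-a) with h' | h'
        · rw [hmdef, h'.1]; linarith
        · rw [hmdef, h'.1, hodd]; linarith
      have hea : - e a ≤ e m := by rw [← hodd]; exact hm hma
      have hem : 0 ≤ e m := by rw [← e0]; exact hm hm0.le
      nlinarith
  refine ⟨first, fun y a b hy hb hya hab hle => ?_⟩
  have := first (-b) (-a) (-y) ⟨by linarith [hb.2], by linarith [hb.1]⟩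
    ⟨by linarith [hy.2], by linarith [hy.1]⟩ (by linarith) (by linarith) (by linarith)
  simp only [hodd] at this
  linarith

/-- A monotone odd function commuting with the translation by `2 * L` which is doubling on
`[0, L]` is doubling on the whole line. -/
lemma Dbl.periodic {M L : ℝ} (hM : 1 ≤ M) (hL : 0 < L) {e : ℝ → ℝ} (hodd : ∀ x, e (-x) = - e x)
    (hm : Monotone e) (hper : ∀ x, e (x + 2 * L) = e x + 2 * L) (h : Dbl M (Icc 0 L) e) :
    ∃ M', 2 ≤ M' ∧ Dbl M' univ e := by
  have h1 := Dbl.odd hM hodd hm h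
  set M1 := 2 * M ^ 2 with hM1
  have hM1' : 1 ≤ M1 := by nlinarith
  -- reflecting once more, about `L`, covers two periods
  have h2 : Dbl (2 * M1 ^ 2) (Icc (-(2 * L)) (2 * L)) (fun x => e (x + L) - L) := by
    refine Dbl.odd hM1' (fun x => ?_) (fun x y hxy => by simpa using hm (by linarith)) ?_
    · have a1 := hodd (x - L)
      have a2 := hper (x - L)
      rw [show x - L + 2 * L = x + L by ring] at a2
      rw [show -(x - L) = -x + L by ring] at a1
      rw [a1]; linarith
    · constructor
      · intro a b y ha hy hab hby hle
        have := h1.2 (-(y - L)) (-(b - L)) (-(a - L)) ⟨by linarith [hy.2], by linarith [hy.1]⟩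
          ⟨by linarith [ha.2], by linarith [ha.1]⟩ (by linarith) (by linarith) (by linarith)
        simp only [hodd] at this
        have a2 := hper (a - L)
        have b2 := hper (b - L)
        have y2 := hper (y - L)
        rw [show a - L + 2 * L = a + L by ring] at a2
        rw [show b - L + 2 * L = b + L by ring] at b2
        rw [show y - L + 2 * L = y + L by ring] at y2
        simp only [a2, b2, y2]
        nlinarith
      · intro y a b hy hb hya hab hle
        have := h1.1 (-(b - L)) (-(a - L)) (-(y - L)) ⟨by linarith [hb.2], by linarith [hb.1]⟩
          ⟨by linarith [hy.2], by linarith [hy.1]⟩ (by linarith) (by linarith) (by linarith)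
        simp only [hodd] at this
        have a2 := hper (a - L)
        have b2 := hper (b - L)
        have y2 := hper (y - L)
        rw [show a - L + 2 * L = a + L by ring] at a2
        rw [show b - L + 2 * L = b + L by ring] at b2
        rw [show y - L + 2 * L = y + L by ring] at y2
        simp only [a2, b2, y2]
        nlinarith
  set N := 2 * M1 ^ 2 with hN
  have hN1 : 2 ≤ N := by nlinarith
  have hperZ : ∀ (n : ℤ) x, e (x + n * (2 * L)) = e x + n * (2 * L) := by
    intro n
    induction n using Int.induction_on with
    | zero => simp
    | succ n ih =>
      intro x
      have := hper (x + n * (2 * L))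
      push_cast at ih ⊢
      rw [show x + (n + 1) * (2 * L) = x + n * (2 * L) + 2 * L by ring, this, ih]; ring
    | pred n ih =>
      intro x
      have := hper (x + (-n - 1) * (2 * L))
      push_cast at ih ⊢
      rw [show x + (-n - 1) * (2 * L) + 2 * L = x + (-n) * (2 * L) by ring, ih] at this; linarith
  have loc : ∀ a b y, a < b → b ≤ y → y - a ≤ 2 * (b - a) → y - a ≤ 2 * L →
      e y - e a ≤ N * (e b - e a) := by
    intro a b y hab hby hle hL2
    set n := ⌊(a + L) / (2 * L)⌋ with hn
    have f1 := Int.floor_le ((a + L) / (2 * L))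
    have f2 := Int.lt_floor_add_one ((a + L) / (2 * L))
    rw [← hn, le_div_iff₀ (by positivity)] at f1
    rw [← hn, div_lt_iff₀ (by positivity)] at f2
    have := h2.1 (a - n * (2 * L) - L) (b - n * (2 * L) - L) (y - n * (2 * L) - L)
      ⟨by linarith, by linarith⟩ ⟨by linarith, by linarith⟩ (by linarith) (by linarith)
      (by linarith)
    have ea := hperZ n (a - n * (2 * L))
    have eb := hperZ n (b - n * (2 * L))
    have ey := hperZ n (y - n * (2 * L))
    simp only [sub_add_cancel] at ea eb ey this
    rw [ea, eb, ey]; linarith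
  have first : ∀ a b y, a < b → b ≤ y → y - a ≤ 2 * (b - a) →
      e y - e a ≤ 5 * N * (e b - e a) := by
    intro a b y hab hby hle
    have hba : 0 ≤ e b - e a := sub_nonneg.2 (hm hab.le)
    rcases le_or_gt (y - a) (2 * L) with hs | hs
    · have := loc a b y hab hby hle hs
      nlinarith
    have up : e y - e a ≤ 2 * (b - a) + 2 * L := by
      have c1 := Int.le_ceil ((y - a) / (2 * L))
      have c2 := Int.ceil_lt_add_one ((y - a) / (2 * L))
      set n := ⌈(y - a) / (2 * L)⌉
      rw [div_le_iff₀ (by positivity)] at c1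
      rw [← sub_lt_iff_lt_add, lt_div_iff₀ (by positivity)] at c2
      have := hperZ n a
      have : e y ≤ e (a + n * (2 * L)) := hm (by linarith)
      linarith
    have low : b - a - 2 * L ≤ e b - e a := by
      have c1 := Int.floor_le ((b - a) / (2 * L))
      have c2 := Int.lt_floor_add_one ((b - a) / (2 * L))
      set n := ⌊(b - a) / (2 * L)⌋
      rw [le_div_iff₀ (by positivity)] at c1
      rw [div_lt_iff₀ (by positivity)] at c2
      have := hperZ n a
      have : e (a + n * (2 * L)) ≤ e b := hm (by linarith)
      linarith
    rcases le_or_gt (4 * L) (b - a) with hb | hb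
    · have h5 : 2 * (b - a) + 2 * L ≤ 5 * (b - a - 2 * L) := by linarith
      nlinarith
    · have l1 := loc a (a + L) (a + 2 * L) (by linarith) (by linarith) (by linarith) (by linarith)
      have l2 := hper a
      have l3 : e (a + L) ≤ e b := hm (by linarith)
      nlinarith
  refine ⟨5 * N, by linarith, fun a b y _ _ => first a b y, fun y a b _ _ hya hab hle => ?_⟩
  have := first (-b) (-a) (-y) (by linarith) (by linarith) (by linarith)
  simp only [hodd] at this
  linarith

/-! ### Periodic extension -/

/-- An increasing homeomorphism of `[0, L]`, extended oddly and then `2 * L`-periodically. -/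
lemma exists_reflection_extension {L : ℝ} (hL : 0 < L) {g : ℝ → ℝ} (hg : ContinuousOn g (Icc 0 L))
    (hm : StrictMonoOn g (Icc 0 L)) (h0 : g 0 = 0) (h1 : g L = L) :
    ∃ e : ℝ → ℝ, (∀ x ∈ Icc 0 L, e x = g x) ∧ (∀ x, e (-x) = - e x) ∧ StrictMono e ∧
      Continuous e ∧ (∀ (n : ℤ) x, e (x + n * (2 * L)) = e x + n * (2 * L)) := by
  set o : ℝ → ℝ := fun w => if 0 ≤ w then g w else - g (-w) with ho
  have oodd : ∀ w, o (-w) = - o w := by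
    intro w
    rcases lt_trichotomy w 0 with h | h | h
    · simp [ho, h.le, not_le.2 h]
    · simp [ho, h, h0]
    · simp [ho, h.le, not_le.2 h]
  have opos : ∀ w, 0 ≤ w → o w = g w := fun w hw => by simp [ho, hw]
  have oneg : ∀ w, w ≤ 0 → o w = - g (-w) := fun w hw => by
    have := oodd (-w)
    rw [neg_neg] at this
    rw [this, opos _ (by linarith)]
  have omono : StrictMonoOn o (Icc (-L) L) := by
    intro x hx y hy hxy
    rcases le_or_gt 0 x with hx0 | hx0
    · rw [opos x hx0, opos y (by linarith)]
      exact hm ⟨hx0, hx.2⟩ ⟨by linarith, hy.2⟩ hxy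
    rcases le_or_gt y 0 with hy0 | hy0
    · rw [oneg x hx0.le, oneg y hy0]
      exact neg_lt_neg (hm ⟨by linarith, by linarith [hy.1]⟩ ⟨by linarith, by linarith [hx.1]⟩
        (by linarith))
    · rw [oneg x hx0.le, opos y hy0.le]
      have a1 : g 0 < g y := hm ⟨le_rfl, hL.le⟩ ⟨hy0.le, hy.2⟩ hy0
      have a2 : g 0 < g (-x) :=
        hm ⟨le_rfl, hL.le⟩ ⟨by linarith, by linarith [hx.1]⟩ (by linarith)
      linarith
  have osurj : ∀ w ∈ Icc (-L) L, ∃ x ∈ Icc (-L) L, o x = w := by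
    have gs : ∀ w ∈ Icc 0 L, ∃ x ∈ Icc 0 L, g x = w := by
      intro w hw
      have := intermediate_value_Icc hL.le hg
      rw [h0, h1] at this
      exact this hw
    intro w hw
    rcases le_or_gt 0 w with hw0 | hw0
    · obtain ⟨x, hx, hxw⟩ := gs w ⟨hw0, hw.2⟩
      exact ⟨x, ⟨by linarith [hx.1], hx.2⟩, by rw [opos x hx.1, hxw]⟩
    · obtain ⟨x, hx, hxw⟩ := gs (-w) ⟨by linarith, by linarith [hw.1]⟩
      exact ⟨-x, ⟨by linarith [hx.2], by linarith [hx.1]⟩, by rw [oodd, opos x hx.1, hxw, neg_neg]⟩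
  have oL : o L = L := by rw [opos L hL.le, h1]
  set nn : ℝ → ℤ := fun x => ⌊(x + L) / (2 * L)⌋ with hnn
  have nn1 : ∀ x, -L ≤ x - nn x * (2 * L) := by
    intro x
    have := Int.floor_le ((x + L) / (2 * L))
    rw [le_div_iff₀ (by positivity)] at this
    simp only [hnn]; linarith
  have nn2 : ∀ x, x - nn x * (2 * L) < L := by
    intro x
    have := Int.lt_floor_add_one ((x + L) / (2 * L))
    rw [div_lt_iff₀ (by positivity)] at this
    simp only [hnn]; linarith
  set e : ℝ → ℝ := fun x => nn x * (2 * L) + o (x - nn x * (2 * L)) with he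
  have nnadd : ∀ (n : ℤ) x, nn (x + n * (2 * L)) = nn x + n := by
    intro n x
    simp only [hnn]
    rw [show (x + n * (2 * L) + L) / (2 * L) = (x + L) / (2 * L) + n by field_simp; ring,
      Int.floor_add_intCast]
  have eper : ∀ (n : ℤ) x, e (x + n * (2 * L)) = e x + n * (2 * L) := by
    intro n x
    simp only [he, nnadd]
    push_cast
    rw [show x + n * (2 * L) - (nn x + n) * (2 * L) = x - nn x * (2 * L) by ring]
    ring
  have eo : ∀ x ∈ Icc (-L) L, e x = o x := by
    intro x hx
    rcases hx.2.eq_or_lt with rfl | hlt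
    · have : nn x = 1 := by
        simp only [hnn]
        rw [show (x + x) / (2 * x) = ((1 : ℤ) : ℝ) by push_cast; field_simp; ring, Int.floor_intCast]
      simp only [he, this]
      push_cast
      rw [show x - 1 * (2 * x) = -x by ring, oodd, oL]; ring
    · have : nn x = 0 := by
        simp only [hnn]
        rw [Int.floor_eq_zero_iff]
        constructor
        · apply div_nonneg <;> linarith [hx.1]
        · rw [div_lt_one (by positivity)]; linarith
      simp [he, this]
  have emono : StrictMono e := by
    let E : AddConstMap ℝ ℝ (2 * L) (2 * L) := ⟨e, fun x => by
      have := eper 1 x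
      push_cast at this
      simpa using this⟩
    have := AddConstMapClass.strictMono_iff_Icc (f := E) (by positivity : 0 < 2 * L) (-L)
    refine this.2 ?_
    rw [show -L + 2 * L = L by ring]
    intro x hx y hy hxy
    change e x < e y
    rw [eo x hx, eo y hy]
    exact omono hx hy hxy
  refine ⟨e, fun x hx => ?_, fun x => ?_, emono, ?_, eper⟩
  · rw [eo x ⟨by linarith [hx.1], hx.2⟩, opos x hx.1]
  · have a1 := eper (nn x) (x - nn x * (2 * L))
    have a2 := eper (-nn x) (-(x - nn x * (2 * L)))
    push_cast at a2
    rw [show -(x - nn x * (2 * L)) + -nn x * (2 * L) = -x by ring] at a2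
    rw [sub_add_cancel] at a1
    have m : x - nn x * (2 * L) ∈ Icc (-L) L := ⟨nn1 x, (nn2 x).le⟩
    rw [a1, a2, eo _ m, eo _ ⟨by linarith [m.2], by linarith [m.1]⟩, oodd]
    ring
  · refine emono.monotone.continuous_of_surjective fun y => ?_
    obtain ⟨x, hx, hxy⟩ := osurj (y - nn y * (2 * L)) ⟨nn1 y, (nn2 y).le⟩
    exact ⟨x + nn y * (2 * L), by rw [eper, eo x hx, hxy]; ring⟩

/-! ### The shrinking map and the circle homeomorphism attached to `g` -/

/-- Boundary values of the shrinking map: `x ↦ -1 / (1 + √(x + 2))`. -/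
noncomputable def kapR (x : ℝ) : ℝ := -1 / (1 + √(x + 2))

lemma kapR_sub {x y : ℝ} (hx : x ∈ Icc (-1 : ℝ) 1) (hy : y ∈ Icc (-1 : ℝ) 1) (hxy : x ≤ y) :
    (1 / 36) * (y - x) ≤ kapR y - kapR x ∧ kapR y - kapR x ≤ (1 / 8) * (y - x) := by
  have sq : ∀ t ∈ Icc (-1 : ℝ) 1, 1 ≤ √(t + 2) ∧ √(t + 2) ≤ 2 ∧ √(t + 2) ^ 2 = t + 2 := by
    intro t ht
    refine ⟨Real.one_le_sqrt.2 (by linarith [ht.1]), ?_, Real.sq_sqrt (by linarith [ht.1])⟩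
    rw [Real.sqrt_le_left (by norm_num)]; linarith [ht.2]
  obtain ⟨a1, a2, a3⟩ := sq x hx
  obtain ⟨b1, b2, b3⟩ := sq y hy
  set a := √(x + 2)
  set b := √(y + 2)
  have e1 : kapR y - kapR x = (b - a) / ((1 + a) * (1 + b)) := by
    simp only [kapR]; field_simp; ring
  have e2 : y - x = (b - a) * (b + a) := by linarith
  have hab : 0 ≤ b - a := sub_nonneg.2 (Real.sqrt_le_sqrt (by linarith))
  have d1 : 4 ≤ (1 + a) * (1 + b) := by nlinarith
  have d2 : (1 + a) * (1 + b) ≤ 9 := by nlinarith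
  rw [e1, e2]
  constructor
  · rw [le_div_iff₀ (by positivity)]
    have : (b + a) * ((1 + a) * (1 + b)) ≤ 4 * 9 := by gcongr; linarith
    nlinarith
  · rw [div_le_iff₀ (by positivity)]
    have : 2 * 4 ≤ (b + a) * ((1 + a) * (1 + b)) := by gcongr; linarith
    nlinarith

/-- The scaling factor making `kapScale * (kapR - kapR (-1))` map `[-1, 1]` onto `[0, π / 16]`. -/
noncomputable def kapScale : ℝ := (Real.pi / 16) / (kapR 1 - kapR (-1))

lemma kapScale_pos : 0 < kapScale := by
  have := (kapR_sub (x := -1) (y := 1) (by norm_num) (by norm_num) (by norm_num)).1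
  exact div_pos (by positivity) (by linarith)

lemma kapScale_lt : kapScale < 2 * Real.pi := by
  have := (kapR_sub (x := -1) (y := 1) (by norm_num) (by norm_num) (by norm_num)).1
  rw [kapScale, div_lt_iff₀ (by linarith)]
  nlinarith [Real.pi_pos]

/-- The rescaled boundary map `[-1, 1] → [0, π / 16]`. -/
noncomputable def KR (x : ℝ) : ℝ := kapScale * (kapR x - kapR (-1))

/-- The boundary correspondence `g`, transported by `KR`, extends to a doubling homeomorphism of
the line commuting with the translation by `2π`. -/
theorem exists_circle_map {g : ℝ → ℝ} {k : ℝ} (hk : 0 < k)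
    (hg : QuasisymmetricOn g k (Icc (-1 : ℝ) 1)) (gm : g (-1) = -1) (gp : g 1 = 1) :
    ∃ (M : ℝ) (e : ℝ → ℝ), 2 ≤ M ∧ Dbl M univ e ∧ StrictMono e ∧ Continuous e ∧
      (∀ x, e (x + 2 * Real.pi) = e x + 2 * Real.pi) ∧
      ∀ x ∈ Icc (-1 : ℝ) 1, e (KR x) = KR (g x) := by
  set L := Real.pi / 16 with hL
  have hL0 : 0 < L := by positivity
  have sp := kapScale_pos
  have K1 : ∀ x ∈ Icc (-1 : ℝ) 1, ∀ y ∈ Icc (-1 : ℝ) 1, x ≤ y →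
      kapScale / 36 * (y - x) ≤ KR y - KR x := by
    intro x hx y hy hxy
    have := (kapR_sub hx hy hxy).1
    simp only [KR]
    nlinarith
  have K2 : ∀ x ∈ Icc (-1 : ℝ) 1, ∀ y ∈ Icc (-1 : ℝ) 1, x ≤ y →
      KR y - KR x ≤ kapScale / 8 * (y - x) := by
    intro x hx y hy hxy
    have := (kapR_sub hx hy hxy).2
    simp only [KR]
    nlinarith
  have Km : StrictMonoOn KR (Icc (-1 : ℝ) 1) := by
    intro x hx y hy hxy
    have := K1 x hx y hy hxy.le
    have : 0 < kapScale / 36 * (y - x) := mul_pos (by positivity) (by linarith)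
    linarith
  have Kc : ContinuousOn KR (Icc (-1 : ℝ) 1) := by
    have : ∀ x : ℝ, 1 + √(x + 2) ≠ 0 := fun x => by positivity
    apply Continuous.continuousOn
    unfold KR kapR
    fun_prop (disch := assumption)
  have Kl : KR (-1) = 0 := by simp [KR]
  have Kr : KR 1 = L := by
    have := (kapR_sub (x := -1) (y := 1) (by norm_num) (by norm_num) (by norm_num)).1
    have : kapR 1 - kapR (-1) ≠ 0 := by linarith
    simp only [KR, kapScale]
    field_simp
    rw [hL]; ring
  have hsurj : ∀ x ∈ Icc 0 L, ∃ y ∈ Icc (-1 : ℝ) 1, KR y = x := by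
    intro x hx
    have := intermediate_value_Icc (by norm_num : (-1 : ℝ) ≤ 1) Kc
    rw [Kl, Kr] at this
    exact this hx
  choose! J hJ hKJ using hsurj
  have Kmaps : ∀ x ∈ Icc (-1 : ℝ) 1, KR x ∈ Icc 0 L := fun x hx =>
    ⟨by rw [← Kl]; exact Km.monotoneOn (by norm_num) hx hx.1,
      by rw [← Kr]; exact Km.monotoneOn hx (by norm_num) hx.2⟩
  have hJK : ∀ x ∈ Icc (-1 : ℝ) 1, J (KR x) = x := fun x hx =>
    Km.injOn (hJ _ (Kmaps x hx)) hx (hKJ _ (Kmaps x hx))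
  have hmap : MapsTo g (Icc (-1 : ℝ) 1) (Icc (-1 : ℝ) 1) := fun x hx =>
    ⟨by rw [← gm]; exact hg.2.1.monotoneOn (by norm_num) hx hx.1,
      by rw [← gp]; exact hg.2.1.monotoneOn hx (by norm_num) hx.2⟩
  have Jm : StrictMonoOn J (Icc 0 L) := by
    intro x hx y hy hxy
    by_contra! hcon
    have := Km.monotoneOn (hJ y hy) (hJ x hx) hcon
    rw [hKJ x hx, hKJ y hy] at this
    linarith
  have Jc : ContinuousOn J (Icc 0 L) := by
    refine LipschitzOnWith.continuousOn (K := Real.toNNReal (36 / kapScale)) ?_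
    refine LipschitzOnWith.of_dist_le_mul fun x hx y hy => ?_
    rw [Real.coe_toNNReal _ (by positivity)]
    wlog hxy : x ≤ y generalizing x y
    · rw [dist_comm, dist_comm x]
      exact this y hy x hx (by linarith)
    have h1 := Jm.monotoneOn hx hy hxy
    have := K1 _ (hJ x hx) _ (hJ y hy) h1
    rw [hKJ x hx, hKJ y hy] at this
    rw [dist_comm, dist_comm x, Real.dist_eq, Real.dist_eq, abs_of_nonneg (by linarith),
      abs_of_nonneg (by linarith)]
    rw [div_mul_eq_mul_div, le_div_iff₀ sp]
    linarith
  set g0 : ℝ → ℝ := fun x => KR (g (J x)) with hg0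
  have J0 : J 0 = -1 := by have := hJK (-1) (by norm_num); rwa [Kl] at this
  have JL : J L = 1 := by have := hJK 1 (by norm_num); rwa [Kr] at this
  have g0m : StrictMonoOn g0 (Icc 0 L) := fun x hx y hy hxy =>
    Km (hmap (hJ x hx)) (hmap (hJ y hy)) (hg.2.1 (hJ x hx) (hJ y hy) (Jm hx hy hxy))
  obtain ⟨e, eg, eodd, em, ec, eper⟩ := exists_reflection_extension hL0 (g := g0)
    (Kc.comp (hg.1.comp Jc hJ) fun x hx => hmap (hJ x hx)) g0m
    (by simp only [hg0, J0, gm, Kl]) (by simp only [hg0, JL, gp, Kr])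
  have hd : Dbl ((kapScale / 8) / (kapScale / 36) * (1 + k) ^ 4) (Icc 0 L) e :=
    Dbl.conj (by linarith) (by positivity) (by linarith) (Dbl.of_qs hk hg) hmap hg.2.1.monotoneOn
      hJ hKJ K1 K2 eg
  have eper' : ∀ x, e (x + 2 * L) = e x + 2 * L := fun x => by
    have := eper 1 x
    push_cast at this
    simpa using this
  obtain ⟨M, hM, hD⟩ := Dbl.periodic
    (le_max_right ((kapScale / 8) / (kapScale / 36) * (1 + k) ^ 4) 1) hL0 eodd em.monotone eper'
    (hd.mono_const (em.monotone.monotoneOn _) (le_max_left _ _))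
  refine ⟨M, e, hM, hD, em, ec, fun x => ?_, fun x hx => ?_⟩
  · have := eper 16 x
    push_cast at this
    rwa [show (16 : ℝ) * (2 * L) = 2 * Real.pi by rw [hL]; ring] at this
  · rw [eg _ (Kmaps x hx), hg0]
    simp only [hJK x hx]

end PartialWelding

namespace PartialWelding

open Set MeasureTheory Filter Topology

/-! ### Analytic approximation of circle homeomorphisms -/

lemma differentiableOn_intervalIntegral {U : Set ℂ} (hU : IsOpen U) {f f' : ℂ → ℝ → ℂ} (a b : ℝ)
    (hf : ContinuousOn (Function.uncurry f) (U ×ˢ univ))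
    (hf' : ContinuousOn (Function.uncurry f') (U ×ˢ univ))
    (hd : ∀ z ∈ U, ∀ t, HasDerivAt (fun w => f w t) (f' z t) z) :
    DifferentiableOn ℂ (fun z => ∫ t in a..b, f z t) U := by
  intro z hz
  have slice : ∀ {g : ℂ → ℝ → ℂ}, ContinuousOn (Function.uncurry g) (U ×ˢ univ) → ∀ w ∈ U,
      Continuous (g w) := by
    intro g hg w hw
    have : Continuous fun t : ℝ => Function.uncurry g (w, t) :=
      hg.comp_continuous (by fun_prop) fun t => ⟨hw, mem_univ _⟩
    exact this
  obtain ⟨r, hr, hrU⟩ := Metric.nhds_basis_closedBall.mem_iff.1 (hU.mem_nhds hz)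
  have hcomp : IsCompact (Metric.closedBall z r ×ˢ uIcc a b) :=
    (isCompact_closedBall z r).prod isCompact_uIcc
  obtain ⟨C, hC⟩ := hcomp.exists_bound_of_continuousOn
    (hf'.mono (prod_mono hrU (subset_univ _)))
  have key := intervalIntegral.hasDerivAt_integral_of_dominated_loc_of_deriv_le
    (μ := volume) (F := f) (F' := f') (x₀ := z) (a := a) (b := b) (bound := fun _ => C)
    (Metric.closedBall_mem_nhds z hr) ?_ ?_ ?_ ?_ ?_ ?_
  · exact key.2.differentiableAt.differentiableWithinAt
  · filter_upwards [Metric.closedBall_mem_nhds z hr] with w hw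
    exact (slice hf w (hrU hw)).aestronglyMeasurable
  · exact (slice hf z hz).intervalIntegrable _ _
  · exact (slice hf' z hz).aestronglyMeasurable
  · exact Eventually.of_forall fun t ht w hw => hC (w, t) ⟨hw, uIoc_subset_uIcc ht⟩
  · exact intervalIntegrable_const
  · exact Eventually.of_forall fun t _ w hw => hd w (hrU hw) t

/-- The analytic approximations of a doubling circle homeomorphism `e`: convolve `e` with the
kernel proportional to `(1 + cos) ^ n` and add a little of the identity. On the circle `z = exp (i x)`
the kernel is `(1 + (z + z⁻¹) / 2) ^ n`, so that `e n x - x` is the restriction of a function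
`Q n` holomorphic off the origin. -/
theorem exists_analytic_approx {M : ℝ} (hM : 2 ≤ M) {e : ℝ → ℝ} (hD : Dbl M univ e)
    (hm : StrictMono e) (hc : Continuous e)
    (hper : ∀ x, e (x + 2 * Real.pi) = e x + 2 * Real.pi) :
    ∃ (Q : ℕ → ℂ → ℂ) (en : ℕ → ℝ → ℝ),
      (∀ n, DifferentiableOn ℂ (Q n) {0}ᶜ) ∧
      (∀ n x, ((en n x : ℝ) : ℂ) = x + Q n (Complex.exp (x * Complex.I))) ∧
      (∀ n, Dbl M univ (en n)) ∧
      (∀ n, ∃ ε > 0, ∀ x y, x ≤ y → ε * (y - x) ≤ en n y - en n x) ∧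
      (∀ x, Tendsto (fun n => en n x) atTop (𝓝 (e x))) := by
  set u : ℝ → ℝ := fun x => e x - x with hu
  have uc : Continuous u := by fun_prop
  have uper : Function.Periodic u (2 * Real.pi) := fun x => by simp only [hu, hper]; ring
  set c : ℝ → ℝ := fun s => 1 + Real.cos s with hcdef
  have cc : Continuous c := by fun_prop
  have c0 : ∀ s, 0 ≤ c s := fun s => by simp only [hcdef]; linarith [Real.neg_one_le_cos s]
  have hpi := Real.pi_pos
  set Z : ℕ → ℝ := fun n => ∫ s in (-Real.pi)..Real.pi, c s ^ n with hZ
  have Zpos : ∀ n, 0 < Z n := by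
    intro n
    refine intervalIntegral.intervalIntegral_pos_of_pos_on
      ((cc.pow n).intervalIntegrable _ _) (fun s hs => ?_) (by linarith)
    refine pow_pos ?_ n
    have : Real.cos Real.pi < Real.cos s := by
      rw [← Real.cos_abs s]
      exact Real.cos_lt_cos_of_nonneg_of_le_pi (abs_nonneg s) le_rfl (abs_lt.2 hs)
    rw [Real.cos_pi] at this
    simp only [hcdef]; linarith
  set E : ℕ → ℝ → ℝ := fun n x => (Z n)⁻¹ * ∫ s in (-Real.pi)..Real.pi, c s ^ n * e (x - s) with hE
  have Eint : ∀ n x, IntervalIntegrable (fun s => c s ^ n * e (x - s)) volume (-Real.pi) Real.pi :=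
    fun n x => Continuous.intervalIntegrable (by fun_prop) _ _
  have Emono : ∀ n, Monotone (E n) := by
    intro n x y hxy
    simp only [hE]
    refine mul_le_mul_of_nonneg_left ?_ (inv_nonneg.2 (Zpos n).le)
    refine intervalIntegral.integral_mono_on (by linarith) (Eint n x) (Eint n y) fun s _ => ?_
    exact mul_le_mul_of_nonneg_left (hm.monotone (by linarith)) (pow_nonneg (c0 s) n)
  -- linear inequalities between increments of `e` pass to `E n`
  have Elin : ∀ n (p q r t : ℝ), (∀ s, e (q - s) - e (p - s) ≤ M * (e (t - s) - e (r - s))) →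
      E n q - E n p ≤ M * (E n t - E n r) := by
    intro n p q r t h
    have : 0 ≤ ∫ s in (-Real.pi)..Real.pi,
        (M * (c s ^ n * e (t - s)) - M * (c s ^ n * e (r - s)) -
          (c s ^ n * e (q - s) - c s ^ n * e (p - s))) := by
      refine intervalIntegral.integral_nonneg (by linarith) fun s _ => ?_
      have h1 := mul_le_mul_of_nonneg_left (h s) (pow_nonneg (c0 s) n)
      linarith
    rw [intervalIntegral.integral_sub, intervalIntegral.integral_sub, intervalIntegral.integral_sub,
      intervalIntegral.integral_const_mul, intervalIntegral.integral_const_mul] at this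
    · have h2 := mul_nonneg (inv_nonneg.2 (Zpos n).le) this
      simp only [hE]
      linarith
    · exact Eint n q
    · exact Eint n p
    · exact (Eint n t).const_mul M
    · exact (Eint n r).const_mul M
    · exact ((Eint n t).const_mul M).sub ((Eint n r).const_mul M)
    · exact (Eint n q).sub (Eint n p)
  have Econv : ∀ n x, E n x = x + (Z n)⁻¹ * ∫ t in (-Real.pi)..Real.pi, u t * c (x - t) ^ n := by
    intro n x
    have h1 : ∀ s, c s ^ n * e (x - s) = x * c s ^ n - s * c s ^ n + u (x - s) * c s ^ n := by
      intro s; simp only [hu]; ring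
    have h2 : ∫ s in (-Real.pi)..Real.pi, s * c s ^ n = 0 := by
      have : ∫ s in (-Real.pi)..Real.pi, (-s) * c (-s) ^ n
          = ∫ s in (-Real.pi)..Real.pi, s * c s ^ n := by
        rw [intervalIntegral.integral_comp_neg (fun s => s * c s ^ n), neg_neg]
      have h3 : ∀ s, (-s) * c (-s) ^ n = - (s * c s ^ n) := by
        intro s; simp only [hcdef, Real.cos_neg]; ring
      simp only [h3, intervalIntegral.integral_neg] at this
      linarith
    have h3 : ∫ s in (-Real.pi)..Real.pi, u (x - s) * c s ^ n
        = ∫ t in (-Real.pi)..Real.pi, u t * c (x - t) ^ n := by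
      have := intervalIntegral.integral_comp_sub_left (a := -Real.pi) (b := Real.pi)
        (fun t => u t * c (x - t) ^ n) x
      simp only [sub_sub_cancel] at this
      rw [this]
      have hp : Function.Periodic (fun t => u t * c (x - t) ^ n) (2 * Real.pi) := by
        intro t
        simp only [uper t, hcdef]
        rw [show x - (t + 2 * Real.pi) = (x - t) - 2 * Real.pi by ring, Real.cos_sub_two_pi]
      have := hp.intervalIntegral_add_eq (x - Real.pi) (-Real.pi)
      rw [show x - Real.pi + 2 * Real.pi = x - -Real.pi by ring,
        show -Real.pi + 2 * Real.pi = Real.pi by ring] at this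
      exact this
    simp only [hE, h1]
    rw [intervalIntegral.integral_add, intervalIntegral.integral_sub,
      intervalIntegral.integral_const_mul, h2, h3]
    · have : (Z n)⁻¹ * Z n = 1 := inv_mul_cancel₀ (Zpos n).ne'
      simp only [hZ] at this ⊢
      linear_combination x * this
    all_goals exact Continuous.intervalIntegrable (by fun_prop) _ _
  have Etend : ∀ x, Tendsto (fun n => E n x) atTop (𝓝 (e x)) := by
    intro x
    have := tendsto_setIntegral_pow_smul_of_unique_maximum_of_isCompact_of_continuousOn
      (μ := (volume : Measure ℝ)) (s := Icc (-Real.pi) Real.pi) (x₀ := 0) (c := c)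
      (g := fun s => e (x - s)) isCompact_Icc cc.continuousOn ?_ (fun s _ => c0 s)
      (by simp [hcdef]) ?_ (by fun_prop)
    · simp only [sub_zero] at this
      refine this.congr fun n => ?_
      simp only [hE, hZ, intervalIntegral.integral_of_le (show -Real.pi ≤ Real.pi by linarith),
        integral_Icc_eq_integral_Ioc, smul_eq_mul]
    · intro y hy hy0
      simp only [hcdef, Real.cos_zero]
      have : Real.cos |y| < Real.cos 0 :=
        Real.cos_lt_cos_of_nonneg_of_le_pi le_rfl (abs_le.2 hy) (abs_pos.2 hy0)
      rw [Real.cos_abs, Real.cos_zero] at this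
      linarith
    · rw [interior_Icc]
      exact subset_closure ⟨by linarith, by linarith⟩
  set ε : ℕ → ℝ := fun n => 1 / ((n : ℝ) + 1) with hε
  have ε0 : ∀ n, 0 < ε n := fun n => by positivity
  have ε1 : ∀ n, ε n ≤ 1 := fun n => by
    simp only [hε]; rw [div_le_one (by positivity)]; linarith [(Nat.cast_nonneg n : (0 : ℝ) ≤ n)]
  set P : ℕ → ℂ → ℂ := fun n z => ∫ t in (-Real.pi)..Real.pi,
    (u t : ℂ) * (1 + (z * Complex.exp (-(t * Complex.I)) + z⁻¹ * Complex.exp (t * Complex.I)) / 2) ^ n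
    with hP
  have Pval : ∀ n (x : ℝ), P n (Complex.exp (x * Complex.I)) =
      ((∫ t in (-Real.pi)..Real.pi, u t * c (x - t) ^ n : ℝ) : ℂ) := by
    intro n x
    rw [← intervalIntegral.integral_ofReal]
    simp only [hP]
    congr 1
    ext t
    push_cast
    congr 2
    simp only [hcdef]
    push_cast
    rw [Complex.cos, ← Complex.exp_neg, ← Complex.exp_add, ← Complex.exp_add]
    ring_nf
  refine ⟨fun n z => (1 - ε n) * (Z n)⁻¹ * P n z, fun n x => (1 - ε n) * E n x + ε n * x, fun n => ?_,
    fun n x => ?_, fun n => ?_, fun n => ⟨ε n, ε0 n, fun x y hxy => ?_⟩, fun x => ?_⟩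
  · refine DifferentiableOn.const_mul ?_ _
    simp only [hP]
    refine differentiableOn_intervalIntegral (f' := fun z t => (u t : ℂ) * (n *
      (1 + (z * Complex.exp (-(t * Complex.I)) + z⁻¹ * Complex.exp (t * Complex.I)) / 2) ^ (n - 1) *
      ((Complex.exp (-(t * Complex.I)) + (-(z ^ 2)⁻¹) * Complex.exp (t * Complex.I)) / 2)))
      isOpen_compl_singleton _ _ ?_ ?_ ?_
    · have h0 : ∀ p ∈ ({0}ᶜ : Set ℂ) ×ˢ (univ : Set ℝ), p.1 ≠ 0 := fun p hp => hp.1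
      simp only [Function.uncurry_def]
      fun_prop (disch := assumption)
    · have h0 : ∀ p ∈ ({0}ᶜ : Set ℂ) ×ˢ (univ : Set ℝ), p.1 ≠ 0 := fun p hp => hp.1
      have h0' : ∀ p ∈ ({0}ᶜ : Set ℂ) ×ˢ (univ : Set ℝ), p.1 ^ 2 ≠ 0 := fun p hp => pow_ne_zero 2 hp.1
      simp only [Function.uncurry_def]
      fun_prop (disch := assumption)
    · intro z hz t
      refine HasDerivAt.const_mul _ ?_
      refine HasDerivAt.fun_pow ?_ n
      refine HasDerivAt.const_add _ (HasDerivAt.div_const ?_ _)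
      refine HasDerivAt.add ?_ ((hasDerivAt_inv hz).mul_const _)
      simpa using (hasDerivAt_id z).mul_const (Complex.exp (-(t * Complex.I)))
  · simp only [Pval, Econv]
    push_cast
    ring
  · constructor
    · intro a b y _ _ hab hby hle
      have h1 := Elin n a y a b fun s => hD.1 _ _ _ (mem_univ _) (mem_univ _) (by linarith)
        (by linarith) (by linarith)
      have h2 : y - a ≤ M * (b - a) := by nlinarith
      have h3 := mul_le_mul_of_nonneg_left h1 (sub_nonneg.2 (ε1 n))
      have h4 := mul_le_mul_of_nonneg_left h2 (ε0 n).le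
      simp only
      linarith
    · intro y a b _ _ hya hab hle
      have h1 := Elin n y b a b fun s => hD.2 _ _ _ (mem_univ _) (mem_univ _) (by linarith)
        (by linarith) (by linarith)
      have h2 : b - y ≤ M * (b - a) := by nlinarith
      have h3 := mul_le_mul_of_nonneg_left h1 (sub_nonneg.2 (ε1 n))
      have h4 := mul_le_mul_of_nonneg_left h2 (ε0 n).le
      simp only
      linarith
  · have := mul_le_mul_of_nonneg_left (Emono n hxy) (sub_nonneg.2 (ε1 n))
    simp only
    linarith
  · have h1 : Tendsto ε atTop (𝓝 0) := tendsto_one_div_add_atTop_nhds_zero_nat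
    have := ((tendsto_const_nhds (x := (1 : ℝ))).sub h1).mul (Etend x) |>.add (h1.mul_const x)
    simpa using this

end PartialWelding

namespace PartialWelding

open Set Filter Topology Metric

/-! ### Analytic gluings of two discs -/

/-- A biholomorphism `τ : U → V`, with inverse `σ`, between neighbourhoods of the unit circle which
preserves the circle and exchanges its inside and its outside. Glueing the unit disc in the
`z`-plane to the unit disc in the `ζ`-plane along `ζ = τ z` yields a closed surface of genus zero,
and `τ` is a transition function between charts which are slightly larger than the discs. -/
structure Gluing (τ σ : ℂ → ℂ) (U V : Set ℂ) : Prop where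
  openU : IsOpen U
  openV : IsOpen V
  zeroU : (0 : ℂ) ∉ U
  zeroV : (0 : ℂ) ∉ V
  circU : sphere 0 1 ⊆ U
  circV : sphere 0 1 ⊆ V
  diffτ : DifferentiableOn ℂ τ U
  diffσ : DifferentiableOn ℂ σ V
  mapsτ : MapsTo τ U V
  mapsσ : MapsTo σ V U
  leftInv : ∀ z ∈ U, σ (τ z) = z
  rightInv : ∀ z ∈ V, τ (σ z) = z
  norm_lt : ∀ z ∈ U, ‖z‖ < 1 → 1 < ‖τ z‖
  norm_gt : ∀ z ∈ U, 1 < ‖z‖ → ‖τ z‖ < 1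
  norm_eq : ∀ z ∈ U, ‖z‖ = 1 → ‖τ z‖ = 1

lemma Gluing.symm {τ σ : ℂ → ℂ} {U V : Set ℂ} (h : Gluing τ σ U V) : Gluing σ τ V U where
  openU := h.openV
  openV := h.openU
  zeroU := h.zeroV
  zeroV := h.zeroU
  circU := h.circV
  circV := h.circU
  diffτ := h.diffσ
  diffσ := h.diffτ
  mapsτ := h.mapsσ
  mapsσ := h.mapsτ
  leftInv := h.rightInv
  rightInv := h.leftInv
  norm_lt z hz hlt := by
    by_contra! hcon
    rcases hcon.eq_or_lt with h' | h'
    · have := h.norm_eq _ (h.mapsσ hz) h'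
      rw [h.rightInv z hz] at this; linarith
    · have := h.norm_lt _ (h.mapsσ hz) h'
      rw [h.rightInv z hz] at this; linarith
  norm_gt z hz hlt := by
    by_contra! hcon
    rcases hcon.eq_or_lt with h' | h'
    · have := h.norm_eq _ (h.mapsσ hz) h'.symm
      rw [h.rightInv z hz] at this; linarith
    · have := h.norm_gt _ (h.mapsσ hz) h'
      rw [h.rightInv z hz] at this; linarith
  norm_eq z hz hlt := by
    by_contra! hcon
    rcases hcon.lt_or_gt with h' | h'
    · have := h.norm_lt _ (h.mapsσ hz) h'
      rw [h.rightInv z hz] at this; linarith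
    · have := h.norm_gt _ (h.mapsσ hz) h'
      rw [h.rightInv z hz] at this; linarith

/-- The same gluing, read off in the exterior coordinates `1 / z` and `1 / ζ`. -/
lemma Gluing.inversion {τ σ : ℂ → ℂ} {U V : Set ℂ} (h : Gluing τ σ U V) :
    Gluing (fun x => (τ x⁻¹)⁻¹) (fun x => (σ x⁻¹)⁻¹) {x | x⁻¹ ∈ U} {x | x⁻¹ ∈ V} := by
  have opn : ∀ {W : Set ℂ}, IsOpen W → (0 : ℂ) ∉ W → IsOpen {x : ℂ | x⁻¹ ∈ W} := by
    intro W hW h0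
    rw [isOpen_iff_mem_nhds]
    intro x hx
    have hx0 : x ≠ 0 := fun h' => h0 (by simpa [h'] using hx)
    exact (continuousAt_inv₀ hx0).preimage_mem_nhds (hW.mem_nhds hx)
  have dif : ∀ {W W' : Set ℂ} {f : ℂ → ℂ}, IsOpen W → (0 : ℂ) ∉ W → (0 : ℂ) ∉ W' → MapsTo f W W' →
      DifferentiableOn ℂ f W → DifferentiableOn ℂ (fun x => (f x⁻¹)⁻¹) {x : ℂ | x⁻¹ ∈ W} := by
    intro W W' f hW h0 h0' hm hf x hx
    have hx0 : x ≠ 0 := fun h' => h0 (by simpa [h'] using hx)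
    have h1 : f x⁻¹ ≠ 0 := fun h' => h0' (h' ▸ hm hx)
    have h2 : DifferentiableAt ℂ f x⁻¹ := hf.differentiableAt (hW.mem_nhds hx)
    exact ((DifferentiableAt.comp x h2 (differentiableAt_inv hx0)).inv h1).differentiableWithinAt
  have circ : ∀ {W : Set ℂ}, sphere (0 : ℂ) 1 ⊆ W → sphere (0 : ℂ) 1 ⊆ {x : ℂ | x⁻¹ ∈ W} := by
    intro W hW x hx
    apply hW
    simp only [mem_sphere_iff_norm, sub_zero] at hx ⊢
    simp [hx]
  have hne : ∀ x : ℂ, x⁻¹ ∈ U → 0 < ‖x‖ := fun x hx =>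
    norm_pos_iff.2 fun h' => h.zeroU (by simpa [h'] using hx)
  refine ⟨opn h.openU h.zeroU, opn h.openV h.zeroV, by simpa using h.zeroU, by simpa using h.zeroV,
    circ h.circU, circ h.circV, dif h.openU h.zeroU h.zeroV h.mapsτ h.diffτ,
    dif h.openV h.zeroV h.zeroU h.mapsσ h.diffσ, fun x hx => ?_, fun x hx => ?_, fun x hx => ?_,
    fun x hx => ?_, fun x hx hlt => ?_, fun x hx hlt => ?_, fun x hx hlt => ?_⟩
  · simpa using h.mapsτ hx
  · simpa using h.mapsσ hx
  · simp [h.leftInv _ hx]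
  · simp [h.rightInv _ hx]
  · have := h.norm_gt _ hx (by rw [norm_inv]; exact (one_lt_inv₀ (hne x hx)).2 hlt)
    rw [norm_inv]
    refine (one_lt_inv₀ (norm_pos_iff.2 fun h' => h.zeroV (h' ▸ h.mapsτ hx))).2 this
  · have := h.norm_lt _ hx (by rw [norm_inv]; exact inv_lt_one_of_one_lt₀ hlt)
    rw [norm_inv]
    exact inv_lt_one_of_one_lt₀ this
  · have := h.norm_eq _ hx (by simp [hlt])
    simp [this]

/-- An open set containing the unit circle contains a round annulus around it. -/
lemma exists_annulus {W : Set ℂ} (hW : IsOpen W) (h : sphere (0 : ℂ) 1 ⊆ W) :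
    ∃ δ > 0, δ < 1 ∧ ∀ z : ℂ, |‖z‖ - 1| < δ → z ∈ W := by
  obtain ⟨δ, hδ, hsub⟩ := (isCompact_sphere (0 : ℂ) 1).exists_thickening_subset_open hW h
  refine ⟨min δ (1 / 2), by positivity, lt_of_le_of_lt (min_le_right _ _) (by norm_num),
    fun z hz => hsub ?_⟩
  have h1 : |‖z‖ - 1| < δ := lt_of_lt_of_le hz (min_le_left _ _)
  have h2 : |‖z‖ - 1| < 1 / 2 := lt_of_lt_of_le hz (min_le_right _ _)
  have hz0 : 0 < ‖z‖ := by linarith [(abs_lt.1 h2).1]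
  rw [mem_thickening_iff]
  refine ⟨(‖z‖⁻¹ : ℝ) • z, ?_, ?_⟩
  · rw [mem_sphere_zero_iff_norm, norm_smul, Real.norm_eq_abs, abs_of_pos (by positivity)]
    exact inv_mul_cancel₀ hz0.ne'
  · have : z - (‖z‖⁻¹ : ℝ) • z = (1 - ‖z‖⁻¹ : ℝ) • z := by rw [sub_smul, one_smul]
    rw [dist_eq_norm, this, norm_smul, Real.norm_eq_abs]
    have : |1 - ‖z‖⁻¹| * ‖z‖ = |‖z‖ - 1| := by
      calc |1 - ‖z‖⁻¹| * ‖z‖ = |1 - ‖z‖⁻¹| * |‖z‖| := by rw [abs_of_pos hz0]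
        _ = |(1 - ‖z‖⁻¹) * ‖z‖| := (abs_mul _ _).symm
        _ = |‖z‖ - 1| := by rw [sub_mul, inv_mul_cancel₀ hz0.ne', one_mul]
    rwa [this]

lemma exists_exp_of_norm {z : ℂ} (hz : z ≠ 0) :
    ∃ w : ℂ, Complex.exp (w * Complex.I) = z ∧ w.im = - Real.log ‖z‖ := by
  refine ⟨-Complex.I * Complex.log z, ?_, ?_⟩
  · rw [show -Complex.I * Complex.log z * Complex.I = -(Complex.I * Complex.I) * Complex.log z by ring,
      Complex.I_mul_I, neg_neg, one_mul, Complex.exp_log hz]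
  · simp [Complex.log_re]

lemma norm_exp_mul_I (w : ℂ) : ‖Complex.exp (w * Complex.I)‖ = Real.exp (-w.im) := by
  rw [Complex.norm_exp]; simp

/-- The gluing map of the circle homeomorphism with lift `x ↦ x + Q (exp (i x))`. It reverses the
orientation of the circle. -/
noncomputable def tauOf (Q : ℂ → ℂ) (z : ℂ) : ℂ := z⁻¹ * Complex.exp (-(Q z * Complex.I))

lemma tauOf_exp (Q : ℂ → ℂ) (w : ℂ) : tauOf Q (Complex.exp (w * Complex.I)) =
    Complex.exp (-((w + Q (Complex.exp (w * Complex.I))) * Complex.I)) := by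
  rw [tauOf, ← Complex.exp_neg, ← Complex.exp_add]
  ring_nf

/-- An analytic circle diffeomorphism extends to a gluing. Its lift has derivative at least `ε` on the
real line, so the extension is injective near the circle and moves points off the circle to the
expected side. -/
theorem exists_gluing {Q : ℂ → ℂ} (hQ : DifferentiableOn ℂ Q {0}ᶜ) {e : ℝ → ℝ}
    (he : ∀ x : ℝ, (e x : ℂ) = x + Q (Complex.exp (x * Complex.I))) {ε : ℝ} (hε : 0 < ε)
    (hlow : ∀ x y, x ≤ y → ε * (y - x) ≤ e y - e x) :
    ∃ σ U V, Gluing (tauOf Q) σ U V := by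
  have emono : StrictMono e := fun x y hxy => by
    have := hlow x y hxy.le
    have : 0 < ε * (y - x) := mul_pos hε (by linarith)
    linarith
  have Qd : ∀ z : ℂ, z ≠ 0 → DifferentiableAt ℂ Q z := fun z hz =>
    hQ.differentiableAt (isOpen_compl_singleton.mem_nhds hz)
  have Q'c : ContinuousOn (deriv Q) {0}ᶜ := (hQ.deriv isOpen_compl_singleton).continuousOn
  set ψ : ℂ → ℂ := fun w => w + Q (Complex.exp (w * Complex.I)) with hψ
  set D : ℂ → ℂ := fun z => 1 + deriv Q z * (z * Complex.I) with hDdef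
  have ψd : ∀ w, HasDerivAt ψ (D (Complex.exp (w * Complex.I))) w := by
    intro w
    have h1 : HasDerivAt (fun w : ℂ => Complex.exp (w * Complex.I))
        (Complex.exp (w * Complex.I) * Complex.I) w := by
      simpa using ((hasDerivAt_id w).mul_const Complex.I).cexp
    exact (hasDerivAt_id w).add (HasDerivAt.comp (h₂ := Q)
      (h := fun w => Complex.exp (w * Complex.I)) w
      (Qd (Complex.exp (w * Complex.I)) (Complex.exp_ne_zero _)).hasDerivAt h1)
  have eder : ∀ x : ℝ, HasDerivAt e (D (Complex.exp (x * Complex.I))).re x := by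
    intro x
    have := (ψd x).real_of_complex
    refine this.congr_of_eventuallyEq (Eventually.of_forall fun y => ?_)
    simp only [hψ]
    rw [← he y]; simp
  have ec : Continuous e := continuous_iff_continuousAt.2 fun x => (eder x).continuousAt
  have circ_exp : ∀ z ∈ sphere (0 : ℂ) 1, ∃ x : ℝ, Complex.exp (x * Complex.I) = z := by
    intro z hz
    have hz1 : ‖z‖ = 1 := by simpa using hz
    refine ⟨z.arg, ?_⟩
    have := Complex.norm_mul_exp_arg_mul_I z
    rwa [hz1, Complex.ofReal_one, one_mul] at this
  have Dpos : ∀ z ∈ sphere (0 : ℂ) 1, 0 < (D z).re := by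
    intro z hz
    obtain ⟨x, rfl⟩ := circ_exp z hz
    refine lt_of_lt_of_le hε ?_
    have h2 := (eder x).sub ((hasDerivAt_id x).const_mul ε)
    have hmon : Monotone (e - fun y => ε * id y) := fun a b hab => by
      have := hlow a b hab
      simp only [Pi.sub_apply, id]; linarith
    have h3 := h2.deriv ▸ hmon.deriv_nonneg (x := x)
    linarith
  have tder : ∀ z : ℂ, z ≠ 0 → HasDerivAt (tauOf Q)
      (-(z ^ 2)⁻¹ * Complex.exp (-(Q z * Complex.I)) * D z) z := by
    intro z hz
    have h1 := (hasDerivAt_inv hz).mul (((Qd z hz).hasDerivAt.mul_const Complex.I).neg.cexp)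
    refine h1.congr_deriv ?_
    simp only [hDdef, Pi.neg_apply]
    field_simp
    ring
  have Dc : ContinuousOn D {0}ᶜ := by simp only [hDdef]; fun_prop
  have hN1 : IsOpen {z : ℂ | z ∈ ({0}ᶜ : Set ℂ) ∧ 0 < (D z).re} :=
    (Complex.continuous_re.comp_continuousOn Dc).isOpen_inter_preimage isOpen_compl_singleton
      isOpen_Ioi
  have hs0 : ∀ z ∈ sphere (0 : ℂ) 1, z ≠ 0 := fun z hz h' => by simp [h'] at hz
  have tc : ContinuousOn (tauOf Q) {0}ᶜ := fun z hz => (tder z hz).continuousAt.continuousWithinAt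
  have eper : ∀ (n : ℤ) (x : ℝ), e (x + n * (2 * Real.pi)) = e x + n * (2 * Real.pi) := by
    intro n x
    have h1 := he (x + n * (2 * Real.pi))
    have h2 : Complex.exp (((x + n * (2 * Real.pi) : ℝ) : ℂ) * Complex.I)
        = Complex.exp (x * Complex.I) := by
      rw [Complex.exp_eq_exp_iff_exists_int]
      exact ⟨n, by push_cast; ring⟩
    rw [h2] at h1
    have h3 := he x
    have : ((e (x + n * (2 * Real.pi)) : ℝ) : ℂ) = ((e x + n * (2 * Real.pi) : ℝ) : ℂ) := by
      rw [h1]; push_cast; rw [h3]; push_cast; ring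
    exact_mod_cast this
  have tau_real : ∀ x : ℝ, tauOf Q (Complex.exp (x * Complex.I)) =
      Complex.exp (-((e x : ℂ) * Complex.I)) := fun x => by rw [tauOf_exp, he]
  have tinj : InjOn (tauOf Q) (sphere 0 1) := by
    intro z hz z' hz' heq
    obtain ⟨x, rfl⟩ := circ_exp z hz
    obtain ⟨y, rfl⟩ := circ_exp z' hz'
    rw [tau_real, tau_real, Complex.exp_eq_exp_iff_exists_int] at heq
    obtain ⟨n, hn⟩ := heq
    have h1 : (e y : ℂ) = ((e x + n * (2 * Real.pi) : ℝ) : ℂ) := by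
      have h2 : ((e y : ℂ) - (e x + n * (2 * Real.pi))) * Complex.I = 0 := by
        linear_combination hn
      have := (mul_eq_zero.1 h2).resolve_right Complex.I_ne_zero
      push_cast; linear_combination this
    have h2 : e y = e x + n * (2 * Real.pi) := by exact_mod_cast h1
    rw [← eper] at h2
    rw [emono.injective h2, Complex.exp_eq_exp_iff_exists_int]
    exact ⟨-n, by push_cast; ring⟩
  have tstrict : ∀ z : ℂ, z ≠ 0 → HasStrictDerivAt (tauOf Q)
      (-(z ^ 2)⁻¹ * Complex.exp (-(Q z * Complex.I)) * D z) z := by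
    intro z hz
    have hd : DifferentiableOn ℂ (tauOf Q) {0}ᶜ := fun w hw =>
      (tder w hw).differentiableAt.differentiableWithinAt
    have := (hd.analyticAt (isOpen_compl_singleton.mem_nhds hz)).hasStrictDerivAt
    rwa [(tder z hz).deriv] at this
  have tne : ∀ z : ℂ, z ≠ 0 → 0 < (D z).re →
      -(z ^ 2)⁻¹ * Complex.exp (-(Q z * Complex.I)) * D z ≠ 0 := by
    intro z hz hD0
    refine mul_ne_zero (mul_ne_zero (neg_ne_zero.2 (inv_ne_zero (pow_ne_zero 2 hz)))
      (Complex.exp_ne_zero _)) fun h' => ?_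
    rw [h'] at hD0; simp at hD0
  obtain ⟨N2, hN2, hinj⟩ := tinj.exists_mem_nhdsSet (isCompact_sphere 0 1)
    (fun z hz => (tder z (hs0 z hz)).continuousAt)
    (fun z hz => by
      have := (tstrict z (hs0 z hz)).hasStrictFDerivAt_equiv (tne z (hs0 z hz) (Dpos z hz))
      have hl := HasStrictFDerivAt.eventually_left_inverse this
      exact ⟨_, hl, fun x hx y hy hxy => by
        have h1 : _ = x := hx
        have h2 : _ = y := hy
        rw [← h1, ← h2, hxy]⟩)
  obtain ⟨δ, hδ, hδ1, hann⟩ := exists_annulus (hN1.inter isOpen_interior)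
    (subset_inter (fun z hz => ⟨hs0 z hz, Dpos z hz⟩) (subset_interior_iff_mem_nhdsSet.2 hN2))
  set U : Set ℂ := {z | |‖z‖ - 1| < δ} with hUdef
  have hUo : IsOpen U := isOpen_lt (by fun_prop) continuous_const
  have U0 : ∀ z ∈ U, z ≠ 0 := fun z hz => (hann z hz).1.1
  have UD : ∀ z ∈ U, 0 < (D z).re := fun z hz => (hann z hz).1.2
  have Uinj : InjOn (tauOf Q) U := hinj.mono fun z hz => interior_subset (hann z hz).2
  -- the lift has increasing imaginary part along vertical segments
  have sgn : ∀ w : ℂ, Complex.exp (w * Complex.I) ∈ U →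
      (0 < w.im → 0 < (ψ w).im) ∧ (w.im < 0 → (ψ w).im < 0) := by
    intro w hw
    set S : Set ℝ := {t | Complex.exp ((w.re + t * Complex.I) * Complex.I) ∈ U} with hS
    have hSt : ∀ t : ℝ, t ∈ S ↔ |Real.exp (-t) - 1| < δ := by
      intro t
      simp only [hS, hUdef, mem_ofPred_eq, norm_exp_mul_I]
      simp
    have Sconv : Convex ℝ S := by
      refine Set.OrdConnected.convex ⟨fun a ha b hb t ht => ?_⟩
      rw [hSt, abs_lt] at *
      have h1 : Real.exp (-t) ≤ Real.exp (-a) := Real.exp_le_exp.2 (by linarith [ht.1])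
      have h2 : Real.exp (-b) ≤ Real.exp (-t) := Real.exp_le_exp.2 (by linarith [ht.2])
      constructor <;> linarith [ha.2, hb.1]
    have hder : ∀ t : ℝ, HasDerivAt (fun t : ℝ => (ψ (w.re + t * Complex.I)).im)
        (D (Complex.exp ((w.re + t * Complex.I) * Complex.I))).re t := by
      intro t
      have h1 : HasDerivAt (fun t : ℝ => (w.re : ℂ) + t * Complex.I) Complex.I t := by
        simpa using ((hasDerivAt_id t).ofReal_comp.mul_const Complex.I).const_add (w.re : ℂ)
      have h2 := (ψd _).scomp t h1
      have h3 := (Complex.imCLM.hasFDerivAt.comp_hasDerivAt t h2)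
      exact h3.congr_deriv (by simp [smul_eq_mul])
    have Smono : StrictMonoOn (fun t : ℝ => (ψ (w.re + t * Complex.I)).im) S := by
      refine strictMonoOn_of_deriv_pos Sconv
        (continuous_iff_continuousAt.2 fun t => (hder t).continuousAt).continuousOn fun t ht => ?_
      rw [(hder t).deriv]
      exact UD _ (show _ ∈ U from (interior_subset ht : t ∈ S))
    have h0 : (0 : ℝ) ∈ S := by rw [hSt]; simpa using hδ
    have hw' : w.im ∈ S := by
      simp only [hS, mem_ofPred_eq, Complex.re_add_im]; exact hw
    have v0 : (ψ (w.re + ((0 : ℝ) : ℂ) * Complex.I)).im = 0 := by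
      simp only [Complex.ofReal_zero, zero_mul, add_zero]
      have := he w.re
      simp only [hψ]
      rw [← this, Complex.ofReal_im]
    constructor
    · intro hpos
      have := Smono h0 hw' hpos
      simp only [v0, Complex.re_add_im] at this; exact this
    · intro hneg
      have := Smono hw' h0 hneg
      simp only [v0, Complex.re_add_im] at this; exact this
  have nrm : ∀ w, ‖tauOf Q (Complex.exp (w * Complex.I))‖ = Real.exp (ψ w).im := by
    intro w
    rw [tauOf_exp, Complex.norm_exp]
    simp [hψ]
  have circU : sphere (0 : ℂ) 1 ⊆ U := fun z hz => by
    have : ‖z‖ = 1 := by simpa using hz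
    simp [hUdef, this, hδ]
  have nrm1 : ∀ z ∈ U, ‖z‖ = 1 → ‖tauOf Q z‖ = 1 := by
    intro z hz h1
    obtain ⟨x, rfl⟩ := circ_exp z (by simpa using h1)
    rw [tau_real, ← neg_mul, ← Complex.ofReal_neg, Complex.norm_exp_ofReal_mul_I]
  have linv : ∀ z ∈ U, Function.invFunOn (tauOf Q) U (tauOf Q z) = z := fun z hz =>
    Uinj.leftInvOn_invFunOn hz
  refine ⟨Function.invFunOn (tauOf Q) U, U, tauOf Q '' U, hUo, ?_, fun h' => U0 0 h' rfl, ?_, circU,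
    ?_, fun z hz => (tder z (U0 z hz)).differentiableAt.differentiableWithinAt, ?_, mapsTo_image _ _,
    ?_, linv, ?_, ?_, ?_, nrm1⟩
  · rw [isOpen_iff_mem_nhds]
    rintro _ ⟨z, hz, rfl⟩
    have := (tstrict z (U0 z hz)).map_nhds_eq (tne z (U0 z hz) (UD z hz))
    rw [← this]
    exact image_mem_map (hUo.mem_nhds hz)
  · rintro ⟨z, hz, h0⟩
    exact mul_ne_zero (inv_ne_zero (U0 z hz)) (Complex.exp_ne_zero _) h0
  · intro ζ hζ
    have surj : Function.Surjective e := by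
      refine ec.surjective ?_ ?_
      · refine tendsto_atTop_mono' atTop ?_
          ((tendsto_id.const_mul_atTop hε).atTop_add (tendsto_const_nhds (x := e 0)))
        filter_upwards [eventually_ge_atTop 0] with x hx
        have := hlow 0 x hx
        simp only [id]; linarith
      · refine tendsto_atBot_mono' atBot ?_
          ((tendsto_id.const_mul_atBot hε).atBot_add (tendsto_const_nhds (x := e 0)))
        filter_upwards [eventually_le_atBot 0] with x hx
        have := hlow x 0 hx
        simp only [id]; linarith
    obtain ⟨y, rfl⟩ := circ_exp ζ hζ
    obtain ⟨x, hx⟩ := surj (-y)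
    refine ⟨Complex.exp (x * Complex.I), circU ?_, ?_⟩
    · simp [Complex.norm_exp_ofReal_mul_I]
    · rw [tau_real, hx]; push_cast; ring_nf
  · rintro _ ⟨z, hz, rfl⟩
    have hst := tstrict z (U0 z hz)
    have hne := tne z (U0 z hz) (UD z hz)
    have h1 := hst.to_localInverse hne
    have h2 : ∀ᶠ y in 𝓝 (tauOf Q z),
        Function.invFunOn (tauOf Q) U y = hst.localInverse _ _ _ hne y := by
      have hc := h1.hasDerivAt.continuousAt
      have hz' : hst.localInverse (tauOf Q) _ z hne (tauOf Q z) = z :=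
        HasStrictFDerivAt.localInverse_apply_image (hst.hasStrictFDerivAt_equiv hne)
      have h3 : ∀ᶠ y in 𝓝 (tauOf Q z), hst.localInverse (tauOf Q) _ z hne y ∈ U :=
        hc.preimage_mem_nhds (hUo.mem_nhds (by rw [hz']; exact hz))
      have h4 : ∀ᶠ y in 𝓝 (tauOf Q z), tauOf Q (hst.localInverse (tauOf Q) _ z hne y) = y :=
        HasStrictFDerivAt.eventually_right_inverse (hst.hasStrictFDerivAt_equiv hne)
      filter_upwards [h3, h4] with y hy3 hy4
      conv_lhs => rw [← hy4]
      exact linv _ hy3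
    exact (h1.hasDerivAt.congr_of_eventuallyEq h2).differentiableAt.differentiableWithinAt
  · rintro _ ⟨z, hz, rfl⟩
    rw [linv z hz]; exact hz
  · rintro _ ⟨z, hz, rfl⟩
    rw [linv z hz]
  · intro z hz hlt
    obtain ⟨w, rfl, him⟩ := exists_exp_of_norm (U0 z hz)
    rw [nrm]
    rw [norm_exp_mul_I, Real.exp_lt_one_iff, neg_lt_zero] at hlt
    exact Real.one_lt_exp_iff.2 ((sgn w hz).1 hlt)
  · intro z hz hlt
    obtain ⟨w, rfl, him⟩ := exists_exp_of_norm (U0 z hz)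
    rw [nrm]
    rw [norm_exp_mul_I, Real.one_lt_exp_iff, neg_pos] at hlt
    exact Real.exp_lt_one_iff.2 ((sgn w hz).2 hlt)

/-! ### Rigidity of analytic gluings -/

lemma Gluing.continuousAt {τ σ : ℂ → ℂ} {U V : Set ℂ} (h : Gluing τ σ U V) {z : ℂ}
    (hz : z ∈ U) : ContinuousAt τ z :=
  (h.diffτ.differentiableAt (h.openU.mem_nhds hz)).continuousAt

lemma Gluing.mem_sphere {τ σ : ℂ → ℂ} {U V : Set ℂ} (h : Gluing τ σ U V) {z : ℂ}
    (hz : z ∈ sphere (0 : ℂ) 1) : τ z ∈ sphere (0 : ℂ) 1 := by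
  simpa using h.norm_eq z (h.circU hz) (by simpa using hz)

lemma Gluing.tendsto {τ σ : ℂ → ℂ} {U V : Set ℂ} (h : Gluing τ σ U V) :
    Tendsto τ (𝓝ˢ (sphere 0 1)) (𝓝ˢ (sphere 0 1)) := by
  intro s hs
  rw [mem_nhdsSet_iff_forall] at hs
  show ∀ᶠ z in 𝓝ˢ (sphere 0 1), τ z ∈ s
  rw [eventually_nhdsSet_iff_forall]
  exact fun z hz => (h.continuousAt (h.circU hz)).eventually (hs _ (h.mem_sphere hz))

lemma Gluing.eventually_mem {τ σ : ℂ → ℂ} {U V : Set ℂ} (h : Gluing τ σ U V) :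
    ∀ᶠ z in 𝓝ˢ (sphere (0 : ℂ) 1), z ∈ U :=
  h.openU.mem_nhdsSet.2 h.circU

/-- A relation near the circle, transported to the other chart. -/
lemma Gluing.eventually_symm {τ σ : ℂ → ℂ} {U V : Set ℂ} (h : Gluing τ σ U V) {p : ℂ → ℂ → Prop}
    (hp : ∀ᶠ z in 𝓝ˢ (sphere (0 : ℂ) 1), p z (τ z)) :
    ∀ᶠ z in 𝓝ˢ (sphere (0 : ℂ) 1), p (σ z) z := by
  filter_upwards [h.symm.tendsto.eventually hp, h.symm.eventually_mem] with z hz hV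
  rwa [h.rightInv z hV] at hz

lemma one_mem_sphere : (1 : ℂ) ∈ sphere (0 : ℂ) 1 := by simp

lemma exists_radius_of_eventually {p : ℂ → Prop} (h : ∀ᶠ z in 𝓝ˢ (sphere (0 : ℂ) 1), p z) :
    ∃ δ > 0, δ < 1 ∧ ∀ z : ℂ, |‖z‖ - 1| < δ → p z := by
  obtain ⟨t, ht, hst, hp⟩ := eventually_nhdsSet_iff_exists.1 h
  obtain ⟨δ, hδ, hδ1, hsub⟩ := exists_annulus ht hst
  exact ⟨δ, hδ, hδ1, fun z hz => hp z (hsub z hz)⟩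

lemma eqOn_ball_const {R : ℝ} {f : ℂ → ℂ} (hf : DifferentiableOn ℂ f (ball 0 R)) {z₀ c : ℂ}
    (hz : z₀ ∈ ball (0 : ℂ) R) (h : ∀ᶠ z in 𝓝 z₀, f z = c) : ∀ z ∈ ball (0 : ℂ) R, f z = c :=
  (hf.analyticOnNhd isOpen_ball).eqOn_of_preconnected_of_eventuallyEq
    (analyticOnNhd_const (v := c)) (convex_ball 0 R).isPreconnected hz h

/-- One half of `Gluing.eq_const`: the larger of the two functions is constant. -/
lemma Gluing.eq_const_aux {τ σ : ℂ → ℂ} {U V : Set ℂ} (hG : Gluing τ σ U V) {R₁ R₂ : ℝ}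
    (hR₁ : 1 < R₁) {f h : ℂ → ℂ} (hf : DifferentiableOn ℂ f (ball 0 R₁))
    (hR₂ : 1 < R₂) (hh : DifferentiableOn ℂ h (ball 0 R₂))
    (hfh : ∀ᶠ z in 𝓝ˢ (sphere (0 : ℂ) 1), f z = h (τ z)) {s : ℂ} (hs : ‖s‖ ≤ 1)
    (hsf : ∀ z : ℂ, ‖z‖ ≤ 1 → ‖f z‖ ≤ ‖f s‖) (hsh : ∀ z : ℂ, ‖z‖ ≤ 1 → ‖h z‖ ≤ ‖f s‖) :
    ∃ c, (∀ z ∈ ball (0 : ℂ) R₁, f z = c) ∧ ∀ z ∈ ball (0 : ℂ) R₂, h z = c := by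
  have hs1 : s ∈ ball (0 : ℂ) R₁ := by simpa using lt_of_le_of_lt hs hR₁
  have fd : ∀ᶠ z in 𝓝 s, DifferentiableAt ℂ f z := by
    filter_upwards [isOpen_ball.mem_nhds hs1] with z hz
    exact hf.differentiableAt (isOpen_ball.mem_nhds hz)
  have hloc : IsLocalMax (norm ∘ f) s := by
    rcases hs.lt_or_eq with hlt | heq
    · filter_upwards [isOpen_ball.mem_nhds (show s ∈ ball (0 : ℂ) 1 by simpa using hlt)] with z hz
      exact hsf z (mem_ball_zero_iff.1 hz).le
    · have hsS : s ∈ sphere (0 : ℂ) 1 := by simpa using heq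
      filter_upwards [eventually_nhdsSet_iff_forall.1 (hfh.and hG.eventually_mem) s hsS] with z hz
      rcases le_or_gt ‖z‖ 1 with h1 | h1
      · exact hsf z h1
      · simp only [Function.comp_apply, hz.1]
        exact hsh _ (hG.norm_gt z hz.2 h1).le
  have hconst := eqOn_ball_const hf hs1 (Complex.eventually_eq_of_isLocalMax_norm fd hloc)
  refine ⟨f s, hconst, ?_⟩
  refine eqOn_ball_const hh (show (1 : ℂ) ∈ ball (0 : ℂ) R₂ by simpa using hR₂) ?_
  have h2 := eventually_nhdsSet_iff_forall.1 (hG.eventually_symm (p := fun z ζ => f z = h ζ) hfh) 1 one_mem_sphere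
  have h3 := eventually_nhdsSet_iff_forall.1 (hG.symm.tendsto.eventually
    (isOpen_ball.mem_nhdsSet.2 (sphere_subset_closedBall.trans (closedBall_subset_ball hR₁))))
    1 one_mem_sphere
  filter_upwards [h2, h3] with z hz hz3
  rw [← hz]; exact hconst _ hz3

/-- A function holomorphic on the glued sphere is constant. -/
theorem Gluing.eq_const {τ σ : ℂ → ℂ} {U V : Set ℂ} (hG : Gluing τ σ U V) {R₁ R₂ : ℝ}
    (hR₁ : 1 < R₁) {f h : ℂ → ℂ} (hf : DifferentiableOn ℂ f (ball 0 R₁))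
    (hR₂ : 1 < R₂) (hh : DifferentiableOn ℂ h (ball 0 R₂))
    (hfh : ∀ᶠ z in 𝓝ˢ (sphere (0 : ℂ) 1), f z = h (τ z)) :
    ∃ c, (∀ z ∈ ball (0 : ℂ) R₁, f z = c) ∧ ∀ z ∈ ball (0 : ℂ) R₂, h z = c := by
  have mx : ∀ {R : ℝ} {f : ℂ → ℂ}, 1 < R → DifferentiableOn ℂ f (ball 0 R) →
      ∃ s : ℂ, ‖s‖ ≤ 1 ∧ ∀ z : ℂ, ‖z‖ ≤ 1 → ‖f z‖ ≤ ‖f s‖ := by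
    intro R f hR hf
    obtain ⟨s, hs, hmax⟩ := (isCompact_closedBall (0 : ℂ) 1).exists_isMaxOn
      (nonempty_closedBall.2 zero_le_one)
      (hf.continuousOn.norm.mono (closedBall_subset_ball hR))
    exact ⟨s, by simpa using hs, fun z hz => hmax (by simpa using hz)⟩
  obtain ⟨s, hs, hsf⟩ := mx hR₁ hf
  obtain ⟨t, ht, hth⟩ := mx hR₂ hh
  rcases le_total ‖h t‖ ‖f s‖ with hle | hle
  · exact hG.eq_const_aux hR₁ hf hR₂ hh hfh hs hsf fun z hz => (hth z hz).trans hle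
  · obtain ⟨c, h1, h2⟩ := hG.symm.eq_const_aux hR₂ hh hR₁ hf
      ((hG.eventually_symm (p := fun z ζ => f z = h ζ) hfh).mono fun z hz => hz.symm) ht hth fun z hz => (hsf z hz).trans hle
    exact ⟨c, h2, h1⟩

/-! ### Cauchy integrals -/

/-- The Cauchy integral of `w` over the circle of radius `R`. -/
noncomputable def cauchy (R : ℝ) (w : ℂ → ℂ) (z : ℂ) : ℂ :=
  (2 * Real.pi * Complex.I : ℂ)⁻¹ • ∮ z' in C(0, R), (z' - z)⁻¹ • w z'

lemma differentiableOn_cauchy {R : ℝ} (hR : 0 < R) {w : ℂ → ℂ}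
    (hw : ContinuousOn w (sphere 0 R)) : DifferentiableOn ℂ (cauchy R w) (ball 0 R) := by
  lift R to NNReal using hR.le
  have := (hasFPowerSeriesOn_cauchy_integral (f := w) (c := 0) (R := R)
    (hw.circleIntegrable R.2) (by exact_mod_cast hR)).differentiableOn
  rwa [Metric.eball_coe] at this

/-- Laurent decomposition on an annulus: the part which is holomorphic outside of the inner circle
is written in the coordinate `1 / z`. -/
lemma laurent {r R : ℝ} (hr : 0 < r) (hrR : r < R) {W : Set ℂ} (hW : IsOpen W) {w : ℂ → ℂ}
    (hw : DifferentiableOn ℂ w W) (hsub : ∀ z : ℂ, r ≤ ‖z‖ → ‖z‖ ≤ R → z ∈ W) :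
    ∃ E : ℂ → ℂ, DifferentiableOn ℂ E (ball 0 r⁻¹) ∧ E 0 = 0 ∧
      ∀ z : ℂ, r < ‖z‖ → ‖z‖ < R → w z = cauchy R w z + E z⁻¹ := by
  have wc : ContinuousOn w (sphere 0 r) := hw.continuousOn.mono fun z hz => by
    have : ‖z‖ = r := by simpa using hz
    exact hsub z this.ge (by linarith)
  have wcR : ContinuousOn w (sphere 0 R) := hw.continuousOn.mono fun z hz => by
    have : ‖z‖ = R := by simpa using hz
    exact hsub z (by linarith) this.le
  have cmn : ∀ θ, ‖circleMap 0 r θ‖ = r := fun θ => by simp [abs_of_pos hr]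
  have cms : ∀ θ, circleMap 0 r θ ∈ sphere (0 : ℂ) r := fun θ => circleMap_mem_sphere _ hr.le _
  have wcm : Continuous fun θ => w (circleMap 0 r θ) :=
    wc.comp_continuous (continuous_circleMap 0 r) cms
  have hne : ∀ x ∈ ball (0 : ℂ) r⁻¹, ∀ θ, x * circleMap 0 r θ - 1 ≠ 0 := by
    intro x hx θ h0
    have h1 : ‖x * circleMap 0 r θ‖ = 1 := by rw [sub_eq_zero.1 h0]; simp
    rw [norm_mul, cmn] at h1
    have h2 : ‖x‖ < r⁻¹ := by simpa using hx
    have h3 : ‖x‖ * r < r⁻¹ * r := mul_lt_mul_of_pos_right h2 hr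
    rw [inv_mul_cancel₀ hr.ne'] at h3; linarith
  have dcm : Continuous fun θ => deriv (circleMap 0 r) θ := by
    simp only [deriv_circleMap]; fun_prop
  refine ⟨fun x => -((2 * Real.pi * Complex.I : ℂ)⁻¹ * ∮ z' in C(0, r), x * (x * z' - 1)⁻¹ * w z'),
    ?_, by simp [circleIntegral], ?_⟩
  · refine ((differentiableOn_intervalIntegral isOpen_ball (f := fun x θ =>
      deriv (circleMap 0 r) θ • (x * (x * circleMap 0 r θ - 1)⁻¹ * w (circleMap 0 r θ)))
      (f' := fun x θ => deriv (circleMap 0 r) θ • (((1 * (x * circleMap 0 r θ - 1)⁻¹ +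
        x * (-(1 * circleMap 0 r θ) / (x * circleMap 0 r θ - 1) ^ 2))) * w (circleMap 0 r θ)))
      0 (2 * Real.pi) ?_ ?_ ?_).const_mul _).neg
    · have : ContinuousOn (fun p : ℂ × ℝ => (p.1 * circleMap 0 r p.2 - 1)⁻¹)
          (ball 0 r⁻¹ ×ˢ univ) :=
        ContinuousOn.inv₀ (by fun_prop) fun p hp => hne p.1 hp.1 p.2
      have h2 : Continuous fun p : ℂ × ℝ => w (circleMap 0 r p.2) := wcm.comp continuous_snd
      have h3 : Continuous fun p : ℂ × ℝ => deriv (circleMap 0 r) p.2 := dcm.comp continuous_snd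
      exact h3.continuousOn.smul ((continuousOn_fst.mul this).mul h2.continuousOn)
    · have h1 : ContinuousOn (fun p : ℂ × ℝ => (p.1 * circleMap 0 r p.2 - 1)⁻¹)
          (ball 0 r⁻¹ ×ˢ univ) :=
        ContinuousOn.inv₀ (by fun_prop) fun p hp => hne p.1 hp.1 p.2
      have h4 : ContinuousOn (fun p : ℂ × ℝ => -(1 * circleMap 0 r p.2) /
          (p.1 * circleMap 0 r p.2 - 1) ^ 2) (ball 0 r⁻¹ ×ˢ univ) :=
        ContinuousOn.div (by fun_prop) (by fun_prop) fun p hp => pow_ne_zero 2 (hne p.1 hp.1 p.2)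
      have h2 : Continuous fun p : ℂ × ℝ => w (circleMap 0 r p.2) := wcm.comp continuous_snd
      have h3 : Continuous fun p : ℂ × ℝ => deriv (circleMap 0 r) p.2 := dcm.comp continuous_snd
      exact h3.continuousOn.smul (((continuousOn_const.mul h1).add
        (continuousOn_fst.mul h4)).mul h2.continuousOn)
    · intro x hx θ
      have h1 : HasDerivAt (fun x : ℂ => x * circleMap 0 r θ - 1) (1 * circleMap 0 r θ) x :=
        ((hasDerivAt_id x).mul_const _).sub_const 1
      exact ((((hasDerivAt_id x).mul (h1.inv (hne x hx θ))).mul_const _)).const_mul _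
  · intro z hz1 hz2
    have hzW : W ∈ 𝓝 z := hW.mem_nhds (hsub z hz1.le hz2.le)
    have hz0 : z ≠ 0 := norm_pos_iff.1 (hr.trans hz1)
    have hd := (Complex.differentiableOn_dslope hzW).2 hw
    have key := Complex.circleIntegral_eq_of_differentiable_on_annulus_off_countable hr hrR.le
      (c := 0) (f := dslope w z) (s := ∅) countable_empty
      (hd.continuousOn.mono fun x hx => hsub x (by simpa using hx.2) (by simpa using hx.1))
      (fun x hx => hd.differentiableAt (hW.mem_nhds (hsub x
        (by have := hx.1.2; simp at this; exact this.le)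
        (by have := hx.1.1; simp at this; exact this.le))))
    have ex : ∀ ρ : ℝ, 0 < ρ → ρ ≠ ‖z‖ → ContinuousOn w (sphere 0 ρ) →
        (∮ x in C(0, ρ), dslope w z x) = (∮ x in C(0, ρ), (x - z)⁻¹ • w x) -
          w z * ∮ x in C(0, ρ), (x - z)⁻¹ := by
      intro ρ hρ hne' hc
      have hx : ∀ x ∈ sphere (0 : ℂ) ρ, x ≠ z := fun x hx h' => hne' (by
        have : ‖x‖ = ρ := by simpa using hx
        rw [← this, h'])
      have ci : ContinuousOn (fun x : ℂ => (x - z)⁻¹) (sphere 0 ρ) :=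
        ContinuousOn.inv₀ (by fun_prop) fun x hx' => sub_ne_zero.2 (hx x hx')
      have i1 : CircleIntegrable (fun x => (x - z)⁻¹ • w x) 0 ρ :=
        ContinuousOn.circleIntegrable hρ.le (ci.smul hc)
      have i2 : CircleIntegrable (fun x => w z * (x - z)⁻¹) 0 ρ :=
        ContinuousOn.circleIntegrable hρ.le (continuousOn_const.mul ci)
      rw [← circleIntegral.integral_const_mul, ← circleIntegral.integral_sub i1 i2]
      refine circleIntegral.integral_congr hρ.le fun x hx' => ?_
      simp only [dslope_of_ne _ (hx x hx'), slope_def_module, smul_eq_mul]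
      ring
    rw [ex R (hr.trans hrR) hz2.ne' wcR, ex r hr hz1.ne wc,
      circleIntegral.integral_sub_inv_of_mem_ball (by simpa using hz2)] at key
    have h0 : (∮ x in C(0, r), (x - z)⁻¹) = 0 := by
      refine Complex.circleIntegral_eq_zero_of_differentiable_on_off_countable hr.le
        (s := ∅) countable_empty ?_ ?_
      · refine ContinuousOn.inv₀ (by fun_prop) fun x hx h' => ?_
        have : ‖x‖ ≤ r := by simpa using hx
        rw [sub_eq_zero.1 h'] at this; linarith
      · intro x hx
        refine DifferentiableAt.inv (by fun_prop) fun h' => ?_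
        have : ‖x‖ < r := by simpa using hx.1
        rw [sub_eq_zero.1 h'] at this; linarith
    rw [h0, mul_zero, sub_zero] at key
    have hEq : (∮ x in C(0, r), z⁻¹ * (z⁻¹ * x - 1)⁻¹ * w x) = ∮ x in C(0, r), (x - z)⁻¹ • w x := by
      refine circleIntegral.integral_congr hr.le fun x hx => ?_
      have hxz : x - z ≠ 0 := fun h' => by
        have : ‖x‖ = r := by simpa using hx
        rw [sub_eq_zero.1 h'] at this; linarith
      have : z⁻¹ * x - 1 ≠ 0 := by
        rw [show z⁻¹ * x - 1 = z⁻¹ * (x - z) by field_simp]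
        exact mul_ne_zero (inv_ne_zero hz0) hxz
      simp only [smul_eq_mul]
      congr 1
      field_simp
    beta_reduce
    rw [hEq, ← key, cauchy, smul_eq_mul]
    have hpi : (2 * Real.pi * Complex.I : ℂ) ≠ 0 := Complex.two_pi_I_ne_zero
    field_simp
    ring

/-- Extension by zero of a function on a circle. -/
noncomputable def ext0 {R : ℝ} (u : C(sphere (0 : ℂ) R, ℂ)) (z : ℂ) : ℂ :=
  open Classical in if h : z ∈ sphere (0 : ℂ) R then u ⟨z, h⟩ else 0

lemma ext0_apply {R : ℝ} (u : C(sphere (0 : ℂ) R, ℂ)) (z : sphere (0 : ℂ) R) :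
    ext0 u z = u z := by
  rw [ext0, dif_pos z.2]

lemma ext0_of_mem {R : ℝ} (u : C(sphere (0 : ℂ) R, ℂ)) {z : ℂ} (h : z ∈ sphere (0 : ℂ) R) :
    ext0 u z = u ⟨z, h⟩ := by
  rw [ext0, dif_pos h]

lemma continuousOn_ext0 {R : ℝ} (u : C(sphere (0 : ℂ) R, ℂ)) :
    ContinuousOn (ext0 u) (sphere 0 R) := by
  rw [continuousOn_iff_continuous_domRestrict]
  exact u.continuous.congr fun z => (ext0_apply u z).symm

/-- The Taylor coefficients at the origin of a Cauchy integral, as functionals of its density. -/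
lemma exists_coeff {R : ℝ} (hR : 0 < R) (n : ℕ) : ∃ l : C(sphere (0 : ℂ) R, ℂ) →L[ℂ] ℂ,
    (∀ u, l u = (2 * Real.pi * Complex.I : ℂ)⁻¹ • ∮ z in C(0, R), z⁻¹ ^ n • z⁻¹ • ext0 u z) ∧
      ‖l‖ ≤ R⁻¹ ^ n := by
  have ci : ∀ u : C(sphere (0 : ℂ) R, ℂ),
      CircleIntegrable (fun z => z⁻¹ ^ n • z⁻¹ • ext0 u z) 0 R := by
    intro u
    have hi : ContinuousOn (fun z : ℂ => z⁻¹) (sphere 0 R) :=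
      continuousOn_id.inv₀ fun z hz => by
        have : ‖z‖ = R := by simpa using hz
        exact norm_pos_iff.1 (this ▸ hR)
    exact ((hi.pow n).smul (hi.smul (continuousOn_ext0 u))).circleIntegrable hR.le
  let l : C(sphere (0 : ℂ) R, ℂ) →ₗ[ℂ] ℂ :=
    { toFun := fun u =>
        (2 * Real.pi * Complex.I : ℂ)⁻¹ • ∮ z in C(0, R), z⁻¹ ^ n • z⁻¹ • ext0 u z
      map_add' := fun u v => by
        rw [← smul_add, ← circleIntegral.integral_add (ci u) (ci v)]
        congr 1
        refine circleIntegral.integral_congr hR.le fun z hz => ?_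
        simp only [ext0_of_mem _ hz, ContinuousMap.add_apply, smul_add]
      map_smul' := fun c u => by
        have : (∮ z in C(0, R), z⁻¹ ^ n • z⁻¹ • ext0 (c • u) z) =
            c * ∮ z in C(0, R), z⁻¹ ^ n • z⁻¹ • ext0 u z := by
          rw [← circleIntegral.integral_const_mul]
          refine circleIntegral.integral_congr hR.le fun z hz => ?_
          simp only [ext0_of_mem _ hz, ContinuousMap.smul_apply, smul_eq_mul]
          ring
        rw [RingHom.id_apply, this, smul_eq_mul, smul_eq_mul, smul_eq_mul]
        ring }
  refine ⟨l.mkContinuous (R⁻¹ ^ n) fun u => ?_, fun u => rfl,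
    LinearMap.mkContinuous_norm_le _ (by positivity) _⟩
  have := circleIntegral.norm_two_pi_i_inv_smul_integral_le_of_norm_le_const hR.le
    (f := fun z => z⁻¹ ^ n • z⁻¹ • ext0 u z) (c := 0) (C := R⁻¹ ^ n * (R⁻¹ * ‖u‖)) fun z hz => by
      have hn : ‖z‖ = R := by simpa using hz
      rw [norm_smul, norm_smul, norm_pow, norm_inv, hn, ext0_of_mem _ hz]
      gcongr
      exact u.norm_coe_le_norm _
  refine this.trans (le_of_eq ?_)
  field_simp

/-- Evaluating Cauchy integrals on a compact subset of the open disc is a compact operator: it is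
the norm-convergent sum of the rank-one operators `u ↦ aₙ(u) φⁿ`. -/
lemma exists_cauchyOp {R ρ : ℝ} (hR : 0 < R) (hρ : ρ < R) (hρ0 : 0 ≤ ρ) {S : Type}
    [TopologicalSpace S]
    [CompactSpace S] (φ : C(S, ℂ)) (hφ : ∀ s, ‖φ s‖ ≤ ρ) :
    ∃ T : C(sphere (0 : ℂ) R, ℂ) →L[ℂ] C(S, ℂ), IsCompactOperator T ∧
      ∀ u s, T u s = cauchy R (ext0 u) (φ s) := by
  choose l hl hlb using fun n => exists_coeff hR n
  have hφn : ‖φ‖ ≤ ρ := (ContinuousMap.norm_le _ hρ0).2 hφ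
  let t : ℕ → C(sphere (0 : ℂ) R, ℂ) →L[ℂ] C(S, ℂ) := fun n => (l n).smulRight (φ ^ n)
  have tn : ∀ n, ‖t n‖ ≤ (R⁻¹ * ρ) ^ n := by
    intro n
    rw [mul_pow]
    calc ‖t n‖ = ‖l n‖ * ‖φ ^ n‖ := ContinuousLinearMap.norm_smulRight_apply _ _
      _ ≤ R⁻¹ ^ n * ρ ^ n := by
        gcongr
        · exact hlb n
        · refine (ContinuousMap.norm_le _ (by positivity)).2 fun s => ?_
          rw [ContinuousMap.pow_apply, norm_pow]
          exact pow_le_pow_left₀ (norm_nonneg _) (hφ s) n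
  have hr1 : R⁻¹ * ρ < 1 := by
    rw [inv_mul_lt_iff₀ hR]; simpa using hρ
  have hsum : Summable t := Summable.of_norm_bounded
    (summable_geometric_of_lt_one (by positivity) hr1) tn
  refine ⟨∑' n, t n, ?_, fun u s => ?_⟩
  · have tcomp : ∀ n, IsCompactOperator (t n) := fun n =>
      (isCompactOperator_of_locallyCompactSpace_dom (l n)).clm_comp
        (ContinuousLinearMap.toSpanSingleton ℂ (φ ^ n))
    refine isCompactOperator_of_tendsto hsum.hasSum.tendsto_sum_nat
      (Eventually.of_forall fun n => ?_)
    induction n with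
    | zero => simpa using isCompactOperator_zero
    | succ n ih => rw [Finset.sum_range_succ]; exact ih.add (tcomp n)
  · have h1 : HasSum (fun n => t n u s) ((∑' n, t n) u s) := by
      have := (hsum.hasSum.mapL (ContinuousLinearMap.apply ℂ _ u)).mapL (ContinuousMap.evalCLM ℂ s)
      simpa using this
    refine h1.unique ?_
    have h2 := hasSum_cauchyPowerSeries_integral (f := ext0 u) (c := 0) (R := R) (w := φ s)
      ((continuousOn_ext0 u).circleIntegrable hR.le) (lt_of_le_of_lt (hφ s) hρ)
    rw [zero_add] at h2
    have hfun : (fun n => t n u s) = fun n => cauchyPowerSeries (ext0 u) 0 R n fun _ => φ s := by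
      ext n
      rw [cauchyPowerSeries_apply]
      simp only [t, ContinuousLinearMap.smulRight_apply, ContinuousMap.smul_apply, hl,
        ContinuousMap.pow_apply, smul_eq_mul, sub_zero]
      rw [mul_assoc, mul_comm (circleIntegral _ _ _), ← circleIntegral.integral_const_mul]
      congr 2
      ext z
      rw [div_eq_mul_inv, mul_pow]; ring
    rw [hfun]
    exact h2

/-! ### The additive Cousin problem on a glued sphere -/

lemma Gluing.restrict {τ σ : ℂ → ℂ} {U V W : Set ℂ} (h : Gluing τ σ U V) (hW : IsOpen W)
    (hc : sphere 0 1 ⊆ W) : Gluing τ σ (U ∩ W) (V ∩ σ ⁻¹' W) where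
  openU := h.openU.inter hW
  openV := h.diffσ.continuousOn.isOpen_inter_preimage h.openV hW
  zeroU := fun h' => h.zeroU h'.1
  zeroV := fun h' => h.zeroV h'.1
  circU := subset_inter h.circU hc
  circV := fun z hz => ⟨h.circV hz, hc (h.symm.mem_sphere hz)⟩
  diffτ := h.diffτ.mono inter_subset_left
  diffσ := h.diffσ.mono inter_subset_left
  mapsτ := fun z hz => ⟨h.mapsτ hz.1, by
    show σ (τ z) ∈ W
    rw [h.leftInv z hz.1]; exact hz.2⟩
  mapsσ := fun z hz => ⟨h.mapsσ hz.1, hz.2⟩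
  leftInv := fun z hz => h.leftInv z hz.1
  rightInv := fun z hz => h.rightInv z hz.1
  norm_lt := fun z hz => h.norm_lt z hz.1
  norm_gt := fun z hz => h.norm_gt z hz.1
  norm_eq := fun z hz => h.norm_eq z hz.1

lemma tendsto_inv_sphere :
    Tendsto (fun x : ℂ => x⁻¹) (𝓝ˢ (sphere (0 : ℂ) 1)) (𝓝ˢ (sphere 0 1)) := by
  intro s hs
  rw [mem_nhdsSet_iff_forall] at hs
  show ∀ᶠ z in 𝓝ˢ (sphere (0 : ℂ) 1), z⁻¹ ∈ s
  rw [eventually_nhdsSet_iff_forall]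
  intro z hz
  have hz1 : ‖z‖ = 1 := by simpa using hz
  have hz0 : z ≠ 0 := norm_pos_iff.1 (by rw [hz1]; exact one_pos)
  exact (continuousAt_inv₀ hz0).eventually (hs _ (by simp [hz1]))

/-- Half of the Laurent analysis in `Gluing.cousin_core`, for one of the two charts. -/
lemma Gluing.laurent_aux {τ σ : ℂ → ℂ} {U V : Set ℂ} (hG : Gluing τ σ U V) {R R' : ℝ} (hR : 1 < R)
    (hR' : 1 < R') (hRU : ∀ z : ℂ, 1 ≤ ‖z‖ → ‖z‖ ≤ R → z ∈ U) {a u h : ℂ → ℂ}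
    (ha : DifferentiableOn ℂ a U) (hh : DifferentiableOn ℂ h (ball 0 R'))
    (h1 : ∀ z ∈ sphere (0 : ℂ) R, u z = h (τ z) + a z) :
    ∃ ρ > 1, ∃ E : ℂ → ℂ, DifferentiableOn ℂ E (ball 0 ρ) ∧ E 0 = 0 ∧
      ∀ᶠ z in 𝓝ˢ (sphere (0 : ℂ) 1), h (τ z) + a z = cauchy R u z + E z⁻¹ := by
  have hWo : IsOpen (U ∩ τ ⁻¹' ball 0 R') :=
    hG.diffτ.continuousOn.isOpen_inter_preimage hG.openU isOpen_ball
  have hev : ∀ᶠ z in 𝓝ˢ (sphere (0 : ℂ) 1), z ∈ U ∩ τ ⁻¹' ball 0 R' :=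
    hG.eventually_mem.and (hG.tendsto.eventually
      (isOpen_ball.mem_nhdsSet.2 (sphere_subset_closedBall.trans (closedBall_subset_ball hR'))))
  obtain ⟨δ, hδ, hδ1, hann⟩ := exists_radius_of_eventually hev
  obtain ⟨E, hE, hE0, hEq⟩ := laurent (r := 1 - δ / 2) (R := R) (by linarith) (by linarith) hWo
    (w := fun z => h (τ z) + a z)
    ((hh.comp (hG.diffτ.mono inter_subset_left) fun z hz => hz.2).add (ha.mono inter_subset_left))
    (fun z hz1 hz2 => by
      rcases le_or_gt ‖z‖ 1 with hle | hgt
      · exact hann z (by rw [abs_lt]; constructor <;> linarith)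
      · have hzU := hRU z hgt.le hz2
        refine ⟨hzU, ?_⟩
        have := hG.norm_gt z hzU hgt
        simp only [mem_preimage, mem_ball_zero_iff]
        linarith)
  refine ⟨(1 - δ / 2)⁻¹, (one_lt_inv₀ (by linarith)).2 (by linarith), E, hE, hE0, ?_⟩
  have hopen : ∀ᶠ z in 𝓝ˢ (sphere (0 : ℂ) 1), 1 - δ / 2 < ‖z‖ ∧ ‖z‖ < R := by
    rw [eventually_nhdsSet_iff_forall]
    intro z hz
    have hz1 : ‖z‖ = 1 := by simpa using hz
    exact (continuous_norm.continuousAt.eventually (lt_mem_nhds (by show _ < ‖z‖; rw [hz1]; linarith))).and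
      (continuous_norm.continuousAt.eventually (gt_mem_nhds (by show ‖z‖ < _; rw [hz1]; linarith)))
  filter_upwards [hopen] with z hz
  rw [hEq z hz.1 hz.2]
  congr 1
  simp only [cauchy]
  congr 1
  refine circleIntegral.integral_congr (by linarith) fun z' hz' => ?_
  simp only [h1 z' hz']

/-- A fixed point of the two coupled Cauchy integral equations solves the Cousin problem. The
defects of the two equations are holomorphic outside of the discs and match along the circle, so
they vanish by rigidity of the complementary gluing. -/
lemma Gluing.cousin_core {τ σ : ℂ → ℂ} {U V : Set ℂ} (hG : Gluing τ σ U V) {R R' : ℝ} (hR : 1 < R)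
    (hR' : 1 < R') (hRU : ∀ z : ℂ, 1 ≤ ‖z‖ → ‖z‖ ≤ R → z ∈ U)
    (hRV : ∀ z : ℂ, 1 ≤ ‖z‖ → ‖z‖ ≤ R' → z ∈ V) {a u v : ℂ → ℂ}
    (ha : DifferentiableOn ℂ a U) (hu : ContinuousOn u (sphere 0 R))
    (hv : ContinuousOn v (sphere 0 R'))
    (h1 : ∀ z ∈ sphere (0 : ℂ) R, u z = (cauchy R' v (τ z) - cauchy R' v 0) + a z)
    (h2 : ∀ z ∈ sphere (0 : ℂ) R', v z = cauchy R u (σ z) - a (σ z)) :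
    ∀ᶠ z in 𝓝ˢ (sphere (0 : ℂ) 1), cauchy R u z - a z = cauchy R' v (τ z) - cauchy R' v 0 := by
  have df : DifferentiableOn ℂ (cauchy R u) (ball 0 R) :=
    differentiableOn_cauchy (by linarith) hu
  have dh : DifferentiableOn ℂ (fun ζ => cauchy R' v ζ - cauchy R' v 0) (ball 0 R') :=
    (differentiableOn_cauchy (by linarith) hv).sub_const _
  obtain ⟨ρ₁, hρ₁, E₁, dE₁, E₁0, eq₁⟩ := hG.laurent_aux hR hR' hRU ha dh h1
  obtain ⟨ρ₂, hρ₂, E₂, dE₂, E₂0, eq₂⟩ := hG.symm.laurent_aux (a := fun ζ => -a (σ ζ)) hR' hR hRV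
    ((ha.comp hG.diffσ hG.mapsσ).neg) df (u := v) fun z hz => by rw [h2 z hz, sub_eq_add_neg]
  obtain ⟨c, hc, -⟩ := hG.inversion.eq_const hρ₁ dE₁ hρ₂
    (h := fun y => -(cauchy R' v 0 + E₂ y)) ((dE₂.const_add _).neg) (by
      have := (eq₁.and (hG.tendsto.eventually eq₂)).and hG.eventually_mem
      filter_upwards [tendsto_inv_sphere.eventually this] with x hx
      obtain ⟨⟨e1, e2⟩, hU⟩ := hx
      rw [hG.leftInv _ hU] at e2
      rw [inv_inv] at e1
      linear_combination -e1 - e2)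
  have hc0 : c = 0 := by rw [← hc 0 (mem_ball_self (by linarith)), E₁0]
  have hb : ∀ᶠ z in 𝓝ˢ (sphere (0 : ℂ) 1), z⁻¹ ∈ ball (0 : ℂ) ρ₁ :=
    tendsto_inv_sphere.eventually (isOpen_ball.mem_nhdsSet.2
      (sphere_subset_closedBall.trans (closedBall_subset_ball hρ₁)))
  filter_upwards [eq₁, hb] with z hz hzb
  rw [hc _ hzb, hc0] at hz
  linear_combination -hz

/-- The Cousin problem on the glued sphere is solvable: a function holomorphic near the circle is
the jump between a holomorphic function on the `z`-disc and one on the `ζ`-disc. The integral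
equations for the densities have a unique solution by the Fredholm alternative. -/
theorem Gluing.cousin {τ σ : ℂ → ℂ} {U V : Set ℂ} (hG : Gluing τ σ U V) {a : ℂ → ℂ}
    (ha : DifferentiableOn ℂ a U) :
    ∃ R₁ > 1, ∃ R₂ > 1, ∃ f h : ℂ → ℂ, DifferentiableOn ℂ f (ball 0 R₁) ∧
      DifferentiableOn ℂ h (ball 0 R₂) ∧ h 0 = 0 ∧
      ∀ᶠ z in 𝓝ˢ (sphere (0 : ℂ) 1), f z - a z = h (τ z) := by
  obtain ⟨δ, hδ, hδ1, hU⟩ := exists_annulus hG.openU hG.circU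
  obtain ⟨δ', hδ', hδ1', hV⟩ := exists_annulus hG.openV hG.circV
  set R : ℝ := 1 + δ / 2 with hRdef
  set R' : ℝ := 1 + δ' / 2 with hRdef'
  have hR : 1 < R := by linarith
  have hR' : 1 < R' := by linarith
  have hRU : ∀ z : ℂ, 1 ≤ ‖z‖ → ‖z‖ ≤ R → z ∈ U := fun z h1 h2 =>
    hU z (by rw [abs_lt]; constructor <;> linarith)
  have hRV : ∀ z : ℂ, 1 ≤ ‖z‖ → ‖z‖ ≤ R' → z ∈ V := fun z h1 h2 =>
    hV z (by rw [abs_lt]; constructor <;> linarith)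
  have sU : ∀ z ∈ sphere (0 : ℂ) R, z ∈ U := fun z hz => by
    have : ‖z‖ = R := by simpa using hz
    exact hRU z (by linarith) this.le
  have sV : ∀ z ∈ sphere (0 : ℂ) R', z ∈ V := fun z hz => by
    have : ‖z‖ = R' := by simpa using hz
    exact hRV z (by linarith) this.le
  let τs : C(sphere (0 : ℂ) R, ℂ) := ⟨fun z => τ z,
    hG.diffτ.continuousOn.comp_continuous continuous_subtype_val fun z => sU z z.2⟩
  let σs : C(sphere (0 : ℂ) R', ℂ) := ⟨fun z => σ z,
    hG.diffσ.continuousOn.comp_continuous continuous_subtype_val fun z => sV z z.2⟩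
  let as : C(sphere (0 : ℂ) R, ℂ) := ⟨fun z => a z,
    ha.continuousOn.comp_continuous continuous_subtype_val fun z => sU z z.2⟩
  let aσs : C(sphere (0 : ℂ) R', ℂ) := ⟨fun z => a (σ z),
    (ha.comp hG.diffσ hG.mapsσ).continuousOn.comp_continuous continuous_subtype_val
      fun z => sV z z.2⟩
  obtain ⟨T₁, hT₁, eT₁⟩ := exists_cauchyOp (R := R) (ρ := 1) (by linarith) hR zero_le_one σs
    fun s => (hG.symm.norm_gt s (sV s s.2) (by
      have : ‖(s : ℂ)‖ = R' := by simpa using s.2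
      linarith)).le
  obtain ⟨T₂, -, eT₂⟩ := exists_cauchyOp (R := R') (ρ := 1) (by linarith) hR' zero_le_one τs
    fun s => (hG.norm_gt s (sU s s.2) (by
      have : ‖(s : ℂ)‖ = R := by simpa using s.2
      linarith)).le
  obtain ⟨T₃, -, eT₃⟩ := exists_cauchyOp (R := R') (ρ := 1) (by linarith) hR' zero_le_one
    (0 : C(sphere (0 : ℂ) R, ℂ)) fun s => by simp
  set L : C(sphere (0 : ℂ) R, ℂ) →L[ℂ] C(sphere (0 : ℂ) R, ℂ) := (T₂ - T₃).comp T₁ with hL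
  have hLc : IsCompactOperator L := hT₁.clm_comp (T₂ - T₃)
  -- `b` is `a` or `0` in the two applications
  have core : ∀ (b : ℂ → ℂ) (hb : DifferentiableOn ℂ b U) (u : C(sphere (0 : ℂ) R, ℂ))
      (v : C(sphere (0 : ℂ) R', ℂ)), (∀ z, u z = (T₂ - T₃) v z + b z) →
      (∀ z, v z = T₁ u z - b (σ z)) →
      ∀ᶠ z in 𝓝ˢ (sphere (0 : ℂ) 1), cauchy R (ext0 u) z - b z =
        cauchy R' (ext0 v) (τ z) - cauchy R' (ext0 v) 0 := by
    intro b hb u v h1 h2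
    refine hG.cousin_core hR hR' hRU hRV hb (continuousOn_ext0 u) (continuousOn_ext0 v)
      (fun z hz => ?_) (fun z hz => ?_)
    · rw [ext0_of_mem u hz, h1]
      simp only [ContinuousLinearMap.sub_apply, ContinuousMap.sub_apply, eT₂, eT₃]
      rfl
    · rw [ext0_of_mem v hz, h2, eT₁]
      rfl
  have dcu : ∀ u : C(sphere (0 : ℂ) R, ℂ), DifferentiableOn ℂ (cauchy R (ext0 u)) (ball 0 R) :=
    fun u => differentiableOn_cauchy (by linarith) (continuousOn_ext0 u)
  have dcv : ∀ v : C(sphere (0 : ℂ) R', ℂ), DifferentiableOn ℂ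
      (fun z => cauchy R' (ext0 v) z - cauchy R' (ext0 v) 0) (ball 0 R') :=
    fun v => (differentiableOn_cauchy (by linarith) (continuousOn_ext0 v)).sub_const _
  have hres : (1 : ℂ) ∈ resolventSet ℂ L := by
    refine (hLc.hasEigenvalue_or_mem_resolventSet one_ne_zero).resolve_left fun hev => ?_
    obtain ⟨u, hu⟩ := hev.exists_hasEigenvector
    have hLu : L u = u := by simpa using hu.apply_eq_smul
    apply hu.2
    have e1 : ∀ z, u z = (T₂ - T₃) (T₁ u) z + (fun _ => (0 : ℂ)) (z : ℂ) := fun z => by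
      conv_lhs => rw [← hLu]
      simp [hL]
    have e2 := core (fun _ => 0) (differentiableOn_const _) u (T₁ u) e1 fun z => by simp
    obtain ⟨c, -, hc⟩ := hG.eq_const hR (dcu u) hR' (dcv (T₁ u)) (by simpa using e2)
    have hc0 : c = 0 := by rw [← hc 0 (mem_ball_self (by linarith)), sub_self]
    ext z
    have hzn : ‖(z : ℂ)‖ = R := by simpa using z.2
    have := hc (τ z) (by
      have := hG.norm_gt z (sU z z.2) (by linarith)
      rw [mem_ball_zero_iff]; linarith)
    rw [e1 z]
    simp only [ContinuousLinearMap.sub_apply, ContinuousMap.sub_apply, eT₂, eT₃, add_zero,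
      ContinuousMap.zero_apply]
    exact this.trans hc0
  obtain ⟨u, hu⟩ : ∃ u, u - L u = as - (T₂ - T₃) aσs := by
    obtain ⟨w, hw⟩ := hres
    refine ⟨(↑w⁻¹ : C(sphere (0 : ℂ) R, ℂ) →L[ℂ] C(sphere (0 : ℂ) R, ℂ))
      (as - (T₂ - T₃) aσs), ?_⟩
    have h3 := congrArg (fun A : C(sphere (0 : ℂ) R, ℂ) →L[ℂ] C(sphere (0 : ℂ) R, ℂ) =>
      A (as - (T₂ - T₃) aσs)) w.mul_inv
    rw [hw] at h3
    simpa using h3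
  refine ⟨R, hR, R', hR', _, _, dcu u, dcv (T₁ u - aσs), by simp, ?_⟩
  refine core a ha u (T₁ u - aσs) (fun z => ?_) fun z => by
    rw [ContinuousMap.sub_apply]; rfl
  have h4 := congrArg (fun A : C(sphere (0 : ℂ) R, ℂ) => A z) hu
  simp only [hL, ContinuousMap.sub_apply, ContinuousLinearMap.comp_apply,
    ContinuousLinearMap.sub_apply, map_sub] at h4 ⊢
  have h5 : as z = a z := rfl
  rw [h5] at h4
  linear_combination h4

/-- `Gluing.cousin` for a datum which is only holomorphic close to the circle. -/
theorem Gluing.cousin' {τ σ : ℂ → ℂ} {U V : Set ℂ} (hG : Gluing τ σ U V) {a : ℂ → ℂ}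
    (ha : ∀ᶠ z in 𝓝ˢ (sphere (0 : ℂ) 1), DifferentiableAt ℂ a z) :
    ∃ R₁ > 1, ∃ R₂ > 1, ∃ f h : ℂ → ℂ, DifferentiableOn ℂ f (ball 0 R₁) ∧
      DifferentiableOn ℂ h (ball 0 R₂) ∧ h 0 = 0 ∧
      ∀ᶠ z in 𝓝ˢ (sphere (0 : ℂ) 1), f z - a z = h (τ z) := by
  obtain ⟨t, ht, hst, hp⟩ := eventually_nhdsSet_iff_exists.1 ha
  exact (hG.restrict ht hst).cousin fun z hz => (hp z hz.2).differentiableWithinAt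

/-! ### The welding of an analytic gluing -/

/-- A meromorphic function on the glued sphere with a single simple pole: it is `F` in the
`z`-disc and `1 / ζ + h ζ` in the `ζ`-disc. -/
structure Welding (τ F h : ℂ → ℂ) (R : ℝ) : Prop where
  one_lt : 1 < R
  diffF : DifferentiableOn ℂ F (ball 0 R)
  diffh : DifferentiableOn ℂ h (ball 0 R)
  h_zero : h 0 = 0
  seam : ∀ᶠ z in 𝓝ˢ (sphere (0 : ℂ) 1), F z = (τ z)⁻¹ + h (τ z)

lemma eventually_ne_sphere {p : ℂ} (hp : ‖p‖ < 1) : ∀ᶠ z in 𝓝ˢ (sphere (0 : ℂ) 1), z ≠ p := by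
  rw [eventually_nhdsSet_iff_forall]
  intro z hz
  refine isOpen_ne.mem_nhds ?_
  rintro rfl
  have : ‖z‖ = 1 := by simpa using hz
  linarith

/-- `Gluing.cousin'` with one common radius. -/
lemma Gluing.cousin_min {τ σ : ℂ → ℂ} {U V : Set ℂ} (hG : Gluing τ σ U V) {a : ℂ → ℂ}
    (ha : ∀ᶠ z in 𝓝ˢ (sphere (0 : ℂ) 1), DifferentiableAt ℂ a z) {R₀ : ℝ} (hR₀ : 1 < R₀) :
    ∃ R > 1, R ≤ R₀ ∧ ∃ f h : ℂ → ℂ, DifferentiableOn ℂ f (ball 0 R) ∧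
      DifferentiableOn ℂ h (ball 0 R) ∧ h 0 = 0 ∧
      ∀ᶠ z in 𝓝ˢ (sphere (0 : ℂ) 1), f z - a z = h (τ z) := by
  obtain ⟨R₁, h1, R₂, h2, f, h, df, dh, h0, hs⟩ := hG.cousin' ha
  refine ⟨min (min R₁ R₂) R₀, lt_min (lt_min h1 h2) hR₀, min_le_right _ _, f, h,
    df.mono (ball_subset_ball ((min_le_left _ _).trans (min_le_left _ _))),
    dh.mono (ball_subset_ball ((min_le_left _ _).trans (min_le_right _ _))), h0, hs⟩

lemma Gluing.eventually_differentiableAt {τ σ : ℂ → ℂ} {U V : Set ℂ} (hG : Gluing τ σ U V) :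
    ∀ᶠ z in 𝓝ˢ (sphere (0 : ℂ) 1), DifferentiableAt ℂ τ z := by
  filter_upwards [hG.eventually_mem] with z hz
  exact hG.diffτ.differentiableAt (hG.openU.mem_nhds hz)

/-- The Cousin datum is the principal part `1 / ζ` of the welding. -/
theorem Gluing.exists_welding {τ σ : ℂ → ℂ} {U V : Set ℂ} (hG : Gluing τ σ U V) :
    ∃ F h R, Welding τ F h R := by
  obtain ⟨R, hR, -, f, h, df, dh, h0, hs⟩ := hG.cousin_min (a := fun z => (τ z)⁻¹) (by
    filter_upwards [hG.eventually_differentiableAt,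
      hG.tendsto.eventually (eventually_ne_sphere (p := 0) (by simp))] with z hz hz0
    exact hz.inv hz0) one_lt_two
  refine ⟨f, h, R, hR, df, dh, h0, ?_⟩
  filter_upwards [hs] with z hz
  rw [← hz]; ring

/-- The numerator `1 + ζ (h ζ - c)` does not vanish identically near any point. -/
lemma Welding.numerator_ne {τ F h : ℂ → ℂ} {R : ℝ} (hW : Welding τ F h R) {c p : ℂ}
    (hp : p ∈ ball (0 : ℂ) R) (h0 : ∀ᶠ ζ in 𝓝 p, 1 + ζ * (h ζ - c) = 0) : False := by
  have := eqOn_ball_const (f := fun ζ => 1 + ζ * (h ζ - c))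
    ((differentiableOn_id.mul (hW.diffh.sub_const c)).const_add 1) hp h0 0
    (mem_ball_self (by linarith [hW.one_lt]))
  simp at this

lemma Welding.not_const {τ σ F h : ℂ → ℂ} {U V : Set ℂ} {R : ℝ} (hG : Gluing τ σ U V)
    (hW : Welding τ F h R) {c p : ℂ} (hp : p ∈ ball (0 : ℂ) R) (hev : ∀ᶠ z in 𝓝 p, F z = c) :
    False := by
  have hconst := eqOn_ball_const hW.diffF hp hev
  refine hW.numerator_ne (c := c) (by simpa using hW.one_lt : (1 : ℂ) ∈ ball (0 : ℂ) R) ?_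
  have e1 := hG.eventually_symm (p := fun z ζ => F z = ζ⁻¹ + h ζ) hW.seam
  have e2 := hG.symm.tendsto.eventually (isOpen_ball.mem_nhdsSet.2
    (sphere_subset_closedBall.trans (closedBall_subset_ball hW.one_lt)))
  filter_upwards [eventually_nhdsSet_iff_forall.1 e1 1 one_mem_sphere,
    eventually_nhdsSet_iff_forall.1 e2 1 one_mem_sphere,
    isOpen_ne.mem_nhds (one_ne_zero (α := ℂ))] with ζ h1 h2 h3
  rw [hconst _ h2] at h1
  rw [h1]; field_simp; ring

/-- The common mechanism behind injectivity on the `z`-disc and disjointness: the product of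
`F - F p` with a function having a simple pole at `p` only is a non-zero constant. -/
lemma Welding.exists_const {τ σ F h : ℂ → ℂ} {U V : Set ℂ} {R : ℝ} (hG : Gluing τ σ U V)
    (hW : Welding τ F h R) {p : ℂ} (hp : ‖p‖ < 1) : ∃ c ≠ 0, ∃ f k : ℂ → ℂ,
      (∀ z, ‖z‖ < 1 → (F z - F p) * f z + dslope F p z = c) ∧
      (∀ ζ, ‖ζ‖ < 1 → dslope k 0 ζ + (h ζ - F p) * k ζ = c) ∧ k 0 = 0 := by
  obtain ⟨R', hR', hle, f, k, df, dk, k0, hs⟩ := hG.cousin_min (a := fun z => -(z - p)⁻¹) (by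
    filter_upwards [eventually_ne_sphere hp] with z hz
    exact ((differentiableAt_id.sub_const p).inv (sub_ne_zero.2 hz)).neg) hW.one_lt
  have hpR : p ∈ ball (0 : ℂ) R' := by simpa using hp.trans hR'
  have dF := hW.diffF.mono (ball_subset_ball (x := (0 : ℂ)) hle)
  have dh := hW.diffh.mono (ball_subset_ball (x := (0 : ℂ)) hle)
  obtain ⟨c, hc1, hc2⟩ := hG.eq_const hR' (f := fun z => (F z - F p) * f z + dslope F p z)
    (((dF.sub_const _).mul df).add
      ((Complex.differentiableOn_dslope (isOpen_ball.mem_nhds hpR)).2 dF))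
    hR' (h := fun ζ => dslope k 0 ζ + (h ζ - F p) * k ζ)
    (((Complex.differentiableOn_dslope (ball_mem_nhds 0 (by linarith))).2 dk).add
      ((dh.sub_const _).mul dk)) (by
    filter_upwards [hs, hW.seam, eventually_ne_sphere hp,
      hG.tendsto.eventually (eventually_ne_sphere (p := 0) (by simp))] with z h1 h2 h3 h4
    rw [dslope_of_ne _ h3, dslope_of_ne _ h4, slope_def_field, slope_def_field, k0]
    have h5 : f z = k (τ z) - (z - p)⁻¹ := by rw [← h1]; ring
    have h6 : h (τ z) = F z - (τ z)⁻¹ := by rw [h2]; ring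
    have h7 := sub_ne_zero.2 h3
    rw [h5, h6]
    field_simp
    ring)
  refine ⟨c, ?_, f, k, fun z hz => hc1 z (by simpa using hz.trans hR'),
    fun z hz => hc2 z (by simpa using hz.trans hR'), k0⟩
  rintro rfl
  -- if the constant is zero then `F` is locally constant at `p`
  have hev : ∀ᶠ z in 𝓝 p, F z = F p := by
    have hcont : ContinuousAt (fun z => f z * (z - p) + 1) p :=
      (((df.differentiableAt (isOpen_ball.mem_nhds hpR)).continuousAt).mul
        (continuousAt_id.sub continuousAt_const)).add continuousAt_const
    filter_upwards [hcont.eventually_ne (show f p * (p - p) + 1 ≠ 0 by simp),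
      isOpen_ball.mem_nhds hpR] with z hz hzR
    by_cases hzp : z = p
    · rw [hzp]
    have h1 := hc1 z hzR
    simp only [dslope_of_ne _ hzp, slope_def_field] at h1
    have h2 := sub_ne_zero.2 hzp
    have h3 : (F z - F p) * (f z * (z - p) + 1) = 0 := by
      field_simp at h1
      linear_combination h1
    exact sub_eq_zero.1 ((mul_eq_zero.1 h3).resolve_right hz)
  exact hW.not_const hG (by simpa using hp.trans hW.one_lt : p ∈ ball (0 : ℂ) R) hev

theorem Welding.injOn {τ σ F h : ℂ → ℂ} {U V : Set ℂ} {R : ℝ} (hG : Gluing τ σ U V)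
    (hW : Welding τ F h R) : InjOn F (ball 0 1) := by
  intro q hq p hp hqp
  obtain ⟨c, hc, f, k, h1, -, -⟩ := hW.exists_const hG (p := p) (by simpa using hp)
  by_contra hne
  have := h1 q (by simpa using hq)
  rw [hqp, dslope_of_ne _ hne, slope_def_field, hqp] at this
  exact hc (by rw [← this]; simp)

theorem Welding.disjoint {τ σ F h : ℂ → ℂ} {U V : Set ℂ} {R : ℝ} (hG : Gluing τ σ U V)
    (hW : Welding τ F h R) {p q : ℂ} (hp : ‖p‖ < 1) (hq : ‖q‖ < 1) (hq0 : q ≠ 0) :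
    F p ≠ q⁻¹ + h q := by
  intro heq
  obtain ⟨c, hc, f, k, -, h1, k0⟩ := hW.exists_const hG hp
  have := h1 q hq
  rw [heq, dslope_of_ne _ hq0, slope_def_field, k0] at this
  apply hc
  rw [← this]
  field_simp
  ring

/-- Injectivity on the `ζ`-disc, where the pole of the welding requires separate bookkeeping. -/
theorem Welding.injOn' {τ σ F h : ℂ → ℂ} {U V : Set ℂ} {R : ℝ} (hG : Gluing τ σ U V)
    (hW : Welding τ F h R) : InjOn (fun ζ => ζ⁻¹ + h ζ) (ball 0 1 \ {0}) := by
  rintro q ⟨hq, hq0⟩ p ⟨hp, hp0⟩ hqp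
  simp only [mem_ball_zero_iff, mem_singleton_iff] at hq hq0 hp hp0 hqp
  by_contra hne
  obtain ⟨R', hR', hle, f, k, df, dk, k0, hs⟩ := hG.cousin_min (a := fun z => (τ z - p)⁻¹) (by
    filter_upwards [hG.eventually_differentiableAt,
      hG.tendsto.eventually (eventually_ne_sphere hp)] with z hz hz0
    exact (hz.sub_const p).inv (sub_ne_zero.2 hz0)) hW.one_lt
  have hpR : p ∈ ball (0 : ℂ) R' := by simpa using hp.trans hR'
  have hqR : q ∈ ball (0 : ℂ) R' := by simpa using hq.trans hR'
  have dF := hW.diffF.mono (ball_subset_ball (x := (0 : ℂ)) hle)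
  have dh := hW.diffh.mono (ball_subset_ball (x := (0 : ℂ)) hle)
  -- The pole of the first factor cancels against a zero of the second one, and conversely.
  set c₀ : ℂ := p⁻¹ + h p with hc₀
  set N : ℂ → ℂ := fun ζ => 1 + ζ * (h ζ - c₀) with hN
  set K : ℂ → ℂ := fun ζ => (ζ - p) * (k ζ + p⁻¹) + 1 with hK
  have dN : DifferentiableOn ℂ N (ball 0 R') :=
    (differentiableOn_id.mul (dh.sub_const c₀)).const_add 1
  have dK : DifferentiableOn ℂ K (ball 0 R') :=
    ((differentiableOn_id.sub_const p).mul (dk.add_const p⁻¹)).add_const 1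
  have Np : N p = 0 := by simp only [hN, hc₀]; field_simp; ring
  have Nq : N q = 0 := by simp only [hN, ← hqp]; field_simp; ring
  have K0 : K 0 = 0 := by simp only [hK, k0]; field_simp; ring
  obtain ⟨c, -, hc2⟩ := hG.eq_const hR' (f := fun z => (F z - c₀) * (f z + p⁻¹))
    ((dF.sub_const _).mul (df.add_const _))
    hR' (h := fun ζ => dslope N p ζ * dslope K 0 ζ)
    (((Complex.differentiableOn_dslope (isOpen_ball.mem_nhds hpR)).2 dN).mul
      ((Complex.differentiableOn_dslope (ball_mem_nhds 0 (by linarith))).2 dK)) (by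
    filter_upwards [hs, hW.seam, hG.tendsto.eventually (eventually_ne_sphere hp),
      hG.tendsto.eventually (eventually_ne_sphere (p := 0) (by simp))] with z h1 h2 h3 h4
    rw [dslope_of_ne _ h3, dslope_of_ne _ h4, slope_def_field, slope_def_field, K0, Np]
    have h5 : f z = k (τ z) + (τ z - p)⁻¹ := by rw [← h1]; ring
    have h7 := sub_ne_zero.2 h3
    rw [h5, h2]
    simp only [hN, hK]
    field_simp
    ring)
  have hc : c = 0 := by
    rw [← hc2 q hqR, dslope_of_ne _ hne, slope_def_field, Np, Nq]; simp
  refine hW.numerator_ne (c := c₀) (by simpa using hp.trans hW.one_lt : p ∈ ball (0 : ℂ) R) ?_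
  have hKp : K p ≠ 0 := by simp [hK]
  filter_upwards [(dK.differentiableAt (isOpen_ball.mem_nhds hpR)).continuousAt.eventually_ne hKp,
    isOpen_ball.mem_nhds hpR] with ζ h1 h2
  by_cases h3 : ζ = p
  · rw [h3]; exact Np
  by_cases h4 : ζ = 0
  · exact absurd (h4 ▸ K0) h1
  have := hc2 ζ h2
  simp only [dslope_of_ne _ h3, dslope_of_ne _ h4, slope_def_field, K0, Np, hc, sub_zero] at this
  rcases mul_eq_zero.1 this with h5 | h5
  · exact (div_eq_zero_iff.1 h5).resolve_right (sub_ne_zero.2 h3)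
  · exact absurd ((div_eq_zero_iff.1 h5).resolve_right h4) h1

/-! ### The area theorem for the welding -/

lemma norm_exp_ofReal (x : ℝ) : ‖Complex.exp (x * Complex.I)‖ = 1 := Complex.norm_exp_ofReal_mul_I x

lemma continuous_circleExp : Continuous fun x : ℝ => Complex.exp (x * Complex.I) := by fun_prop

lemma integral_circleExp_zpow {k : ℤ} (hk : k ≠ 0) :
    ∫ x in (0 : ℝ)..2 * Real.pi, Complex.exp (x * Complex.I) ^ k = 0 := by
  have h1 : ∀ x : ℝ, Complex.exp (x * Complex.I) ^ k = Complex.exp ((k * Complex.I) * x) := by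
    intro x
    rw [← Complex.exp_int_mul]
    congr 1; ring
  have hc : (k * Complex.I : ℂ) ≠ 0 := mul_ne_zero (by exact_mod_cast hk) Complex.I_ne_zero
  simp_rw [h1]
  rw [integral_exp_mul_complex hc]
  have h2 : (k * Complex.I : ℂ) * ((2 * Real.pi : ℝ) : ℂ) = k * (2 * Real.pi * Complex.I) := by
    push_cast; ring
  rw [h2, Complex.exp_int_mul_two_pi_mul_I]
  simp

lemma hasSum_of_eq {f g : ℕ → ℂ} {a : ℂ} (h : ∀ n, f n = g n) (hg : HasSum g a) : HasSum f a := by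
  rwa [funext h]

/-- Termwise integration of an absolutely convergent trigonometric series. -/
lemma hasSum_integral_circle {b : ℕ → ℂ} (hb : Summable b) {φ g : ℝ → ℂ} (hφ : Continuous φ)
    (hg : ∀ x : ℝ, HasSum (fun n => b n * Complex.exp (x * Complex.I) ^ n) (g x)) :
    HasSum (fun n => b n * ∫ x in (0 : ℝ)..2 * Real.pi, φ x * Complex.exp (x * Complex.I) ^ n)
      (∫ x in (0 : ℝ)..2 * Real.pi, φ x * g x) := by
  have hb' : Summable fun n => ‖b n‖ := hb.norm
  have h1 := intervalIntegral.hasSum_integral_of_dominated_convergence (a := 0)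
    (b := 2 * Real.pi) (μ := MeasureTheory.volume)
    (F := fun n (x : ℝ) => φ x * (b n * Complex.exp (x * Complex.I) ^ n))
    (f := fun x => φ x * g x) (fun n x => ‖b n‖ * ‖φ x‖)
    (fun n => (by fun_prop : Continuous fun x : ℝ =>
      φ x * (b n * Complex.exp (x * Complex.I) ^ n)).aestronglyMeasurable)
    (fun n => Eventually.of_forall fun x _ => by
      rw [norm_mul, norm_mul, norm_pow, norm_exp_ofReal, one_pow, mul_one, mul_comm])
    (Eventually.of_forall fun x _ => hb'.mul_right _)
    (by
      simp_rw [tsum_mul_right]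
      exact (by fun_prop : Continuous fun x => (∑' n, ‖b n‖) * ‖φ x‖).intervalIntegrable _ _)
    (Eventually.of_forall fun x _ => (hg x).mul_left _)
  refine hasSum_of_eq (fun n => ?_) h1
  rw [← intervalIntegral.integral_const_mul]
  congr 1
  ext x
  ring

/-- The Fourier coefficients of a power series on the unit circle. -/
lemma integral_zpow_mul_series {b : ℕ → ℂ} (hb : Summable b) {g : ℝ → ℂ}
    (hg : ∀ x : ℝ, HasSum (fun n => b n * Complex.exp (x * Complex.I) ^ n) (g x)) (m : ℤ) :
    ∫ x in (0 : ℝ)..2 * Real.pi, Complex.exp (x * Complex.I) ^ (-m) * g x =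
      2 * Real.pi * (if 0 ≤ m then b m.toNat else 0) := by
  have h1 := hasSum_integral_circle hb (φ := fun x : ℝ => Complex.exp (x * Complex.I) ^ (-m))
    (by
      have : ∀ x : ℝ, Complex.exp (x * Complex.I) ^ (-m) = Complex.exp ((-m : ℤ) * (x * Complex.I)) :=
        fun x => by rw [Complex.exp_int_mul]
      simp_rw [this]
      fun_prop) hg
  have h2 : ∀ n : ℕ, ∫ x in (0 : ℝ)..2 * Real.pi,
      Complex.exp (x * Complex.I) ^ (-m) * Complex.exp (x * Complex.I) ^ n =
      if (n : ℤ) = m then (2 * Real.pi : ℂ) else 0 := by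
    intro n
    have h3 : ∀ x : ℝ, Complex.exp (x * Complex.I) ^ (-m) * Complex.exp (x * Complex.I) ^ n =
        Complex.exp (x * Complex.I) ^ ((n : ℤ) - m) := by
      intro x
      rw [← zpow_natCast, ← zpow_add₀ (Complex.exp_ne_zero _)]
      congr 1; ring
    simp_rw [h3]
    split_ifs with h
    · rw [h, sub_self]; simp
    · exact integral_circleExp_zpow (sub_ne_zero.2 h)
  simp_rw [h2] at h1
  refine h1.unique ?_
  split_ifs with h
  · obtain ⟨k, rfl⟩ := Int.eq_ofNat_of_zero_le h
    have := hasSum_ite_eq k (2 * Real.pi * b k : ℂ)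
    simp only [Int.toNat_natCast]
    convert this using 2 with n
    by_cases hn : n = k
    · subst hn; simp; ring
    · simp [hn]
  · have : (fun n : ℕ => b n * if (n : ℤ) = m then (2 * Real.pi : ℂ) else 0) = fun _ => 0 := by
      ext n
      rw [if_neg (by intro hn; exact h (hn ▸ Int.natCast_nonneg n)), mul_zero]
    rw [this, mul_zero]
    exact hasSum_zero

/-- The Taylor coefficients at the origin. -/
noncomputable def tc (f : ℂ → ℂ) (n : ℕ) : ℂ := (n.factorial : ℂ)⁻¹ * iteratedDeriv n f 0

lemma hasSum_tc {f : ℂ → ℂ} {R : ℝ} (hf : DifferentiableOn ℂ f (ball 0 R)) {z : ℂ}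
    (hz : ‖z‖ < R) : HasSum (fun n => tc f n * z ^ n) (f z) := by
  have := Complex.hasSum_taylorSeries_on_ball hf (show z ∈ ball (0 : ℂ) R by simpa using hz)
  refine hasSum_of_eq (fun n => ?_) this
  simp [tc]; ring

lemma hasSum_tc_deriv {f : ℂ → ℂ} {R : ℝ} (hf : DifferentiableOn ℂ f (ball 0 R)) {z : ℂ}
    (hz : ‖z‖ < R) : HasSum (fun n => (n * tc f n) * z ^ n) (z * deriv f z) := by
  have h1 := (hasSum_tc (hf.deriv isOpen_ball) hz).mul_left z
  rw [← hasSum_nat_add_iff' 1]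
  simp only [Finset.range_one, Finset.sum_singleton, Nat.cast_zero, zero_mul, sub_zero]
  refine hasSum_of_eq (fun n => ?_) h1
  simp only [tc, iteratedDeriv_succ', Nat.factorial_succ]
  have : (n.factorial : ℂ) ≠ 0 := by exact_mod_cast n.factorial_ne_zero
  have : ((n + 1 : ℕ) : ℂ) ≠ 0 := by exact_mod_cast n.succ_ne_zero
  push_cast at *
  field_simp
  ring

/-- The area enclosed by the image of the circle, in terms of Taylor coefficients. -/
lemma hasSum_area {f : ℂ → ℂ} {R : ℝ} (hR : 1 < R) (hf : DifferentiableOn ℂ f (ball 0 R)) :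
    HasSum (fun n : ℕ => ((2 * Real.pi * (n * ‖tc f n‖ ^ 2) : ℝ) : ℂ))
      (∫ x in (0 : ℝ)..2 * Real.pi, (starRingEnd ℂ) (f (Complex.exp (x * Complex.I))) *
        (Complex.exp (x * Complex.I) * deriv f (Complex.exp (x * Complex.I)))) := by
  have hc : Continuous fun x : ℝ => f (Complex.exp (x * Complex.I)) :=
    hf.continuousOn.comp_continuous continuous_circleExp fun x => by
      rw [mem_ball_zero_iff, norm_exp_ofReal]; exact hR
  have hs : Summable fun n : ℕ => (n * tc f n) := by
    simpa using (hasSum_tc_deriv hf (z := 1) (by simpa using hR)).summable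
  have hs0 : Summable fun n : ℕ => tc f n := by
    simpa using (hasSum_tc hf (z := 1) (by simpa using hR)).summable
  have h1 := hasSum_integral_circle hs
    (φ := fun x : ℝ => (starRingEnd ℂ) (f (Complex.exp (x * Complex.I))))
    (Complex.continuous_conj.comp hc) (fun x => hasSum_tc_deriv hf (by rwa [norm_exp_ofReal]))
  refine hasSum_of_eq (fun n => ?_) h1
  have h2 := integral_zpow_mul_series hs0
    (g := fun x => f (Complex.exp (x * Complex.I)))
    (fun x => hasSum_tc hf (by rwa [norm_exp_ofReal])) n
  simp only [Int.natCast_nonneg, if_true, Int.toNat_natCast] at h2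
  have h3 : ∫ x in (0 : ℝ)..2 * Real.pi, (starRingEnd ℂ) (f (Complex.exp (x * Complex.I))) *
      Complex.exp (x * Complex.I) ^ n = 2 * Real.pi * (starRingEnd ℂ) (tc f n) := by
    have h4 := congrArg (starRingEnd ℂ) h2
    rw [← intervalIntegral.intervalIntegral_conj] at h4
    simp only [map_mul, Complex.conj_ofReal, map_ofNat] at h4
    rw [← h4]
    congr 1
    ext x
    rw [mul_comm]
    congr 1
    rw [map_zpow₀, ← Complex.exp_conj]
    simp only [map_mul, Complex.conj_ofReal, Complex.conj_I]
    rw [zpow_neg, zpow_natCast, mul_neg, Complex.exp_neg, inv_pow, inv_inv]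
  rw [h3]
  push_cast
  rw [← Complex.mul_conj']
  ring

/-- A reparametrised circle: the derivative in `hasSum_area` as a derivative along the circle. -/
lemma hasDerivAt_circle {f : ℂ → ℂ} {x : ℝ}
    (hf : DifferentiableAt ℂ f (Complex.exp (x * Complex.I))) :
    HasDerivAt (fun x : ℝ => f (Complex.exp (x * Complex.I)))
      (Complex.I * (Complex.exp (x * Complex.I) * deriv f (Complex.exp (x * Complex.I)))) x := by
  have h1 : HasDerivAt (fun z : ℂ => Complex.exp (z * Complex.I))
      (Complex.exp (x * Complex.I) * (1 * Complex.I)) (x : ℂ) :=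
    ((hasDerivAt_id (x : ℂ)).mul_const Complex.I).cexp
  have h2 := (hf.hasDerivAt.comp (x : ℂ) h1).comp_ofReal
  refine h2.congr_deriv ?_
  ring

lemma contDiff_lift {Q : ℂ → ℂ} (hQ : DifferentiableOn ℂ Q {0}ᶜ) {e : ℝ → ℝ}
    (he : ∀ x : ℝ, (e x : ℂ) = x + Q (Complex.exp (x * Complex.I))) : ContDiff ℝ 1 e := by
  have h1 : Differentiable ℂ fun z : ℂ => z + Q (Complex.exp (z * Complex.I)) := fun z =>
    differentiableAt_id.add (DifferentiableAt.comp z (g := Q)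
      (f := fun z : ℂ => Complex.exp (z * Complex.I)) (hQ.differentiableAt
      (isOpen_compl_singleton.mem_nhds (Complex.exp_ne_zero _))) (by fun_prop))
  have h2 : ContDiff ℝ 1 fun z : ℂ => z + Q (Complex.exp (z * Complex.I)) :=
    h1.contDiff.restrict_scalars ℝ
  have h3 := (Complex.reCLM.contDiff (n := 1)).comp (h2.comp (Complex.ofRealCLM.contDiff (n := 1)))
  convert h3 using 1
  ext x
  simp only [Function.comp_apply, Complex.ofRealCLM_apply, ← he, Complex.reCLM_apply,
    Complex.ofReal_re]

lemma lift_add_two_pi {Q : ℂ → ℂ} {e : ℝ → ℝ}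
    (he : ∀ x : ℝ, (e x : ℂ) = x + Q (Complex.exp (x * Complex.I))) (x : ℝ) :
    e (x + 2 * Real.pi) = e x + 2 * Real.pi := by
  have h1 := he (x + 2 * Real.pi)
  have h2 : Complex.exp (((x + 2 * Real.pi : ℝ) : ℂ) * Complex.I) = Complex.exp (x * Complex.I) := by
    push_cast
    rw [add_mul]
    exact Complex.exp_periodic _
  rw [h2] at h1
  have h3 := he x
  apply Complex.ofReal_injective
  rw [h1]; push_cast; rw [h3]; ring

lemma Welding.circle {Q F h : ℂ → ℂ} {R : ℝ} (hW : Welding (tauOf Q) F h R) {e : ℝ → ℝ}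
    (he : ∀ x : ℝ, (e x : ℂ) = x + Q (Complex.exp (x * Complex.I))) (x : ℝ) :
    F (Complex.exp (x * Complex.I)) =
      (Complex.exp (((-e x : ℝ) : ℂ) * Complex.I))⁻¹ + h (Complex.exp (((-e x : ℝ) : ℂ) * Complex.I)) := by
  have := (eventually_nhdsSet_iff_forall.1 hW.seam (Complex.exp (x * Complex.I))
    (by simp)).self_of_nhds
  rw [this, tauOf_exp, ← he]
  push_cast
  rw [neg_mul]

lemma conj_circleExp (x : ℝ) :
    (starRingEnd ℂ) (Complex.exp (x * Complex.I)) = (Complex.exp (x * Complex.I))⁻¹ := by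
  rw [← Complex.exp_conj, ← Complex.exp_neg]
  simp

lemma integral_four {p q r : ℝ → ℂ} (hp : Continuous p) (hq : Continuous q) (hr : Continuous r)
    (iq : ∫ x in (0 : ℝ)..2 * Real.pi, q x = 0) (ir : ∫ x in (0 : ℝ)..2 * Real.pi, r x = 0) :
    ∫ x in (0 : ℝ)..2 * Real.pi, Complex.I * ((p x - q x) + (r x - 1)) =
      Complex.I * ((∫ x in (0 : ℝ)..2 * Real.pi, p x) - 2 * Real.pi) := by
  have h1 := hp.intervalIntegrable (μ := MeasureTheory.volume) 0 (2 * Real.pi)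
  have h2 := hq.intervalIntegrable (μ := MeasureTheory.volume) 0 (2 * Real.pi)
  have h3 := hr.intervalIntegrable (μ := MeasureTheory.volume) 0 (2 * Real.pi)
  have h4 := (continuous_const (y := (1 : ℂ))).intervalIntegrable (μ := MeasureTheory.volume) 0
    (2 * Real.pi)
  rw [intervalIntegral.integral_const_mul, intervalIntegral.integral_add (h1.sub h2) (h3.sub h4),
    intervalIntegral.integral_sub h1 h2, intervalIntegral.integral_sub h3 h4, iq, ir]
  simp
  ring

/-- The area theorem: the area enclosed by the seam is `π (1 - ∑ n |bₙ|²)`, where `bₙ` are the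
coefficients of `h`, and it is also the non-negative quantity `π ∑ n |aₙ|²`. -/
theorem Welding.coeff_le {Q F h : ℂ → ℂ} {R : ℝ} (hW : Welding (tauOf Q) F h R)
    (hQ : DifferentiableOn ℂ Q {0}ᶜ) {e : ℝ → ℝ}
    (he : ∀ x : ℝ, (e x : ℂ) = x + Q (Complex.exp (x * Complex.I))) (n : ℕ) :
    n * ‖tc h n‖ ^ 2 ≤ 1 := by
  have hR := hW.one_lt
  have hcR : ∀ x : ℝ, Complex.exp (x * Complex.I) ∈ ball (0 : ℂ) R := fun x => by
    rw [mem_ball_zero_iff, norm_exp_ofReal]; exact hR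
  have aF := hasSum_area hR hW.diffF
  have ah := hasSum_area hR hW.diffh
  have hF := fun x : ℝ => hasDerivAt_circle (hW.diffF.differentiableAt (isOpen_ball.mem_nhds (hcR x)))
  have hh := fun x : ℝ => hasDerivAt_circle (hW.diffh.differentiableAt (isOpen_ball.mem_nhds (hcR x)))
  set w : ℝ → ℂ := fun x => (Complex.exp (x * Complex.I))⁻¹ + h (Complex.exp (x * Complex.I)) with hw
  set w' : ℝ → ℂ := fun x => Complex.I * (-(Complex.exp (x * Complex.I))⁻¹ +
    Complex.exp (x * Complex.I) * deriv h (Complex.exp (x * Complex.I))) with hw'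
  have dw : ∀ x, HasDerivAt w (w' x) x := by
    intro x
    have h1 : HasDerivAt (fun z : ℂ => Complex.exp (-(z * Complex.I)))
        (Complex.exp (-(x * Complex.I)) * -(1 * Complex.I)) (x : ℂ) :=
      ((hasDerivAt_id (x : ℂ)).mul_const Complex.I).neg.cexp
    have h2 := h1.comp_ofReal.add (hh x)
    simp only [Complex.exp_neg] at h2
    refine h2.congr_deriv ?_
    simp only [hw']; ring
  have ch : Continuous fun x : ℝ => h (Complex.exp (x * Complex.I)) :=
    hW.diffh.continuousOn.comp_continuous continuous_circleExp hcR
  have ch' : Continuous fun x : ℝ => deriv h (Complex.exp (x * Complex.I)) :=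
    (hW.diffh.deriv isOpen_ball).continuousOn.comp_continuous continuous_circleExp hcR
  have cinv : Continuous fun x : ℝ => (Complex.exp (x * Complex.I))⁻¹ :=
    continuous_circleExp.inv₀ fun x => Complex.exp_ne_zero _
  have cw : Continuous w := cinv.add ch
  have cw' : Continuous w' := continuous_const.mul (cinv.neg.add (continuous_circleExp.mul ch'))
  have cexp := continuous_circleExp
  set D : ℝ → ℂ := fun x => (starRingEnd ℂ) (w x) * w' x with hD
  have cD : Continuous D := (Complex.continuous_conj.comp cw).mul cw'
  have ce := contDiff_lift hQ he
  have de : ∀ x, HasDerivAt (fun x => -e x) (-deriv e x) x := fun x =>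
    ((ce.differentiable one_ne_zero) x).hasDerivAt.neg
  have ce' : Continuous fun x => -deriv e x := (ce.continuous_deriv le_rfl).neg
  have hu : ∀ x : ℝ, F (Complex.exp (x * Complex.I)) = w (-e x) := fun x => by
    rw [hW.circle he]
  -- the substitution along the seam reverses the orientation
  have key : Complex.I * (∫ x in (0 : ℝ)..2 * Real.pi,
      (starRingEnd ℂ) (F (Complex.exp (x * Complex.I))) *
        (Complex.exp (x * Complex.I) * deriv F (Complex.exp (x * Complex.I)))) =
      -∫ x in (0 : ℝ)..2 * Real.pi, D x := by
    have h1 := intervalIntegral.integral_deriv_smul_comp (a := 0) (b := 2 * Real.pi)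
      (fun x _ => de x) ce'.continuousOn cD
    have h2 : -e (2 * Real.pi) = -e 0 - 2 * Real.pi := by
      have := lift_add_two_pi he 0
      rw [zero_add] at this; rw [this]; ring
    have hper : Function.Periodic D (2 * Real.pi) := by
      intro x
      have h3 : Complex.exp (((x + 2 * Real.pi : ℝ) : ℂ) * Complex.I) =
          Complex.exp (x * Complex.I) := by
        push_cast
        rw [add_mul]
        exact Complex.exp_periodic _
      simp only [hD, hw, hw', h3]
    have h4 := hper.intervalIntegral_add_eq (-e 0 - 2 * Real.pi) 0
    rw [sub_add_cancel, zero_add] at h4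
    rw [h2, intervalIntegral.integral_symm (-e 0 - 2 * Real.pi), h4] at h1
    rw [← h1, ← intervalIntegral.integral_const_mul]
    congr 1
    ext x
    have h5 : HasDerivAt (fun x : ℝ => F (Complex.exp (x * Complex.I))) (-deriv e x • w' (-e x)) x := by
      have h6 := (dw (-e x)).scomp x (de x)
      have h7 : (fun x : ℝ => F (Complex.exp (x * Complex.I))) = w ∘ fun x => -e x := funext hu
      rw [h7]; exact h6
    have h8 := (hF x).unique h5
    simp only [Function.comp_apply, hD, hu]
    rw [mul_left_comm, h8]
    simp only [Complex.real_smul]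
    ring
  have s1 : Summable fun n : ℕ => (n * tc h n) := by
    simpa using (hasSum_tc_deriv hW.diffh (z := 1) (by simpa using hR)).summable
  have s0 : Summable fun n : ℕ => tc h n := by
    simpa using (hasSum_tc hW.diffh (z := 1) (by simpa using hR)).summable
  have i1 := integral_zpow_mul_series s1 (g := fun x : ℝ =>
    Complex.exp (x * Complex.I) * deriv h (Complex.exp (x * Complex.I)))
    (fun x => hasSum_tc_deriv hW.diffh (by rwa [norm_exp_ofReal])) (-1)
  have i0 := integral_zpow_mul_series s0 (g := fun x : ℝ => h (Complex.exp (x * Complex.I)))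
    (fun x => hasSum_tc hW.diffh (by rwa [norm_exp_ofReal])) (-1)
  simp only [neg_neg, zpow_one, Left.nonneg_neg_iff, Int.reduceLE, if_false, mul_zero] at i0 i1
  have i0' : ∫ x in (0 : ℝ)..2 * Real.pi, (starRingEnd ℂ) (h (Complex.exp (x * Complex.I))) *
      (Complex.exp (x * Complex.I))⁻¹ = 0 := by
    have h4 := congrArg (starRingEnd ℂ) i0
    rw [← intervalIntegral.intervalIntegral_conj, map_zero] at h4
    rw [← h4]
    congr 1
    ext x
    rw [map_mul, conj_circleExp, mul_comm]
  set J := ∫ x in (0 : ℝ)..2 * Real.pi, (starRingEnd ℂ) (h (Complex.exp (x * Complex.I))) *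
        (Complex.exp (x * Complex.I) * deriv h (Complex.exp (x * Complex.I))) with hJ
  have hDint : ∫ x in (0 : ℝ)..2 * Real.pi, D x = Complex.I * (J - 2 * Real.pi) := by
    have h1 : D = fun x : ℝ => Complex.I * (((starRingEnd ℂ) (h (Complex.exp (x * Complex.I))) *
        (Complex.exp (x * Complex.I) * deriv h (Complex.exp (x * Complex.I))) -
        (starRingEnd ℂ) (h (Complex.exp (x * Complex.I))) * (Complex.exp (x * Complex.I))⁻¹) +
        (Complex.exp (x * Complex.I) *
          (Complex.exp (x * Complex.I) * deriv h (Complex.exp (x * Complex.I))) - 1)) := by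
      ext x
      simp only [hD, hw, hw', map_add, map_inv₀, conj_circleExp, inv_inv]
      have := Complex.exp_ne_zero (x * Complex.I)
      field_simp
      ring
    have c1 := (Complex.continuous_conj.comp ch)
    have c2 := cexp.mul ch'
    rw [h1]
    exact integral_four (c1.mul c2) (c1.mul cinv) (cexp.mul c2) i0' i1
  rw [hDint] at key
  have key2 : (∫ x in (0 : ℝ)..2 * Real.pi,
      (starRingEnd ℂ) (F (Complex.exp (x * Complex.I))) *
        (Complex.exp (x * Complex.I) * deriv F (Complex.exp (x * Complex.I)))) =
      2 * Real.pi - J := by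
    apply mul_left_cancel₀ Complex.I_ne_zero
    rw [key]; ring
  rw [key2] at aF
  have rF := aF.mapL Complex.reCLM
  have rh := ah.mapL Complex.reCLM
  simp only [Complex.reCLM_apply, Complex.ofReal_re] at rF rh
  have p := Real.pi_pos
  have h9 : (0 : ℝ) ≤ (2 * Real.pi - J).re := rF.nonneg fun n => by positivity
  have h10 := le_hasSum rh n fun m _ => by positivity
  simp only [Complex.sub_re, Complex.mul_re, Complex.ofReal_re, Complex.re_ofNat, Complex.im_ofNat,
    zero_mul, sub_zero] at h9
  have : 2 * Real.pi * (n * ‖tc h n‖ ^ 2) ≤ 2 * Real.pi * 1 := by linarith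
  exact le_of_mul_le_mul_left this (by positivity)

/-- A universal bound for the regular part near the pole. -/
lemma Welding.norm_h_le {Q F h : ℂ → ℂ} {R : ℝ} (hW : Welding (tauOf Q) F h R)
    (hQ : DifferentiableOn ℂ Q {0}ᶜ) {e : ℝ → ℝ}
    (he : ∀ x : ℝ, (e x : ℂ) = x + Q (Complex.exp (x * Complex.I))) {ζ : ℂ} (hζ : ‖ζ‖ ≤ 1 / 2) :
    ‖h ζ‖ ≤ 1 := by
  have hs := hasSum_tc hW.diffh (z := ζ) (by linarith [hW.one_lt])
  have h0 : tc h 0 = 0 := by simp [tc, hW.h_zero]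
  rw [← hasSum_nat_add_iff' 1] at hs
  simp only [Finset.range_one, Finset.sum_singleton, h0, zero_mul, sub_zero] at hs
  have hb : ∀ n : ℕ, ‖tc h (n + 1) * ζ ^ (n + 1)‖ ≤ 1 / 2 * (1 / 2 : ℝ) ^ n := by
    intro n
    have h1 := hW.coeff_le hQ he (n + 1)
    have h2 : ‖tc h (n + 1)‖ ≤ 1 := by
      have : (1 : ℝ) ≤ (n + 1 : ℕ) := by push_cast; linarith [n.cast_nonneg (α := ℝ)]
      by_contra! hc
      nlinarith [norm_nonneg (tc h (n + 1))]
    rw [norm_mul, norm_pow, ← pow_succ']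
    calc _ ≤ 1 * (1 / 2 : ℝ) ^ (n + 1) := by gcongr
      _ = _ := one_mul _
  have h3 := hs.norm_le_of_bounded ((hasSum_geometric_of_lt_one (r := (1 / 2 : ℝ)) (by norm_num)
    (by norm_num)).mul_left (1 / 2)) hb
  norm_num at h3
  exact h3

/-- The maximum principle on the glued sphere with a disc around the pole removed. -/
theorem Welding.norm_le {τ σ F h : ℂ → ℂ} {U V : Set ℂ} {R : ℝ} (hG : Gluing τ σ U V)
    (hW : Welding τ F h R) (hh : ∀ ζ : ℂ, ‖ζ‖ ≤ 1 / 2 → ‖h ζ‖ ≤ 1) :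
    (∀ z : ℂ, ‖z‖ ≤ 1 → ‖F z‖ ≤ 3) ∧ ∀ ζ : ℂ, 1 / 2 ≤ ‖ζ‖ → ‖ζ‖ ≤ 1 → ‖ζ⁻¹ + h ζ‖ ≤ 3 := by
  have hR := hW.one_lt
  set G : ℂ → ℂ := fun ζ => ζ⁻¹ + h ζ with hGdef
  have hb1 : closedBall (0 : ℂ) 1 ⊆ ball 0 R := closedBall_subset_ball hR
  have dG : DifferentiableOn ℂ G (ball 0 R \ {0}) :=
    (differentiableOn_id.inv fun z hz => hz.2).add (hW.diffh.mono diff_subset)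
  obtain ⟨s, hs, hsmax⟩ := (isCompact_closedBall (0 : ℂ) 1).exists_isMaxOn
    ⟨0, mem_closedBall_self zero_le_one⟩ ((hW.diffF.continuousOn.mono hb1).norm)
  have hK : IsCompact (closedBall (0 : ℂ) 1 \ ball 0 (1 / 2)) :=
    (isCompact_closedBall _ _).diff isOpen_ball
  have hKsub : closedBall (0 : ℂ) 1 \ ball 0 (1 / 2) ⊆ ball 0 R \ {0} := fun z hz =>
    ⟨hb1 hz.1, fun h0 => hz.2 (by rw [mem_singleton_iff.1 h0]; exact mem_ball_self (by norm_num))⟩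
  obtain ⟨t, ht, htmax⟩ := hK.exists_isMaxOn ⟨1, by simp; norm_num⟩
    ((dG.continuousOn.mono hKsub).norm)
  have hsmax' : ∀ z : ℂ, ‖z‖ ≤ 1 → ‖F z‖ ≤ ‖F s‖ := fun z hz => hsmax (by simpa using hz)
  have htmax' : ∀ z : ℂ, 1 / 2 ≤ ‖z‖ → ‖z‖ ≤ 1 → ‖G z‖ ≤ ‖G t‖ := fun z hz hz1 =>
    htmax ⟨by simpa using hz1, by simpa using hz⟩
  have hs1 : ‖s‖ ≤ 1 := by simpa using hs
  have ht1 : ‖t‖ ≤ 1 := by simpa using ht.1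
  have ht2 : 1 / 2 ≤ ‖t‖ := by simpa using ht.2
  have htlt : ‖F s‖ < ‖G t‖ → ‖t‖ < 1 := by
    intro hlt
    refine lt_of_le_of_ne ht1 fun h1 => ?_
    have e1 := (eventually_nhdsSet_iff_forall.1
      (hG.eventually_symm (p := fun z ζ => F z = ζ⁻¹ + h ζ) hW.seam) t (by simpa using h1)).self_of_nhds
    have e2 : σ t ∈ sphere (0 : ℂ) 1 := hG.symm.mem_sphere (by simpa using h1)
    have e3 := hsmax' (σ t) (by simpa using (by simpa using e2 : ‖σ t‖ = 1).le)
    rw [e1] at e3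
    exact absurd e3 (not_le.2 hlt)
  have hsR : s ∈ ball (0 : ℂ) R := hb1 hs
  have main : ‖G t‖ ≤ 3 ∧ ‖F s‖ ≤ ‖G t‖ := by
    rcases le_or_gt ‖G t‖ ‖F s‖ with hle | hlt
    · -- the maximum cannot be attained in the `z`-disc
      exfalso
      refine hW.not_const hG hsR (c := F s) (Complex.eventually_eq_of_isLocalMax_norm ?_ ?_)
      · filter_upwards [isOpen_ball.mem_nhds hsR] with z hz
        exact hW.diffF.differentiableAt (isOpen_ball.mem_nhds hz)
      · rcases hs1.lt_or_eq with hlt | heq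
        · filter_upwards [isOpen_ball.mem_nhds (show s ∈ ball (0 : ℂ) 1 by simpa using hlt)]
            with z hz
          exact hsmax' z (by simpa using (mem_ball_zero_iff.1 hz).le)
        · have hsS : s ∈ sphere (0 : ℂ) 1 := by simpa using heq
          have hτs : ‖τ s‖ = 1 := hG.norm_eq s (hG.circU hsS) heq
          have c1 : ContinuousAt (fun z => ‖τ z‖) s :=
            ((hG.diffτ.differentiableAt (hG.openU.mem_nhds (hG.circU hsS))).continuousAt).norm
          filter_upwards [eventually_nhdsSet_iff_forall.1 hW.seam s hsS,
            hG.openU.mem_nhds (hG.circU hsS),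
            c1.eventually (lt_mem_nhds (show 1 / 2 < ‖τ s‖ by rw [hτs]; norm_num))] with z h1 h2 h3
          rcases le_or_gt ‖z‖ 1 with h4 | h4
          · exact hsmax' z h4
          · show ‖F z‖ ≤ ‖F s‖
            rw [h1]
            exact (htmax' _ h3.le (hG.norm_gt z h2 h4).le).trans hle
    · refine ⟨?_, hlt.le⟩
      have ht3 := htlt hlt
      by_contra! hcon
      have ht4 : 1 / 2 < ‖t‖ := by
        refine lt_of_le_of_ne ht2 fun h1 => ?_
        have : ‖G t‖ ≤ ‖t⁻¹‖ + ‖h t‖ := norm_add_le _ _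
        rw [norm_inv, ← h1] at this
        have := hh t h1.symm.le
        linarith
      have ht0 : t ≠ 0 := norm_pos_iff.1 (by linarith)
      have htR : t ∈ ball (0 : ℂ) R \ {0} := hKsub ht
      have hopen : IsOpen (ball (0 : ℂ) R \ {0}) := isOpen_ball.sdiff isClosed_singleton
      have hev : ∀ᶠ z in 𝓝 t, G z = G t := by
        refine Complex.eventually_eq_of_isLocalMax_norm ?_ ?_
        · filter_upwards [hopen.mem_nhds htR] with z hz
          exact dG.differentiableAt (hopen.mem_nhds hz)
        · filter_upwards [continuous_norm.continuousAt.eventually (lt_mem_nhds ht4),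
            continuous_norm.continuousAt.eventually (gt_mem_nhds ht3)] with z h1 h2
          exact htmax' z h1.le h2.le
      refine hW.numerator_ne (c := G t) htR.1 ?_
      filter_upwards [hev, isOpen_ne.mem_nhds ht0] with z h1 h2
      rw [← h1]
      simp only [hGdef]
      field_simp
      ring
  exact ⟨fun z hz => (hsmax' z hz).trans (main.2.trans main.1),
    fun z h1 h2 => (htmax' z h1 h2).trans main.1⟩

end PartialWelding

namespace PartialWelding

open Set Filter Topology Metric MeasureTheory

/-! ### Dirichlet energy -/

/-- `μ` dominates the Dirichlet energy of `V` on the discs in `S`, in the form in which it controls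
the derivative at the centre of a disc. -/
def Energy (V : ℂ → ℂ) (μ : Measure ℂ) (S : Set ℂ) : Prop :=
  ∀ (z : ℂ) (r : ℝ), 0 < r → ball z r ⊆ S → ‖deriv V z‖ ^ 2 * r ^ 2 ≤ μ.real (ball z r)

lemma Energy.restrict {V : ℂ → ℂ} {μ : Measure ℂ} {S T : Set ℂ} (h : Energy V μ S) (hT : T ⊆ S) :
    Energy V (μ.restrict T) T := fun z r hr hz => by
  rw [measureReal_restrict_apply measurableSet_ball, inter_eq_left.2 hz]
  exact h z r hr (hz.trans hT)

/-- The mean value inequality on circles. -/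
lemma circle_mean {V : ℂ → ℂ} {z : ℂ} {r ρ : ℝ} (hV : DifferentiableOn ℂ V (ball z r)) (hρ : 0 < ρ)
    (hρr : ρ < r) : ENNReal.ofReal (2 * Real.pi * ‖deriv V z‖ ^ 2) ≤
      ∫⁻ θ in Ioo (-Real.pi) Real.pi, ENNReal.ofReal (‖deriv V (circleMap z ρ θ)‖ ^ 2) := by
  have hd : DifferentiableOn ℂ (fun w => deriv V w ^ 2) (ball z r) :=
    (hV.deriv isOpen_ball).pow 2
  have hcl : DiffContOnCl ℂ (fun w => deriv V w ^ 2) (ball z |ρ|) := by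
    rw [abs_of_pos hρ]
    refine DifferentiableOn.diffContOnCl ?_
    rw [closure_ball z hρ.ne']
    exact hd.mono (closedBall_subset_ball hρr)
  have h1 := hcl.circleAverage
  rw [Real.circleAverage_def] at h1
  have hp : Function.Periodic (fun θ => deriv V (circleMap z ρ θ) ^ 2) (2 * Real.pi) := fun θ => by
    simp only [periodic_circleMap z ρ θ]
  have h2 : ∫ θ in (-Real.pi)..Real.pi, deriv V (circleMap z ρ θ) ^ 2
      = (2 * Real.pi : ℝ) • deriv V z ^ 2 := by
    have := hp.intervalIntegral_add_eq (-Real.pi) 0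
    rw [show -Real.pi + 2 * Real.pi = Real.pi by ring, zero_add] at this
    rw [this, ← h1, smul_smul, mul_inv_cancel₀ (by positivity), one_smul]
  have h3 : ‖∫ θ in Ioc (-Real.pi) Real.pi, deriv V (circleMap z ρ θ) ^ 2‖ₑ ≤ _ :=
    enorm_integral_le_lintegral_enorm _
  rw [← intervalIntegral.integral_of_le (by linarith [Real.pi_pos]), h2] at h3
  rw [restrict_Ioo_eq_restrict_Ioc]
  refine le_trans (le_of_eq ?_) (h3.trans (le_of_eq (lintegral_congr fun θ => ?_)))
  · rw [← ofReal_norm, norm_smul, norm_pow, Real.norm_of_nonneg (by positivity)]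
  · rw [← ofReal_norm, norm_pow]

/-- The mean value inequality on discs. -/
lemma area_mean {V : ℂ → ℂ} {z : ℂ} {r : ℝ} (hr : 0 < r) (hV : DifferentiableOn ℂ V (ball z r)) :
    ENNReal.ofReal (‖deriv V z‖ ^ 2 * r ^ 2) ≤
      ∫⁻ w in ball z r, ENNReal.ofReal (‖deriv V w‖ ^ 2) := by
  have hm : Measurable fun w => ENNReal.ofReal (‖deriv V w‖ ^ 2) :=
    ((measurable_deriv V).norm.pow_const 2).ennreal_ofReal
  have e1 : ∫⁻ w in ball z r, ENNReal.ofReal (‖deriv V w‖ ^ 2)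
      = ∫⁻ w, (ball z r).indicator (fun w => ENNReal.ofReal (‖deriv V w‖ ^ 2)) (z + w) := by
    rw [lintegral_add_left_eq_self (fun w => (ball z r).indicator
      (fun w => ENNReal.ofReal (‖deriv V w‖ ^ 2)) w) z, lintegral_indicator measurableSet_ball]
  rw [e1, ← Complex.lintegral_comp_polarCoord_symm]
  have hsub : Ioo (0 : ℝ) r ×ˢ Ioo (-Real.pi) Real.pi ⊆ polarCoord.target := by
    intro p hp
    exact ⟨hp.1.1, hp.2⟩
  refine le_trans ?_ (lintegral_mono_set hsub)
  have e2 : ∀ p ∈ Ioo (0 : ℝ) r ×ˢ Ioo (-Real.pi) Real.pi,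
      ENNReal.ofReal p.1 • (ball z r).indicator (fun w => ENNReal.ofReal (‖deriv V w‖ ^ 2))
        (z + Complex.polarCoord.symm p)
      = ENNReal.ofReal p.1 * ENNReal.ofReal (‖deriv V (circleMap z p.1 p.2)‖ ^ 2) := by
    intro p hp
    have hp1 : z + Complex.polarCoord.symm p = circleMap z p.1 p.2 := by
      rw [Complex.polarCoord_symm_apply, circleMap, Complex.exp_mul_I]
      push_cast; rfl
    rw [hp1, indicator_of_mem, smul_eq_mul]
    rw [mem_ball, dist_eq_norm, circleMap_sub_center, norm_circleMap_zero, abs_of_pos hp.1.1]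
    exact hp.1.2
  have hmeas : Measurable fun p : ℝ × ℝ =>
      ENNReal.ofReal p.1 * ENNReal.ofReal (‖deriv V (circleMap z p.1 p.2)‖ ^ 2) := by
    refine measurable_fst.ennreal_ofReal.mul (hm.comp ?_)
    unfold circleMap
    fun_prop
  rw [setLIntegral_congr_fun (measurableSet_Ioo.prod measurableSet_Ioo) e2, Measure.volume_eq_prod,
    ← Measure.prod_restrict, lintegral_prod _ hmeas.aemeasurable]
  have e3 : ∀ ρ ∈ Ioo (0 : ℝ) r, ENNReal.ofReal (ρ * (2 * Real.pi * ‖deriv V z‖ ^ 2)) ≤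
      ∫⁻ θ in Ioo (-Real.pi) Real.pi,
        ENNReal.ofReal ρ * ENNReal.ofReal (‖deriv V (circleMap z ρ θ)‖ ^ 2) := by
    intro ρ hρ
    rw [lintegral_const_mul' _ _ ENNReal.ofReal_ne_top, ENNReal.ofReal_mul hρ.1.le]
    gcongr
    exact circle_mean hV hρ.1 hρ.2
  refine le_trans ?_ (setLIntegral_mono' measurableSet_Ioo e3)
  rw [restrict_Ioo_eq_restrict_Ioc, ← ofReal_integral_eq_lintegral_ofReal]
  · rw [← intervalIntegral.integral_of_le hr.le, intervalIntegral.integral_mul_const, integral_id]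
    apply ENNReal.ofReal_le_ofReal
    have := Real.pi_gt_three
    have h0 : 0 ≤ ‖deriv V z‖ ^ 2 * r ^ 2 := by positivity
    nlinarith
  · exact (by fun_prop : Continuous fun ρ : ℝ => ρ * (2 * Real.pi * ‖deriv V z‖ ^ 2)).integrableOn_Ioc
  · filter_upwards [ae_restrict_mem measurableSet_Ioc] with ρ hρ
    have := hρ.1
    have := Real.pi_pos
    simp only [Pi.zero_apply]; positivity

lemma det_mul_complex (w : ℂ) :
    ((ContinuousLinearMap.toSpanSingleton ℂ w).restrictScalars ℝ).det = ‖w‖ ^ 2 := by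
  have h : (((ContinuousLinearMap.toSpanSingleton ℂ w).restrictScalars ℝ : ℂ →L[ℝ] ℂ) : ℂ →ₗ[ℝ] ℂ)
      = Algebra.lmul ℝ ℂ w := by
    ext; simp [mul_comm]
  rw [ContinuousLinearMap.det, h, ← Complex.normSq_eq_norm_sq, ← Algebra.norm_complex_apply]
  rfl

/-- An injective holomorphic map with image in `ball 0 3` has energy at most `9π`. -/
lemma exists_energy {V : ℂ → ℂ} {S : Set ℂ} (hS : IsOpen S) (hV : DifferentiableOn ℂ V S)
    (hinj : InjOn V S) (hb : ∀ z ∈ S, ‖V z‖ ≤ 3) :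
    ∃ μ : Measure ℂ, IsFiniteMeasure μ ∧ μ.real univ ≤ 9 * Real.pi ∧ Energy V μ S := by
  have hm : Measurable fun w => ENNReal.ofReal (‖deriv V w‖ ^ 2) :=
    ((measurable_deriv V).norm.pow_const 2).ennreal_ofReal
  have key : ∫⁻ w in S, ENNReal.ofReal (‖deriv V w‖ ^ 2) ≤ ENNReal.ofReal (9 * Real.pi) := by
    have h1 := lintegral_abs_det_fderiv_eq_addHaar_image (μ := (volume : Measure ℂ))
      (f := V) (s := S)
      (f' := fun z => (ContinuousLinearMap.toSpanSingleton ℂ (deriv V z)).restrictScalars ℝ)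
      hS.measurableSet (fun z hz =>
        ((hV.differentiableAt (hS.mem_nhds hz)).hasDerivAt.hasFDerivAt.restrictScalars
          ℝ).hasFDerivWithinAt) hinj
    simp only [det_mul_complex, abs_pow, abs_norm] at h1
    rw [h1]
    refine (measure_mono (t := closedBall (0 : ℂ) 3) ?_).trans ?_
    · rintro _ ⟨z, hz, rfl⟩
      simpa using hb z hz
    · rw [Complex.volume_closedBall, ← ENNReal.ofReal_pow (by norm_num)]
      rw [ENNReal.ofReal_mul (by norm_num), ← NNReal.coe_real_pi, ENNReal.ofReal_coe_nnreal]
      norm_num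
  set μ : Measure ℂ := (volume.restrict S).withDensity fun w => ENNReal.ofReal (‖deriv V w‖ ^ 2)
  have hu : μ univ ≤ ENNReal.ofReal (9 * Real.pi) := by
    rw [withDensity_apply _ MeasurableSet.univ, setLIntegral_univ]
    exact key
  have hfin : IsFiniteMeasure μ := ⟨hu.trans_lt ENNReal.ofReal_lt_top⟩
  refine ⟨μ, hfin, ENNReal.toReal_le_of_le_ofReal (by positivity) hu, fun z r hr hz => ?_⟩
  have h2 := area_mean hr (hV.mono hz)
  have h3 : μ (ball z r) = ∫⁻ w in ball z r, ENNReal.ofReal (‖deriv V w‖ ^ 2) := by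
    rw [withDensity_apply _ measurableSet_ball, Measure.restrict_restrict measurableSet_ball,
      inter_eq_left.2 hz]
  rw [← h3] at h2
  exact (ENNReal.ofReal_le_iff_le_toReal (measure_ne_top μ _)).1 h2

/-! ### Small rings around a boundary point -/

/-- A point at which a monotone function has Hölder behaviour with uniform constants: among the
four quarters of an interval, one has a threefold enlargement carrying at most `3/4` of the
variation over the threefold enlargement of the interval. -/
lemma exists_good_point {m : ℝ → ℝ} (hm : Monotone m) {A : ℝ} (hA : ∀ x y, m y - m x ≤ A) (p : ℝ)
    {l : ℝ} (hl : 0 < l) : ∃ a, p ≤ a ∧ a ≤ p + l ∧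
      ∀ j : ℕ, m (a + l / 4 ^ j) - m (a - l / 4 ^ j) ≤ A * (3 / 4) ^ j := by
  have step : ∀ q s : ℝ, 0 < s → ∃ q', q ≤ q' ∧ q' + s / 4 ≤ q + s ∧
      m (q' + 2 * (s / 4)) - m (q' - s / 4) ≤ 3 / 4 * (m (q + 2 * s) - m (q - s)) := by
    intro q s hs
    by_contra! hcon
    have h0 := hcon q le_rfl (by linarith)
    have h1 := hcon (q + s / 4) (by linarith) (by linarith)
    have h2 := hcon (q + s / 2) (by linarith) (by linarith)
    have h3 := hcon (q + 3 * s / 4) (by linarith) (by linarith)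
    ring_nf at h0 h1 h2 h3
    have c1 : m (q + s * (5 / 4)) ≤ m (q + s * 2) := hm (by linarith)
    have c2 : m (q + s) ≤ m (q + s * 2) := hm (by linarith)
    have c3 : m (q + s * (3 / 4)) ≤ m (q + s * 2) := hm (by linarith)
    have c4 : m (q - s) ≤ m (q + s * (-1 / 4)) := hm (by linarith)
    have c5 : m (q - s) ≤ m q := hm (by linarith)
    have c6 : m (q - s) ≤ m (q + s * (1 / 4)) := hm (by linarith)
    linarith
  choose! nxt n1 n2 n3 using step
  let q : ℕ → ℝ := fun j => Nat.rec p (fun j x => nxt x (l / 4 ^ j)) j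
  have hq0 : q 0 = p := rfl
  have hqs : ∀ j, q (j + 1) = nxt (q j) (l / 4 ^ j) := fun j => rfl
  have hpos : ∀ j : ℕ, 0 < l / 4 ^ j := fun j => by positivity
  have hdiv : ∀ j : ℕ, l / 4 ^ j / 4 = l / 4 ^ (j + 1) := fun j => by rw [pow_succ]; field_simp
  have mono : Monotone q := monotone_nat_of_le_succ fun j => by
    rw [hqs]; exact n1 _ _ (hpos j)
  have anti : Antitone fun j => q j + l / 4 ^ j := antitone_nat_of_succ_le fun j => by
    have := n2 (q j) _ (hpos j)
    rw [hdiv] at this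
    show q (j + 1) + l / 4 ^ (j + 1) ≤ _
    rw [hqs]; exact this
  have hbound : ∀ j, m (q j + 2 * (l / 4 ^ j)) - m (q j - l / 4 ^ j) ≤ A * (3 / 4) ^ j := by
    intro j
    induction j with
    | zero => simpa using hA _ _
    | succ j ih =>
      have := n3 (q j) _ (hpos j)
      rw [hdiv, ← hqs] at this
      calc _ ≤ _ := this
        _ ≤ 3 / 4 * (A * (3 / 4) ^ j) := by gcongr
        _ = _ := by ring
  have hle : ∀ i j, q i ≤ q j + l / 4 ^ j := fun i j => by
    have h1 := mono (le_max_left i j)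
    have h2 := anti (le_max_right i j)
    have h3 := hpos (max i j)
    simp only at h2
    linarith
  have hbdd : BddAbove (range q) := ⟨q 0 + l / 4 ^ 0, by rintro _ ⟨i, rfl⟩; exact hle i 0⟩
  refine ⟨⨆ j, q j, le_ciSup hbdd 0, ?_, fun j => ?_⟩
  · refine ciSup_le fun i => ?_
    simpa [hq0] using hle i 0
  · have h1 : q j ≤ ⨆ j, q j := le_ciSup hbdd j
    have h2 : ⨆ j, q j ≤ q j + l / 4 ^ j := ciSup_le fun i => hle i j
    refine le_trans ?_ (hbound j)
    have := hm (show (⨆ j, q j) + l / 4 ^ j ≤ q j + 2 * (l / 4 ^ j) by linarith)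
    have := hm (show q j - l / 4 ^ j ≤ (⨆ j, q j) - l / 4 ^ j by linarith)
    linarith

/-- The energy of a strip, as an increment of its distribution function. -/
lemma measureReal_ball_le {μ : Measure ℂ} [IsFiniteMeasure μ] {z : ℂ} {r u v : ℝ}
    (hr : 0 < r) (hu : u ≤ z.re - r) (hv : z.re + r ≤ v) :
    μ.real (ball z r) ≤ μ.real {w : ℂ | w.re ≤ v} - μ.real {w : ℂ | w.re ≤ u} := by
  have hms : ∀ t : ℝ, MeasurableSet {w : ℂ | w.re ≤ t} := fun t =>
    measurableSet_le Complex.measurable_re measurable_const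
  have habs : ∀ w ∈ ball z r, |w.re - z.re| < r := fun w hw => by
    have := Complex.abs_re_le_norm (w - z)
    rw [Complex.sub_re] at this
    exact this.trans_lt (mem_ball_iff_norm.1 hw)
  have hd : Disjoint (ball z r) {w : ℂ | w.re ≤ u} := by
    rw [Set.disjoint_left]
    intro w hw hwu
    have := (abs_lt.1 (habs w hw)).1
    have : w.re ≤ u := hwu
    linarith
  rw [le_sub_iff_add_le, ← measureReal_union hd (hms u)]
  refine measureReal_mono (union_subset (fun w hw => ?_) fun w hw => ?_)
  · have := (abs_lt.1 (habs w hw)).2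
    show w.re ≤ v
    linarith
  · have : w.re ≤ u := hw
    show w.re ≤ v
    linarith

/-- The mean value inequality on a coordinate rectangle, possibly degenerate. -/
lemma norm_sub_le_of_rect {V : ℂ → ℂ} {u v y₁ y₂ C : ℝ}
    (hV : ∀ z : ℂ, z.re ∈ Icc u v → z.im ∈ Icc y₁ y₂ → DifferentiableAt ℂ V z ∧ ‖deriv V z‖ ≤ C)
    {z w : ℂ} (hz : z.re ∈ Icc u v ∧ z.im ∈ Icc y₁ y₂) (hw : w.re ∈ Icc u v ∧ w.im ∈ Icc y₁ y₂) :
    ‖V w - V z‖ ≤ C * ‖w - z‖ := by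
  have hconv : Convex ℝ {z : ℂ | z.re ∈ Icc u v ∧ z.im ∈ Icc y₁ y₂} :=
    ((convex_Icc u v).linear_preimage Complex.reLm).inter
      ((convex_Icc y₁ y₂).linear_preimage Complex.imLm)
  exact hconv.norm_image_sub_le_of_norm_deriv_le (fun z hz => (hV z hz.1 hz.2).1)
    (fun z hz => (hV z hz.1 hz.2).2) hz hw

/-- Above a point where the energy has Hölder behaviour, `V` oscillates little along the vertical
segment: it is covered by discs of geometrically decreasing radii. -/
lemma vertical_le {V : ℂ → ℂ} {e : ℝ → ℝ} {μ : Measure ℂ} [IsFiniteMeasure μ] {T : Set ℂ} {M : ℝ}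
    (hM : 2 ≤ M) (hD : Dbl M univ e) (he : StrictMono e) (hc : Continuous e)
    (hV : ∀ z : ℂ, 0 ≤ z.im → DifferentiableAt ℂ V z) (hE : Energy V μ T) {a h B : ℝ} (hh : 0 < h)
    (hB : 0 ≤ B)
    (hm : ∀ j : ℕ, μ.real {w : ℂ | w.re ≤ e (a + h / 4 ^ j)}
      - μ.real {w : ℂ | w.re ≤ e (a - h / 4 ^ j)} ≤ B * (3 / 4) ^ j)
    (hT : ∀ z : ℂ, e (a - h) < z.re → z.re < e (a + h) → 0 < z.im →
      z.im < 2 * (e (a + h) - e a) → z ∈ T)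
    {y : ℝ} (hy0 : 0 ≤ y) (hy : y ≤ e (a + h) - e a) :
    ‖V ⟨e a, y⟩ - V ⟨e a, 0⟩‖ ≤ 16 * M ^ 2 * √B := by
  set lam : ℕ → ℝ := fun j => e (a + h / 4 ^ j) - e a with hlam
  have hpos : ∀ j : ℕ, 0 < h / 4 ^ j := fun j => by positivity
  have lpos : ∀ j, 0 < lam j := fun j => sub_pos.2 (he (by linarith [hpos j]))
  have hdiv : ∀ j : ℕ, h / 4 ^ j = 2 ^ 2 * (h / 4 ^ (j + 1)) := fun j => by
    rw [pow_succ]; field_simp; norm_num [pow_succ]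
  have lsucc : ∀ j, lam j ≤ M ^ 2 * lam (j + 1) := fun j =>
    (hD.iterate (by linarith) 2).1 a _ _ (mem_univ _) (mem_univ _) (by linarith [hpos (j + 1)])
      (by linarith [hdiv j, hpos (j + 1)]) (by linarith [hdiv j])
  have lanti : ∀ j, lam (j + 1) ≤ lam j := fun j =>
    sub_le_sub_right (he.monotone (by linarith [hdiv j, hpos (j + 1)])) _
  have lanti' : ∀ j, lam j ≤ lam 0 := fun j => antitone_nat_of_succ_le lanti (Nat.zero_le j)
  have hle : ∀ j : ℕ, h / 4 ^ j ≤ h := fun j => div_le_self hh.le (one_le_pow₀ (by norm_num))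
  have l0 : lam 0 = e (a + h) - e a := by simp [hlam]
  have lleft : ∀ j, lam j ≤ M ^ 2 * (e a - e (a - h / 4 ^ j)) := fun j => by
    have h1 := hD.1 (a - h / 4 ^ j) a (a + h / 4 ^ j) (mem_univ _) (mem_univ _)
      (by linarith [hpos j]) (by linarith [hpos j]) (by linarith)
    have h2 : 0 < e a - e (a - h / 4 ^ j) := sub_pos.2 (he (by linarith [hpos j]))
    have h3 := mul_le_mul_of_nonneg_right (show M ≤ M ^ 2 by nlinarith) h2.le
    simp only [hlam]
    linarith
  have M2 : 1 ≤ M ^ 2 := by nlinarith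
  -- the derivative along the `j`-th piece of the segment
  have hder : ∀ (j : ℕ) (t : ℝ), lam (j + 1) ≤ t → t ≤ lam j →
      ‖deriv V ⟨e a, t⟩‖ ≤ √B * (7 / 8) ^ j / (lam j / M ^ 2) := by
    intro j t ht1 ht2
    have hr : 0 < lam j / M ^ 2 := by have := lpos j; positivity
    have hr1 : lam j / M ^ 2 ≤ lam (j + 1) := (div_le_iff₀ (by linarith)).2 (by linarith [lsucc j])
    have hr2 : lam j / M ^ 2 ≤ e a - e (a - h / 4 ^ j) :=
      (div_le_iff₀ (by linarith)).2 (by linarith [lleft j])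
    have hr3 : lam j / M ^ 2 ≤ lam j := div_le_self (lpos j).le M2
    have hm1 : e (a + h / 4 ^ j) ≤ e (a + h) := he.monotone (by linarith [hle j])
    have hm2 : e (a - h) ≤ e (a - h / 4 ^ j) := he.monotone (by linarith [hle j])
    have hsub : ball (⟨e a, t⟩ : ℂ) (lam j / M ^ 2) ⊆ T := by
      intro w hw
      have h1 := (Complex.abs_re_le_norm (w - ⟨e a, t⟩)).trans_lt (mem_ball_iff_norm.1 hw)
      have h2 := (Complex.abs_im_le_norm (w - ⟨e a, t⟩)).trans_lt (mem_ball_iff_norm.1 hw)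
      simp only [Complex.sub_re, Complex.sub_im] at h1 h2
      rw [abs_lt] at h1 h2
      have h3 := lanti' j
      have h4 : lam j = e (a + h / 4 ^ j) - e a := rfl
      refine hT w ?_ ?_ ?_ ?_ <;> linarith [h1.1, h1.2, h2.1, h2.2]
    have h5 := hE _ _ hr hsub
    have h6 := measureReal_ball_le (μ := μ) (z := ⟨e a, t⟩) (r := lam j / M ^ 2)
      (u := e (a - h / 4 ^ j)) (v := e (a + h / 4 ^ j)) hr (by show _ ≤ e a - _; linarith)
      (by show e a + _ ≤ _; simp only [hlam] at hr3 ⊢; linarith)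
    have h7 : (3 / 4 : ℝ) ^ j ≤ ((7 / 8) ^ j) ^ 2 := by
      rw [← pow_mul, mul_comm j 2, pow_mul]; gcongr; norm_num
    have h8 : (‖deriv V ⟨e a, t⟩‖ * (lam j / M ^ 2)) ^ 2 ≤ (√B * (7 / 8) ^ j) ^ 2 := by
      rw [mul_pow, mul_pow, Real.sq_sqrt hB]
      exact (h5.trans (h6.trans (hm j))).trans (by gcongr)
    rw [le_div_iff₀ hr]
    exact (sq_le_sq₀ (by positivity) (by positivity)).1 h8
  have hstep : ∀ (j : ℕ) (t : ℝ), lam (j + 1) ≤ t → t ≤ lam j →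
      ‖V ⟨e a, t⟩ - V ⟨e a, lam j⟩‖ ≤ M ^ 2 * √B * (7 / 8) ^ j := by
    intro j t ht1 ht2
    have hl := lpos j
    have hl1 := lpos (j + 1)
    have h1 := norm_sub_le_of_rect (V := V) (u := e a) (v := e a) (y₁ := lam (j + 1)) (y₂ := lam j)
      (C := √B * (7 / 8) ^ j / (lam j / M ^ 2)) (fun z hz1 hz2 => by
        have : z = ⟨e a, z.im⟩ := Complex.ext (le_antisymm hz1.2 hz1.1) rfl
        exact ⟨hV z (hl1.le.trans hz2.1), by rw [this]; exact hder j _ hz2.1 hz2.2⟩)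
      (z := ⟨e a, lam j⟩) (w := ⟨e a, t⟩) ⟨⟨le_rfl, le_rfl⟩, ⟨lanti j, le_rfl⟩⟩
      ⟨⟨le_rfl, le_rfl⟩, ⟨ht1, ht2⟩⟩
    have h2 : ‖(⟨e a, t⟩ : ℂ) - ⟨e a, lam j⟩‖ ≤ lam j := by
      refine (Complex.norm_le_abs_re_add_abs_im _).trans ?_
      simp only [Complex.sub_re, Complex.sub_im, sub_self, abs_zero, zero_add]
      rw [abs_le]; constructor <;> linarith
    calc _ ≤ _ := h1
      _ ≤ √B * (7 / 8) ^ j / (lam j / M ^ 2) * lam j := by gcongr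
      _ = _ := by field_simp
  have hind : ∀ (n : ℕ) (t : ℝ), lam n ≤ t → t ≤ lam 0 →
      ‖V ⟨e a, t⟩ - V ⟨e a, lam 0⟩‖ ≤ 8 * M ^ 2 * √B * (1 - (7 / 8) ^ n) := by
    intro n
    induction n with
    | zero =>
      intro t h1 h2
      rw [le_antisymm h2 h1]; simp
    | succ n ih =>
      intro t h1 h2
      rcases le_total (lam n) t with h3 | h3
      · refine (ih t h3 h2).trans ?_
        have : (7 / 8 : ℝ) ^ (n + 1) ≤ (7 / 8) ^ n :=
          pow_le_pow_of_le_one (by norm_num) (by norm_num) (Nat.le_succ n)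
        gcongr
      · have h4 := ih (lam n) le_rfl (lanti' n)
        have h5 := hstep n t h1 h3
        calc _ ≤ ‖V ⟨e a, t⟩ - V ⟨e a, lam n⟩‖ + ‖V ⟨e a, lam n⟩ - V ⟨e a, lam 0⟩‖ :=
              norm_sub_le_norm_sub_add_norm_sub _ _ _
          _ ≤ _ := add_le_add h5 h4
          _ = _ := by ring
  have hlim : Tendsto lam atTop (𝓝 0) := by
    have h1 : Tendsto (fun j : ℕ => a + h / 4 ^ j) atTop (𝓝 (a + 0)) :=
      tendsto_const_nhds.add (tendsto_const_nhds.div_atTop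
        (tendsto_pow_atTop_atTop_of_one_lt (by norm_num)))
    have h2 := ((hc.tendsto _).comp h1).sub_const (e a)
    simpa using h2
  have hK : 0 ≤ 8 * M ^ 2 * √B := by positivity
  have hall : ∀ t, 0 < t → t ≤ lam 0 → ‖V ⟨e a, t⟩ - V ⟨e a, lam 0⟩‖ ≤ 8 * M ^ 2 * √B := by
    intro t h1 h2
    obtain ⟨n, hn⟩ := (hlim.eventually (gt_mem_nhds h1)).exists
    refine (hind n t hn.le h2).trans ?_
    have : (0 : ℝ) ≤ (7 / 8) ^ n := by positivity
    nlinarith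
  have hzero : ‖V ⟨e a, 0⟩ - V ⟨e a, lam 0⟩‖ ≤ 8 * M ^ 2 * √B := by
    have h1 : Tendsto (fun j => (⟨e a, lam j⟩ : ℂ)) atTop (𝓝 ⟨e a, 0⟩) := by
      have h0 : Tendsto (fun j => (e a : ℂ) + (lam j : ℂ) * Complex.I) atTop
          (𝓝 ((e a : ℂ) + ((0 : ℝ) : ℂ) * Complex.I)) :=
        tendsto_const_nhds.add (((Complex.continuous_ofReal.tendsto _).comp hlim).mul_const _)
      simpa only [Complex.mk_eq_add_mul_I] using h0
    have h2 := (((hV ⟨e a, 0⟩ le_rfl).continuousAt.tendsto.comp h1).sub_const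
      (V ⟨e a, lam 0⟩)).norm
    exact le_of_tendsto' h2 fun j => hall _ (lpos j) (lanti' j)
  rcases hy0.eq_or_lt with rfl | hy1
  · simp; positivity
  · have h1 := hall y hy1 (by rwa [l0])
    rw [norm_sub_rev] at hzero
    calc _ ≤ ‖V ⟨e a, y⟩ - V ⟨e a, lam 0⟩‖ + ‖V ⟨e a, lam 0⟩ - V ⟨e a, 0⟩‖ :=
          norm_sub_le_norm_sub_add_norm_sub _ _ _
      _ ≤ _ := by linarith

/-- Along the top side `V` is controlled by the energy of discs of comparable size. -/
lemma horizontal_le {V : ℂ → ℂ} {μ : Measure ℂ} [IsFiniteMeasure μ] {T : Set ℂ} {B u v η : ℝ}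
    (hη : 0 < η) (hV : ∀ z : ℂ, 0 ≤ z.im → DifferentiableAt ℂ V z) (hE : Energy V μ T)
    (hB : μ.real univ ≤ B)
    (hT : ∀ s ∈ Icc u v, ball (⟨s, η⟩ : ℂ) (η / 2) ⊆ T) {s : ℝ} (hs : s ∈ Icc u v) :
    ‖V ⟨s, η⟩ - V ⟨u, η⟩‖ ≤ √B * 2 / η * (v - u) := by
  have hB0 : 0 ≤ B := measureReal_nonneg.trans hB
  have hder : ∀ t ∈ Icc u v, ‖deriv V ⟨t, η⟩‖ ≤ √B * 2 / η := by
    intro t ht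
    have h1 := (hE _ _ (half_pos hη) (hT t ht)).trans
      ((measureReal_mono (subset_univ _)).trans hB)
    have h8 : (‖deriv V ⟨t, η⟩‖ * (η / 2)) ^ 2 ≤ (√B) ^ 2 := by
      rwa [mul_pow, Real.sq_sqrt hB0]
    have h9 := (sq_le_sq₀ (by positivity) (by positivity)).1 h8
    rw [le_div_iff₀ hη]; linarith
  have huv : u ≤ v := hs.1.trans hs.2
  have h1 := norm_sub_le_of_rect (V := V) (u := u) (v := v) (y₁ := η) (y₂ := η)
    (C := √B * 2 / η) (fun z hz1 hz2 => by
      have : z = ⟨z.re, η⟩ := Complex.ext rfl (le_antisymm hz2.2 hz2.1)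
      exact ⟨hV z (hη.le.trans hz2.1), by rw [this]; exact hder _ hz1⟩)
    (z := ⟨u, η⟩) (w := ⟨s, η⟩) ⟨⟨le_rfl, huv⟩, ⟨le_rfl, le_rfl⟩⟩ ⟨hs, ⟨le_rfl, le_rfl⟩⟩
  have h2 : ‖(⟨s, η⟩ : ℂ) - ⟨u, η⟩‖ ≤ v - u := by
    refine (Complex.norm_le_abs_re_add_abs_im _).trans ?_
    simp only [Complex.sub_re, Complex.sub_im, sub_self, abs_zero, add_zero]
    rw [abs_of_nonneg (by linarith [hs.1])]; linarith [hs.2]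
  exact h1.trans (by gcongr)

end PartialWelding

namespace PartialWelding

open Set Filter Topology Metric MeasureTheory ComplexConjugate

/-! ### Oscillation of glued pairs -/

/-- Two functions, holomorphic in a neighbourhood of the closed upper half-plane, which fit together
along the real line by means of `x ↦ e x`: the second one, transported to the lower half-plane by
complex conjugation, continues the first one. -/
structure Seam (V₁ V₂ : ℂ → ℂ) (e : ℝ → ℝ) (d : ℝ) : Prop where
  pos : 0 < d
  diff₁ : DifferentiableOn ℂ V₁ {z : ℂ | -d < z.im}
  diff₂ : DifferentiableOn ℂ V₂ {z : ℂ | -d < z.im}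
  glue : ∀ x : ℝ, V₁ x = conj (V₂ (e x))
  cross : ∀ x : ℝ, ∃ ψ : ℂ → ℂ, Tendsto ψ (𝓝 (x : ℂ)) (𝓝 (e x : ℂ)) ∧
    ∀ᶠ z in 𝓝 (x : ℂ), z.im < 0 → 0 < (ψ z).im ∧ V₁ z = conj (V₂ (ψ z))

lemma isOpen_im_gt (d : ℝ) : IsOpen {z : ℂ | d < z.im} := isOpen_lt continuous_const Complex.continuous_im

/-- A function which is locally constant at one point is constant. -/
lemma eq_of_eventually_const {V : ℂ → ℂ} {d : ℝ} (hV : DifferentiableOn ℂ V {z : ℂ | d < z.im})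
    {s c : ℂ} (hs : d < s.im) (h : ∀ᶠ z in 𝓝 s, V z = c) : ∀ z : ℂ, d < z.im → V z = c :=
  fun _ hz => (hV.analyticOnNhd (isOpen_im_gt d)).eqOn_of_preconnected_of_eventuallyEq
    (analyticOnNhd_const (v := c)) ((convex_Ioi d).linear_preimage Complex.imLm).isPreconnected hs h hz

/-- The maximum principle on a pair of glued rectangles. -/
lemma Seam.rect_le {V₁ V₂ : ℂ → ℂ} {e : ℝ → ℝ} {d : ℝ} (hS : Seam V₁ V₂ e d) (he : StrictMono e)
    (hc : Continuous e) {a b η₁ η₂ K : ℝ} {c : ℂ} (hab : a ≤ b) (hη₁ : 0 < η₁) (hη₂ : 0 < η₂)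
    (h₁ : ∀ z : ℂ, z.re ∈ Icc a b → z.im ∈ Icc 0 η₁ → z.re = a ∨ z.re = b ∨ z.im = η₁ →
      ‖V₁ z - c‖ ≤ K)
    (h₂ : ∀ z : ℂ, z.re ∈ Icc (e a) (e b) → z.im ∈ Icc 0 η₂ →
      z.re = e a ∨ z.re = e b ∨ z.im = η₂ → ‖V₂ z - conj c‖ ≤ K) :
    (∀ z : ℂ, z.re ∈ Icc a b → z.im ∈ Icc 0 η₁ → ‖V₁ z - c‖ ≤ K) ∧
    ∀ z : ℂ, z.re ∈ Icc (e a) (e b) → z.im ∈ Icc 0 η₂ → ‖V₂ z - conj c‖ ≤ K := by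
  have hd := hS.pos
  have heab : e a ≤ e b := he.monotone hab
  have mx : ∀ {V : ℂ → ℂ} {u v η : ℝ} (c : ℂ), DifferentiableOn ℂ V {z : ℂ | -d < z.im} → u ≤ v →
      0 < η → ∃ s : ℂ, (s.re ∈ Icc u v ∧ s.im ∈ Icc 0 η) ∧
        ∀ z : ℂ, z.re ∈ Icc u v → z.im ∈ Icc 0 η → ‖V z - c‖ ≤ ‖V s - c‖ := by
    intro V u v η c hV huv hη
    obtain ⟨s, hs, hmax⟩ := (IsCompact.reProdIm (isCompact_Icc (a := u) (b := v))
      (isCompact_Icc (a := 0) (b := η))).exists_isMaxOn (f := fun z => ‖V z - c‖)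
      ⟨⟨u, 0⟩, by simp [Complex.mem_reProdIm, huv, hη.le]⟩
      ((hV.continuousOn.mono fun z hz => by
        have : 0 ≤ z.im := hz.2.1
        show -d < z.im
        linarith).sub continuousOn_const).norm
    exact ⟨s, ⟨hs.1, hs.2⟩, fun z h1 h2 => hmax ⟨h1, h2⟩⟩
  have lc : ∀ {V : ℂ → ℂ} {s c : ℂ}, DifferentiableOn ℂ V {z : ℂ | -d < z.im} → -d < s.im →
      (∀ᶠ z in 𝓝 s, ‖V z - c‖ ≤ ‖V s - c‖) → ∀ z : ℂ, -d < z.im → V z = V s := by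
    intro V s c hV hs hmax
    refine eq_of_eventually_const hV hs ?_
    have := Complex.eventually_eq_of_isLocalMax_norm (f := fun z => V z - c) (c := s) ?_ hmax
    · filter_upwards [this] with z hz
      exact sub_left_injective hz
    · filter_upwards [(isOpen_im_gt (-d)).mem_nhds hs] with z hz
      exact (hV.differentiableAt ((isOpen_im_gt (-d)).mem_nhds hz)).sub_const c
  obtain ⟨s, hs, hsm⟩ := mx c hS.diff₁ hab hη₁
  obtain ⟨t, ht, htm⟩ := mx (conj c) hS.diff₂ heab hη₂
  have near : ∀ {u v η : ℝ} {s : ℂ}, u < s.re → s.re < v → s.im < η →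
      ∀ᶠ z in 𝓝 s, z.re ∈ Icc u v ∧ z.im ≤ η := by
    intro u v η s h1 h2 h3
    filter_upwards [Complex.continuous_re.continuousAt.eventually (Ioo_mem_nhds h1 h2),
      Complex.continuous_im.continuousAt.eventually (gt_mem_nhds h3)] with z hz1 hz2
    exact ⟨⟨hz1.1.le, hz1.2.le⟩, hz2.le⟩
  have main : ‖V₁ s - c‖ ≤ K ∧ ‖V₂ t - conj c‖ ≤ K := by
    rcases le_or_gt ‖V₂ t - conj c‖ ‖V₁ s - c‖ with hle | hlt
    · suffices hsK : ‖V₁ s - c‖ ≤ K from ⟨hsK, hle.trans hsK⟩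
      by_cases hbd : s.re = a ∨ s.re = b ∨ s.im = η₁
      · exact h₁ s hs.1 hs.2 hbd
      push Not at hbd
      have n1 : a < s.re := lt_of_le_of_ne hs.1.1 (Ne.symm hbd.1)
      have n2 : s.re < b := lt_of_le_of_ne hs.1.2 hbd.2.1
      have n3 : s.im < η₁ := lt_of_le_of_ne hs.2.2 hbd.2.2
      have hconst := lc (s := s) (c := c) hS.diff₁ (by linarith [hs.2.1]) ?_
      · have h0 := h₁ ⟨a, 0⟩ ⟨le_rfl, hab⟩ ⟨le_rfl, hη₁.le⟩ (Or.inl rfl)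
        rwa [hconst ⟨a, 0⟩ (by show -d < 0; linarith)] at h0
      · rcases hs.2.1.eq_or_lt with h0 | h0
        · -- the maximum lies on the seam, across which `V₂` takes over
          have hsx : s = ((s.re : ℝ) : ℂ) := Complex.ext rfl (by simp [← h0])
          obtain ⟨ψ, hψ, hev⟩ := hS.cross s.re
          rw [← hsx] at hψ hev
          have hn := near (u := e a) (v := e b) (η := η₂) (s := (e s.re : ℂ))
            (by simpa using he n1) (by simpa using he n2) (by simpa using hη₂)
          filter_upwards [hev, hψ.eventually hn, near n1 n2 n3] with z hz1 hz2 hz3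
          rcases le_or_gt 0 z.im with h3 | h3
          · exact hsm z hz3.1 ⟨h3, hz3.2⟩
          · obtain ⟨h4, h5⟩ := hz1 h3
            rw [h5, ← Complex.conj_conj c, ← map_sub, RCLike.norm_conj, Complex.conj_conj]
            exact (htm _ hz2.1 ⟨h4.le, hz2.2⟩).trans hle
        · filter_upwards [near n1 n2 n3,
            Complex.continuous_im.continuousAt.eventually (lt_mem_nhds h0)] with z hz1 hz2
          exact hsm z hz1.1 ⟨hz2.le, hz1.2⟩
    · suffices htK : ‖V₂ t - conj c‖ ≤ K from ⟨hlt.le.trans htK, htK⟩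
      by_cases hbd : t.re = e a ∨ t.re = e b ∨ t.im = η₂
      · exact h₂ t ht.1 ht.2 hbd
      push Not at hbd
      have n1 : e a < t.re := lt_of_le_of_ne ht.1.1 (Ne.symm hbd.1)
      have n2 : t.re < e b := lt_of_le_of_ne ht.1.2 hbd.2.1
      have n3 : t.im < η₂ := lt_of_le_of_ne ht.2.2 hbd.2.2
      have h0 : 0 < t.im := by
        refine lt_of_le_of_ne ht.2.1 fun h0 => ?_
        obtain ⟨x, hx, hxe⟩ := intermediate_value_Icc hab hc.continuousOn ht.1
        have htx : t = ((e x : ℝ) : ℂ) := Complex.ext (by simp [hxe]) (by simp [← h0])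
        have h3 := hsm x (by simpa using hx) (by simp [hη₁.le])
        rw [hS.glue x, ← Complex.conj_conj c, ← map_sub, RCLike.norm_conj, Complex.conj_conj,
          ← htx] at h3
        exact absurd h3 (not_le.2 hlt)
      have hconst := lc (s := t) (c := conj c) hS.diff₂ (by linarith) ?_
      · have h0 := h₂ ⟨e a, 0⟩ ⟨le_rfl, heab⟩ ⟨le_rfl, hη₂.le⟩ (Or.inl rfl)
        rwa [hconst ⟨e a, 0⟩ (by show -d < 0; linarith)] at h0
      · filter_upwards [near n1 n2 n3,
          Complex.continuous_im.continuousAt.eventually (lt_mem_nhds h0)] with z hz1 hz2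
        exact htm z hz1.1 ⟨hz2.le, hz1.2⟩
  exact ⟨fun z h1 h2 => (hsm z h1 h2).trans main.1, fun z h1 h2 => (htm z h1 h2).trans main.2⟩

/-- A box standing on the image under `e` of the interval of radius `4 * l` about `x`. -/
def box (e : ℝ → ℝ) (x l : ℝ) : Set ℂ :=
  {z : ℂ | e (x - 4 * l) < z.re ∧ z.re < e (x + 4 * l) ∧ 0 < z.im ∧
    z.im < 2 * (e (x + 4 * l) - e (x - 4 * l))}

/-- The part of `box e x l` close to `e x`, which `side_le` does not need: removing it makes the boxes
belonging to sufficiently different values of `l` disjoint. -/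
def core (e : ℝ → ℝ) (M x l : ℝ) : Set ℂ :=
  {z : ℂ | e (x - l / 2) < z.re ∧ z.re < e (x + l / 2) ∧
    z.im < (e (x + l) - e (x - l)) / M ^ 4 / 2}

/-- On the upper part of the boundary of a suitable rectangle around `e x`, the oscillation of `V`
is controlled by the energy in a half-ring around `e x`. -/
lemma side_le {V : ℂ → ℂ} {e : ℝ → ℝ} {μ : Measure ℂ} [IsFiniteMeasure μ] {T : Set ℂ} {M : ℝ}
    (hM : 2 ≤ M) (hD : Dbl M univ e) (he : StrictMono e) (hc : Continuous e)
    (hV : ∀ z : ℂ, 0 ≤ z.im → DifferentiableAt ℂ V z) (hE : Energy V μ T) {x l B a b : ℝ}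
    (hl : 0 < l) (hB : μ.real univ ≤ B) (hT : box e x l \ core e M x l ⊆ T)
    (ha : a ∈ Icc (x - 2 * l) (x - l)) (hb : b ∈ Icc (x + l) (x + 2 * l))
    (hma : ∀ j : ℕ, μ.real {w : ℂ | w.re ≤ e (a + l / 2 / 4 ^ j)}
      - μ.real {w : ℂ | w.re ≤ e (a - l / 2 / 4 ^ j)} ≤ B * (3 / 4) ^ j)
    (hmb : ∀ j : ℕ, μ.real {w : ℂ | w.re ≤ e (b + l / 2 / 4 ^ j)}
      - μ.real {w : ℂ | w.re ≤ e (b - l / 2 / 4 ^ j)} ≤ B * (3 / 4) ^ j)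
    {z : ℂ} (hz1 : z.re ∈ Icc (e a) (e b)) (hz2 : z.im ∈ Icc 0 ((e (x + l) - e (x - l)) / M ^ 4))
    (hz : z.re = e a ∨ z.re = e b ∨ z.im = (e (x + l) - e (x - l)) / M ^ 4) :
    ‖V z - V (e a)‖ ≤ 50 * M ^ 5 * √B := by
  obtain ⟨ha1, ha2⟩ := ha
  obtain ⟨hb1, hb2⟩ := hb
  have hB0 : 0 ≤ B := measureReal_nonneg.trans hB
  set L := e (x + l) - e (x - l) with hL
  have hLpos : 0 < L := sub_pos.2 (he (by linarith))
  set η := L / M ^ 4 with hη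
  have hηpos : 0 < η := by positivity
  have hηL : L = M ^ 4 * η := by rw [hη]; field_simp
  have it := hD.iterate (by linarith) 3
  have hM3 : 0 < M ^ 3 := by positivity
  -- comparison of `η` with the sizes of the strips above `a` and `b`
  have la : L ≤ M ^ 3 * (e (a + l / 2) - e a) := by
    have h1 := it.1 a (a + l / 2) (x + l) (mem_univ _) (mem_univ _) (by linarith) (by linarith)
      (by norm_num; linarith)
    have h2 : e a ≤ e (x - l) := he.monotone ha2
    linarith
  have lb : L ≤ M ^ 3 * (e (b + l / 2) - e b) := by
    have h1 := it.2 (x - l) b (b + l / 2) (mem_univ _) (mem_univ _) (by linarith) (by linarith)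
      (by norm_num; linarith)
    have h2 : e (x + l) ≤ e (b + l / 2) := he.monotone (by linarith)
    linarith
  have la' : M * η ≤ e (a + l / 2) - e a := by
    have : M ^ 3 * (M * η) ≤ M ^ 3 * (e (a + l / 2) - e a) := by
      calc _ = M ^ 4 * η := by ring
        _ ≤ _ := hηL ▸ la
    exact le_of_mul_le_mul_left this hM3
  have lb' : M * η ≤ e (b + l / 2) - e b := by
    have : M ^ 3 * (M * η) ≤ M ^ 3 * (e (b + l / 2) - e b) := by
      calc _ = M ^ 4 * η := by ring
        _ ≤ _ := hηL ▸ lb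
    exact le_of_mul_le_mul_left this hM3
  have hMη : η ≤ M * η := by nlinarith
  have la2 : η ≤ e a - e (a - l / 2) := by
    have h1 := hD.1 (a - l / 2) a (a + l / 2) (mem_univ _) (mem_univ _) (by linarith) (by linarith)
      (by linarith)
    have h2 : e (a - l / 2) ≤ e a := he.monotone (by linarith)
    have h3 : M * η ≤ M * (e a - e (a - l / 2)) := by linarith
    exact le_of_mul_le_mul_left h3 (by linarith)
  have m1 : e (x - 4 * l) ≤ e (a - l / 2) := he.monotone (by linarith)
  have m2 : e (a + l / 2) ≤ e (x - l / 2) := he.monotone (by linarith)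
  have m3 : e (x + l / 2) ≤ e (b - l / 2) := he.monotone (by linarith)
  have m4 : e (b + l / 2) ≤ e (x + 4 * l) := he.monotone (by linarith)
  have m5 : e (x - l / 2) ≤ e (x + l / 2) := he.monotone (by linarith)
  have m6 : e (b - l / 2) ≤ e b := he.monotone (by linarith)
  have m7 : e a ≤ e (a + l / 2) := he.monotone (by linarith)
  have m8 : e (a - l / 2) ≤ e a := he.monotone (by linarith)
  have m9 : e b ≤ e (b + l / 2) := he.monotone (by linarith)
  have va : ∀ y ∈ Icc 0 η, ‖V ⟨e a, y⟩ - V ⟨e a, 0⟩‖ ≤ 16 * M ^ 2 * √B := fun y hy =>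
    vertical_le hM hD he hc hV hE (half_pos hl) hB0 hma (fun w w1 w2 w3 w4 =>
      hT ⟨⟨by linarith, by linarith, w3, by linarith⟩, fun hw => by
        have : e (x - l / 2) < w.re := hw.1
        linarith⟩) hy.1 (by linarith [hy.2])
  have vb : ∀ y ∈ Icc 0 η, ‖V ⟨e b, y⟩ - V ⟨e b, 0⟩‖ ≤ 16 * M ^ 2 * √B := fun y hy =>
    vertical_le hM hD he hc hV hE (half_pos hl) hB0 hmb (fun w w1 w2 w3 w4 =>
      hT ⟨⟨by linarith, by linarith, w3, by linarith⟩, fun hw => by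
        have : w.re < e (x + l / 2) := hw.2.1
        linarith⟩) hy.1 (by linarith [hy.2])
  have len : e b - e a ≤ M ^ 5 * η := by
    have h1 := hD.1 x (x + l) (x + 2 * l) (mem_univ _) (mem_univ _) (by linarith) (by linarith)
      (by linarith)
    have h2 := hD.2 (x - 2 * l) (x - l) x (mem_univ _) (mem_univ _) (by linarith) (by linarith)
      (by linarith)
    have h3 : e b ≤ e (x + 2 * l) := he.monotone hb2
    have h4 : e (x - 2 * l) ≤ e a := he.monotone ha1
    calc e b - e a ≤ M * L := by rw [hL]; linarith
      _ = _ := by rw [hηL]; ring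
  have top : ∀ s ∈ Icc (e a) (e b), ‖V ⟨s, η⟩ - V ⟨e a, η⟩‖ ≤ 2 * M ^ 5 * √B := by
    intro s hs
    refine (horizontal_le hηpos hV hE hB (fun t ht w hw => ?_) hs).trans ?_
    · have h1 := (Complex.abs_re_le_norm (w - ⟨t, η⟩)).trans_lt (mem_ball_iff_norm.1 hw)
      have h2 := (Complex.abs_im_le_norm (w - ⟨t, η⟩)).trans_lt (mem_ball_iff_norm.1 hw)
      simp only [Complex.sub_re, Complex.sub_im] at h1 h2
      rw [abs_lt] at h1 h2
      refine hT ⟨⟨by linarith [ht.1, h1.1], by linarith [ht.2, h1.2], by linarith [h2.1],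
        by linarith [h2.2]⟩, fun hw => ?_⟩
      have : w.im < η / 2 := hw.2.2
      linarith [h2.1]
    · calc √B * 2 / η * (e b - e a) ≤ √B * 2 / η * (M ^ 5 * η) := by gcongr
        _ = _ := by field_simp
  have hM25 : 48 * M ^ 2 * √B ≤ 48 * M ^ 5 * √B := by
    have := pow_le_pow_right₀ (show 1 ≤ M by linarith) (show 2 ≤ 5 by norm_num)
    gcongr
  have hV0 : V (e a) = V ⟨e a, 0⟩ := rfl
  rw [hV0]
  have hsq : 0 ≤ M ^ 2 * √B := by positivity
  have hsq5 : 0 ≤ M ^ 5 * √B := by positivity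
  have hηI : η ∈ Icc 0 η := ⟨hηpos.le, le_rfl⟩
  have hab : e a ≤ e b := he.monotone (by linarith)
  have ta := va η hηI
  rcases hz with h | h | h
  · have : z = ⟨e a, z.im⟩ := Complex.ext h rfl
    rw [this]
    have := va z.im hz2
    linarith
  · have : z = ⟨e b, z.im⟩ := Complex.ext h rfl
    rw [this]
    have t1 := vb z.im hz2
    have t2 := vb η hηI
    rw [norm_sub_rev] at t2
    have t3 := top (e b) ⟨hab, le_rfl⟩
    have k1 := norm_sub_le_norm_sub_add_norm_sub (V ⟨e b, z.im⟩) (V ⟨e b, 0⟩) (V ⟨e a, 0⟩)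
    have k2 := norm_sub_le_norm_sub_add_norm_sub (V ⟨e b, 0⟩) (V ⟨e b, η⟩) (V ⟨e a, 0⟩)
    have k3 := norm_sub_le_norm_sub_add_norm_sub (V ⟨e b, η⟩) (V ⟨e a, η⟩) (V ⟨e a, 0⟩)
    linarith
  · have : z = ⟨z.re, η⟩ := Complex.ext rfl h
    rw [this]
    have t3 := top z.re hz1
    have k3 := norm_sub_le_norm_sub_add_norm_sub (V ⟨z.re, η⟩) (V ⟨e a, η⟩) (V ⟨e a, 0⟩)
    linarith

lemma dbl_id {M : ℝ} (hM : 2 ≤ M) : Dbl M univ (fun x : ℝ => x) := by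
  constructor
  · intro a b y _ _ h1 h2 h3
    nlinarith
  · intro a b y _ _ h1 h2 h3
    nlinarith

/-- The oscillation of a glued pair near a boundary point is controlled by the energy in a ring
around that point. -/
lemma Seam.one_scale {V₁ V₂ : ℂ → ℂ} {e : ℝ → ℝ} {d : ℝ} (hS : Seam V₁ V₂ e d) {M : ℝ}
    (hM : 2 ≤ M) (hD : Dbl M univ e) (he : StrictMono e) (hc : Continuous e) {μ₁ μ₂ : Measure ℂ}
    [IsFiniteMeasure μ₁] [IsFiniteMeasure μ₂] {T₁ T₂ : Set ℂ} (hE₁ : Energy V₁ μ₁ T₁)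
    (hE₂ : Energy V₂ μ₂ T₂) {x l B : ℝ} (hl : 0 < l) (hB : μ₁.real univ + μ₂.real univ ≤ B)
    (hT₁ : box (fun x => x) x l \ core (fun x => x) M x l ⊆ T₁)
    (hT₂ : box e x l \ core e M x l ⊆ T₂) :
    (∀ z : ℂ, z.re ∈ Icc (x - l) (x + l) → z.im ∈ Icc 0 (((x + l) - (x - l)) / M ^ 4) →
      ‖V₁ z - V₁ x‖ ≤ 100 * M ^ 5 * √B) ∧
    ∀ z : ℂ, z.re ∈ Icc (e (x - l)) (e (x + l)) →
      z.im ∈ Icc 0 ((e (x + l) - e (x - l)) / M ^ 4) →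
      ‖V₂ z - V₂ (e x)‖ ≤ 100 * M ^ 5 * √B := by
  have hnn₁ : 0 ≤ μ₁.real univ := measureReal_nonneg
  have hnn₂ : 0 ≤ μ₂.real univ := measureReal_nonneg
  have hM1 : ∀ (μ : Measure ℂ) [IsFiniteMeasure μ] (s t : ℝ), s ≤ t →
      μ.real {w : ℂ | w.re ≤ s} ≤ μ.real {w : ℂ | w.re ≤ t} := fun μ _ s t hst =>
    measureReal_mono fun w (hw : w.re ≤ s) => hw.trans hst
  have mono : Monotone fun t => μ₁.real {w : ℂ | w.re ≤ t} + μ₂.real {w : ℂ | w.re ≤ e t} :=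
    fun s t hst => add_le_add (hM1 μ₁ _ _ hst) (hM1 μ₂ _ _ (he.monotone hst))
  have bdd : ∀ s t, (fun t => μ₁.real {w : ℂ | w.re ≤ t} + μ₂.real {w : ℂ | w.re ≤ e t}) t -
      (fun t => μ₁.real {w : ℂ | w.re ≤ t} + μ₂.real {w : ℂ | w.re ≤ e t}) s ≤ B := by
    intro s t
    have h1 : μ₁.real {w : ℂ | w.re ≤ t} ≤ μ₁.real univ := measureReal_mono (subset_univ _)
    have h2 : μ₂.real {w : ℂ | w.re ≤ e t} ≤ μ₂.real univ := measureReal_mono (subset_univ _)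
    have h3 : 0 ≤ μ₁.real {w : ℂ | w.re ≤ s} := measureReal_nonneg
    have h4 : 0 ≤ μ₂.real {w : ℂ | w.re ≤ e s} := measureReal_nonneg
    simp only
    linarith
  have split : ∀ a : ℝ, (∀ j : ℕ,
      (fun t => μ₁.real {w : ℂ | w.re ≤ t} + μ₂.real {w : ℂ | w.re ≤ e t}) (a + l / 2 / 4 ^ j) -
      (fun t => μ₁.real {w : ℂ | w.re ≤ t} + μ₂.real {w : ℂ | w.re ≤ e t}) (a - l / 2 / 4 ^ j)
        ≤ B * (3 / 4) ^ j) →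
      (∀ j : ℕ, μ₁.real {w : ℂ | w.re ≤ a + l / 2 / 4 ^ j}
        - μ₁.real {w : ℂ | w.re ≤ a - l / 2 / 4 ^ j} ≤ B * (3 / 4) ^ j) ∧
      ∀ j : ℕ, μ₂.real {w : ℂ | w.re ≤ e (a + l / 2 / 4 ^ j)}
        - μ₂.real {w : ℂ | w.re ≤ e (a - l / 2 / 4 ^ j)} ≤ B * (3 / 4) ^ j := by
    intro a ha
    have hpos : ∀ j : ℕ, 0 < l / 2 / 4 ^ j := fun j => by positivity
    have h1 := fun j : ℕ => hM1 μ₁ (a - l / 2 / 4 ^ j) (a + l / 2 / 4 ^ j) (by linarith [hpos j])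
    have h2 := fun j : ℕ => hM1 μ₂ (e (a - l / 2 / 4 ^ j)) (e (a + l / 2 / 4 ^ j))
      (he.monotone (by linarith [hpos j]))
    simp only at ha
    exact ⟨fun j => by linarith [ha j, h2 j], fun j => by linarith [ha j, h1 j]⟩
  obtain ⟨a, ha1, ha2, ha⟩ := exists_good_point mono bdd (x - 2 * l) (half_pos hl)
  obtain ⟨b, hb1, hb2, hb⟩ := exists_good_point mono bdd (x + 3 / 2 * l) (half_pos hl)
  obtain ⟨ha₁, ha₂⟩ := split a ha
  obtain ⟨hb₁, hb₂⟩ := split b hb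
  have dif : ∀ {V : ℂ → ℂ}, DifferentiableOn ℂ V {z : ℂ | -d < z.im} → ∀ z : ℂ, 0 ≤ z.im →
      DifferentiableAt ℂ V z := fun hV z hz =>
    hV.differentiableAt ((isOpen_im_gt (-d)).mem_nhds (show -d < z.im by linarith [hS.pos]))
  have haI : a ∈ Icc (x - 2 * l) (x - l) := ⟨ha1, by linarith⟩
  have hbI : b ∈ Icc (x + l) (x + 2 * l) := ⟨by linarith, by linarith⟩
  have hM4 : 0 < M ^ 4 := by positivity
  have hpos2 : 0 < (e (x + l) - e (x - l)) / M ^ 4 :=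
    div_pos (sub_pos.2 (he (by linarith))) hM4
  have hpos1 : 0 < ((x + l) - (x - l)) / M ^ 4 := div_pos (by linarith) hM4
  have key := hS.rect_le he hc (a := a) (b := b) (c := V₁ a) (K := 50 * M ^ 5 * √B)
    (by linarith) hpos1 hpos2
    (fun z z1 z2 z3 => side_le (e := fun x => x) hM (dbl_id hM) strictMono_id continuous_id
      (dif hS.diff₁) hE₁ hl (by linarith) hT₁ haI hbI ha₁ hb₁ z1 z2 z3)
    (fun z z1 z2 z3 => by
      rw [hS.glue a, Complex.conj_conj]
      exact side_le hM hD he hc (dif hS.diff₂) hE₂ hl (by linarith) hT₂ haI hbI ha₂ hb₂ z1 z2 z3)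
  have hx1 := key.1 x (by simp; constructor <;> linarith [haI.2, hbI.1])
    (by simpa using hpos1.le)
  have hx2 := key.2 (e x) (by
    simp only [Complex.ofReal_re]
    exact ⟨he.monotone (by linarith [haI.2]), he.monotone (by linarith [hbI.1])⟩)
    (by simpa using hpos2.le)
  rw [norm_sub_rev] at hx1 hx2
  constructor
  · intro z z1 z2
    have h1 := key.1 z ⟨by linarith [haI.2, z1.1], by linarith [hbI.1, z1.2]⟩ z2
    have := norm_sub_le_norm_sub_add_norm_sub (V₁ z) (V₁ a) (V₁ x)
    linarith
  · intro z z1 z2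
    have m1 : e a ≤ e (x - l) := he.monotone haI.2
    have m2 : e (x + l) ≤ e b := he.monotone hbI.1
    have h1 := key.2 z ⟨by linarith [z1.1], by linarith [z1.2]⟩ z2
    have := norm_sub_le_norm_sub_add_norm_sub (V₂ z) (conj (V₁ a)) (V₂ (e x))
    linarith

/-! ### Equicontinuity -/

/-- Lifts of orientation preserving circle homeomorphisms with doubling constant `M`. -/
structure CircleLift (M : ℝ) (e : ℝ → ℝ) : Prop where
  dbl : Dbl M univ e
  mono : StrictMono e
  cont : Continuous e
  add_period : ∀ x, e (x + 2 * Real.pi) = e x + 2 * Real.pi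

lemma CircleLift.id {M : ℝ} (hM : 2 ≤ M) : CircleLift M (fun x => x) :=
  ⟨dbl_id hM, strictMono_id, continuous_id, fun _ => rfl⟩

/-- Reverse doubling. -/
lemma CircleLift.shrink {M : ℝ} (hM : 2 ≤ M) {e : ℝ → ℝ} (he : CircleLift M e) (x : ℝ) {s : ℝ}
    (hs : 0 < s) (n : ℕ) : e (x + s / 2 ^ n) - e (x - s / 2 ^ n)
      ≤ (1 - 1 / M) ^ n * (e (x + s) - e (x - s)) := by
  have hM0 : 0 < M := by linarith
  induction n with
  | zero => simp
  | succ n ih =>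
    have hp : 0 < s / 2 ^ (n + 1) := by positivity
    have hdiv : s / 2 ^ n = 2 * (s / 2 ^ (n + 1)) := by rw [pow_succ]; field_simp
    set t := s / 2 ^ (n + 1)
    rw [hdiv] at ih
    have h1 := he.dbl.1 (x - 2 * t) (x - t) x (mem_univ _) (mem_univ _) (by linarith) (by linarith)
      (by linarith)
    have h2 := he.dbl.2 x (x + t) (x + 2 * t) (mem_univ _) (mem_univ _) (by linarith) (by linarith)
      (by linarith)
    have h3 : (e (x + 2 * t) - e (x - 2 * t)) / M ≤
        (e (x + 2 * t) - e (x - 2 * t)) - (e (x + t) - e (x - t)) := by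
      rw [div_le_iff₀ hM0]; linarith
    have h4 : 0 ≤ 1 - 1 / M := by
      rw [sub_nonneg, div_le_one hM0]; linarith
    calc e (x + t) - e (x - t) ≤ (1 - 1 / M) * (e (x + 2 * t) - e (x - 2 * t)) := by
          rw [sub_mul, one_mul, one_div, inv_mul_eq_div]; linarith
      _ ≤ (1 - 1 / M) * ((1 - 1 / M) ^ n * (e (x + s) - e (x - s))) := by gcongr
      _ = _ := by ring

lemma CircleLift.lower {M : ℝ} (hM : 2 ≤ M) {e : ℝ → ℝ} (he : CircleLift M e) (x : ℝ) {l : ℝ}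
    (hl : 0 < l) {r : ℕ} (hl' : l ≤ 2 * Real.pi) (hr : 2 * Real.pi ≤ 2 ^ r * l) :
    2 * Real.pi / M ^ r ≤ e x - e (x - l) ∧ 2 * Real.pi / M ^ r ≤ e (x + l) - e x := by
  have hMr : 0 < M ^ r := by positivity
  have it := he.dbl.iterate (by linarith) r
  constructor
  · have h1 := it.2 (x - 2 * Real.pi) (x - l) x (mem_univ _) (mem_univ _) (by linarith)
      (by linarith) (by linarith)
    have h2 := he.add_period (x - 2 * Real.pi)
    rw [sub_add_cancel] at h2
    rw [div_le_iff₀ hMr]; linarith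
  · have h1 := it.1 x (x + l) (x + 2 * Real.pi) (mem_univ _) (mem_univ _) (by linarith)
      (by linarith) (by linarith)
    rw [he.add_period] at h1
    rw [div_le_iff₀ hMr]; linarith

lemma CircleLift.box_subset_core {M : ℝ} (hM : 2 ≤ M) {e : ℝ → ℝ} (he : CircleLift M e) (x : ℝ)
    {l : ℝ} (hl : 0 < l) {p : ℕ} (hp : (1 - 1 / M) ^ p ≤ 1 / (4 * M ^ 4)) :
    box e x (l / 2 ^ (p + 3)) ⊆ core e M x l := by
  rintro z ⟨h1, h2, h3, h4⟩
  have e1 : 4 * (l / 2 ^ (p + 3)) = l / 2 / 2 ^ p := by rw [pow_add]; field_simp; norm_num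
  rw [e1] at h1 h2 h4
  have hle : l / 2 / 2 ^ p ≤ l / 2 := div_le_self (by linarith) (one_le_pow₀ (by norm_num))
  refine ⟨lt_of_le_of_lt (he.mono.monotone (by linarith)) h1,
    lt_of_lt_of_le h2 (he.mono.monotone (by linarith)), h4.trans_le ?_⟩
  have k1 := he.shrink hM x (half_pos hl) p
  have k2 : e (x + l / 2) - e (x - l / 2) ≤ e (x + l) - e (x - l) :=
    sub_le_sub (he.mono.monotone (by linarith)) (he.mono.monotone (by linarith))
  have k3 : 0 ≤ e (x + l / 2) - e (x - l / 2) :=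
    sub_nonneg.2 (he.mono.monotone (by linarith))
  have k4 : (1 - 1 / M) ^ p * (e (x + l / 2) - e (x - l / 2)) ≤
      1 / (4 * M ^ 4) * (e (x + l) - e (x - l)) := by gcongr
  calc _ ≤ 2 * (1 / (4 * M ^ 4) * (e (x + l) - e (x - l))) := by linarith
    _ = _ := by field_simp; norm_num

lemma CircleLift.box_subset_window {M : ℝ} (hM : 2 ≤ M) {e : ℝ → ℝ} (he : CircleLift M e) (x : ℝ)
    {n : ℕ} (hn : (1 - 1 / M) ^ n * (2 * Real.pi) ≤ Real.log 2 / 2) :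
    box e x (Real.pi / 4 / 2 ^ n) ⊆ {z : ℂ | |z.re - e x| < Real.pi ∧ 0 < z.im ∧ z.im < Real.log 2} := by
  rintro z ⟨h1, h2, h3, h4⟩
  have e1 : 4 * (Real.pi / 4 / 2 ^ n) = Real.pi / 2 ^ n := by field_simp
  have hpi := Real.pi_gt_three
  have hp : 0 < Real.pi / 2 ^ n := by positivity
  rw [e1] at h1 h2 h4
  have k1 := he.shrink hM x Real.pi_pos n
  have k2 := he.add_period (x - Real.pi)
  rw [show x - Real.pi + 2 * Real.pi = x + Real.pi by ring] at k2
  rw [k2, add_sub_cancel_left] at k1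
  have k3 : e (x - Real.pi / 2 ^ n) ≤ e x := he.mono.monotone (by linarith)
  have k4 : e x ≤ e (x + Real.pi / 2 ^ n) := he.mono.monotone (by linarith)
  have k5 := Real.log_two_lt_d9
  exact ⟨abs_lt.2 ⟨by linarith, by linarith⟩, h3, by linarith⟩

lemma measurableSet_box (e : ℝ → ℝ) (x l : ℝ) : MeasurableSet (box e x l) := by
  have h1 := Complex.continuous_re
  have h2 := Complex.continuous_im
  exact ((isOpen_lt continuous_const h1).inter ((isOpen_lt h1 continuous_const).inter
    ((isOpen_lt continuous_const h2).inter (isOpen_lt h2 continuous_const)))).measurableSet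

lemma box_subset_box {e : ℝ → ℝ} (he : Monotone e) (x : ℝ) {l l' : ℝ} (h : l ≤ l') :
    box e x l ⊆ box e x l' := by
  rintro z ⟨h1, h2, h3, h4⟩
  have k1 : e (x - 4 * l') ≤ e (x - 4 * l) := he (by linarith)
  have k2 : e (x + 4 * l) ≤ e (x + 4 * l') := he (by linarith)
  exact ⟨by linarith, by linarith, h3, by linarith⟩

/-- Glued pairs of bounded energy are equicontinuous at the seam, with a modulus of continuity
depending only on the doubling constant: of `N` disjoint rings around a given point, one carries
at most the `N`-th part of the energy. -/
theorem equicontinuity {M : ℝ} (hM : 2 ≤ M) {A ε : ℝ} (hA : 0 ≤ A) (hε : 0 < ε) :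
    ∃ δ > 0, ∀ (e : ℝ → ℝ) (V₁ V₂ : ℂ → ℂ) (d x : ℝ) (μ₁ μ₂ : Measure ℂ), CircleLift M e →
      Seam V₁ V₂ e d → IsFiniteMeasure μ₁ → IsFiniteMeasure μ₂ → μ₁.real univ ≤ A →
      μ₂.real univ ≤ A →
      Energy V₁ μ₁ {z : ℂ | |z.re - x| < Real.pi ∧ 0 < z.im ∧ z.im < Real.log 2} →
      Energy V₂ μ₂ {z : ℂ | |z.re - e x| < Real.pi ∧ 0 < z.im ∧ z.im < Real.log 2} →
      (∀ z : ℂ, 0 ≤ z.im → ‖z - x‖ < δ → ‖V₁ z - V₁ x‖ ≤ ε) ∧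
      ∀ z : ℂ, 0 ≤ z.im → ‖z - e x‖ < δ → ‖V₂ z - V₂ (e x)‖ ≤ ε := by
  have hM0 : 0 < M := by linarith
  have hpi := Real.pi_pos
  have hθ0 : 0 ≤ 1 - 1 / M := by rw [sub_nonneg, div_le_one hM0]; linarith
  have hθ1 : 1 - 1 / M < 1 := by have : 0 < 1 / M := by positivity
                                 linarith
  -- `p` makes consecutive rings disjoint, `n` puts the largest one into the window where the energy
  -- is bounded, and `N` is the number of rings.
  obtain ⟨p, hp⟩ := exists_pow_lt_of_lt_one (show 0 < 1 / (4 * M ^ 4) by positivity) hθ1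
  obtain ⟨n, hn⟩ := exists_pow_lt_of_lt_one
    (show 0 < Real.log 2 / 2 / (2 * Real.pi) by have := Real.log_pos one_lt_two; positivity) hθ1
  have hn' : (1 - 1 / M) ^ n * (2 * Real.pi) ≤ Real.log 2 / 2 :=
    (lt_div_iff₀ (by positivity)).1 hn |>.le
  obtain ⟨N, hN⟩ := exists_nat_gt (2 * A / (ε / (100 * M ^ 5)) ^ 2)
  have hN0 : (0 : ℝ) < N := lt_of_le_of_lt (by positivity) hN
  have hNε : 100 * M ^ 5 * √(2 * A / N) ≤ ε := by
    have h1 : 2 * A / N ≤ (ε / (100 * M ^ 5)) ^ 2 := by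
      rw [div_lt_iff₀ (by positivity)] at hN
      rw [div_le_iff₀ hN0]; linarith
    have h2 := (Real.sqrt_le_sqrt h1).trans (Real.sqrt_sq (by positivity)).le
    rw [le_div_iff₀ (by positivity)] at h2
    linarith
  set r : ℕ := n + 3 + (p + 3) * N with hr
  set l : ℕ → ℝ := fun j => Real.pi / 4 / 2 ^ n / 2 ^ ((p + 3) * j) with hldef
  have lpos : ∀ j, 0 < l j := fun j => by positivity
  have lsucc : ∀ j, l (j + 1) = l j / 2 ^ (p + 3) := fun j => by
    simp only [hldef]; rw [mul_add, mul_one, pow_add _ ((p + 3) * j)]; field_simp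
  have llow : ∀ j ≤ N, 2 * Real.pi ≤ 2 ^ r * l j := by
    intro j hj
    have h1 : (2 : ℝ) ^ ((p + 3) * j) ≤ 2 ^ ((p + 3) * N) :=
      pow_le_pow_right₀ (by norm_num) (Nat.mul_le_mul_left _ hj)
    have h2 : 2 ^ r * l j = 2 * Real.pi * (2 ^ ((p + 3) * N) / 2 ^ ((p + 3) * j)) := by
      simp only [hldef, hr]; rw [pow_add, pow_add]; field_simp; norm_num
    rw [h2]
    have h3 : 1 ≤ (2 : ℝ) ^ ((p + 3) * N) / 2 ^ ((p + 3) * j) := by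
      rw [one_le_div (by positivity)]; exact h1
    nlinarith
  have lup : ∀ j, l j ≤ 2 * Real.pi := fun j => by
    have h1 : l j ≤ Real.pi / 4 / 2 ^ n :=
      div_le_self (by positivity) (one_le_pow₀ (by norm_num))
    have h2 : Real.pi / 4 / 2 ^ n ≤ Real.pi / 4 :=
      div_le_self (by positivity) (one_le_pow₀ (by norm_num))
    linarith
  refine ⟨2 * Real.pi / M ^ r / M ^ 4, by positivity, ?_⟩
  intro e V₁ V₂ d x μ₁ μ₂ he hS _ _ hμ₁ hμ₂ hE₁ hE₂
  have hid : CircleLift M (fun x => x) := .id hM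
  set T₁ : ℕ → Set ℂ := fun j => box (fun x => x) x (l j) \ box (fun x => x) x (l (j + 1))
  set T₂ : ℕ → Set ℂ := fun j => box e x (l j) \ box e x (l (j + 1))
  have lanti : ∀ j, l (j + 1) ≤ l j := fun j => by
    rw [lsucc]; exact div_le_self (lpos j).le (one_le_pow₀ (by norm_num))
  have lanti0 : ∀ j, l j ≤ Real.pi / 4 / 2 ^ n := fun j =>
    div_le_self (by positivity) (one_le_pow₀ (by norm_num))
  have tele : ∀ {e : ℝ → ℝ} (μ : Measure ℂ) [IsFiniteMeasure μ], CircleLift M e → μ.real univ ≤ A →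
      ∑ j ∈ Finset.range N, μ.real (box e x (l j) \ box e x (l (j + 1))) ≤ A := by
    intro e μ _ he hμ
    have h1 : ∀ j, μ.real (box e x (l j) \ box e x (l (j + 1)))
        = μ.real (box e x (l j)) - μ.real (box e x (l (j + 1))) := fun j =>
      measureReal_sdiff (box_subset_box he.mono.monotone x (lanti j)) (measurableSet_box _ _ _)
    simp only [h1]
    rw [Finset.sum_range_sub']
    have h2 : μ.real (box e x (l 0)) ≤ μ.real univ := measureReal_mono (subset_univ _)
    have h3 : 0 ≤ μ.real (box e x (l N)) := measureReal_nonneg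
    linarith
  obtain ⟨j, hjN, hj⟩ : ∃ j ∈ Finset.range N, μ₁.real (T₁ j) + μ₂.real (T₂ j) ≤ 2 * A / N := by
    by_contra! hcon
    have h1 := Finset.sum_lt_sum_of_nonempty (s := Finset.range N)
      (Finset.nonempty_range_iff.2 (by rintro rfl; simp at hN0)) hcon
    rw [Finset.sum_const, Finset.card_range, nsmul_eq_mul, Finset.sum_add_distrib,
      mul_div_cancel₀ _ hN0.ne'] at h1
    have h2 := tele μ₁ hid hμ₁
    have h3 := tele μ₂ he hμ₂
    linarith
  have hjN' : j ≤ N := (Finset.mem_range.1 hjN).le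
  have hsub₁ : T₁ j ⊆ {z : ℂ | |z.re - x| < Real.pi ∧ 0 < z.im ∧ z.im < Real.log 2} :=
    sdiff_subset.trans ((box_subset_box monotone_id x (lanti0 j)).trans
      (hid.box_subset_window hM x hn'))
  have hsub₂ : T₂ j ⊆ {z : ℂ | |z.re - e x| < Real.pi ∧ 0 < z.im ∧ z.im < Real.log 2} :=
    sdiff_subset.trans ((box_subset_box he.mono.monotone x (lanti0 j)).trans
      (he.box_subset_window hM x hn'))
  have key := hS.one_scale hM he.dbl he.mono he.cont (hE₁.restrict hsub₁) (hE₂.restrict hsub₂)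
    (lpos j) (B := 2 * A / N) (by simpa using hj)
    (by
      have := hid.box_subset_core hM x (lpos j) hp.le
      rw [← lsucc] at this
      exact sdiff_subset_sdiff_right this)
    (by
      have := he.box_subset_core hM x (lpos j) hp.le
      rw [← lsucc] at this
      exact sdiff_subset_sdiff_right this)
  have hrect : ∀ {e : ℝ → ℝ}, CircleLift M e → ∀ z : ℂ, 0 ≤ z.im →
      ‖z - e x‖ < 2 * Real.pi / M ^ r / M ^ 4 → z.re ∈ Icc (e (x - l j)) (e (x + l j)) ∧
        z.im ∈ Icc 0 ((e (x + l j) - e (x - l j)) / M ^ 4) := by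
    intro e he z hz hzd
    have h1 := (Complex.abs_re_le_norm (z - e x)).trans_lt hzd
    have h2 := (Complex.abs_im_le_norm (z - e x)).trans_lt hzd
    simp only [Complex.sub_re, Complex.sub_im, Complex.ofReal_re, Complex.ofReal_im, sub_zero]
      at h1 h2
    rw [abs_lt] at h1 h2
    obtain ⟨k1, k2⟩ := he.lower hM x (lpos j) (lup j) (llow j hjN')
    have k3 : 2 * Real.pi / M ^ r / M ^ 4 ≤ 2 * Real.pi / M ^ r :=
      div_le_self (by positivity) (one_le_pow₀ (by linarith))
    have k4 : 2 * Real.pi / M ^ r / M ^ 4 ≤ (e (x + l j) - e (x - l j)) / M ^ 4 := by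
      have : 0 < 2 * Real.pi / M ^ r := by positivity
      gcongr
      linarith
    exact ⟨⟨by linarith [h1.1], by linarith [h1.2]⟩, hz, by linarith [h2.2]⟩
  exact ⟨fun z hz hzd => (key.1 z (hrect hid z hz hzd).1 (hrect hid z hz hzd).2).trans hNε,
    fun z hz hzd => (key.2 z (hrect he z hz hzd).1 (hrect he z hz hzd).2).trans hNε⟩

/-! ### Weldings in the logarithmic coordinate -/

/-- A normalised conformal welding with seam homeomorphism `e`, in the coordinate `z ↦ exp (i z)` of
the two discs. The outer map, which has a simple pole with residue one at the centre of its disc, is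
conjugated in source and target, so that both maps live on the upper half-plane. The field `osc`
records that the outer map is quantitatively non-constant on the seam. -/
structure HalfPlaneWelding (e : ℝ → ℝ) (V₁ V₂ : ℂ → ℂ) : Prop where
  diff₁ : DifferentiableOn ℂ V₁ {z | 0 < z.im}
  diff₂ : DifferentiableOn ℂ V₂ {z | 0 < z.im}
  bound₁ : ∀ z : ℂ, 0 ≤ z.im → ‖V₁ z‖ ≤ 3
  bound₂ : ∀ z : ℂ, 0 ≤ z.im → ‖V₂ z‖ ≤ Real.exp z.im + 5
  glue : ∀ x : ℝ, V₁ x = conj (V₂ (e x))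
  inj₁ : ∀ z w : ℂ, 0 < z.im → 0 < w.im → |z.re - w.re| < 2 * Real.pi → V₁ z = V₁ w → z = w
  inj₂ : ∀ z w : ℂ, 0 < z.im → 0 < w.im → |z.re - w.re| < 2 * Real.pi → V₂ z = V₂ w → z = w
  disj : ∀ z w : ℂ, 0 < z.im → 0 < w.im → V₁ z ≠ conj (V₂ w)
  osc : ∀ c : ℂ, ∃ x ∈ Icc (0 : ℝ) (2 * Real.pi), 1 ≤ ‖V₂ x - c‖

lemma norm_exp_mul_I' (z : ℂ) : ‖Complex.exp (z * Complex.I)‖ = Real.exp (-z.im) := by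
  rw [Complex.norm_exp]; simp

lemma exp_mul_I_inj {z w : ℂ} (h : |z.re - w.re| < 2 * Real.pi)
    (he : Complex.exp (z * Complex.I) = Complex.exp (w * Complex.I)) : z = w := by
  obtain ⟨n, hn⟩ := Complex.exp_eq_exp_iff_exists_int.1 he
  have h1 : z = w + n * (2 * Real.pi) := by
    apply mul_right_cancel₀ Complex.I_ne_zero
    rw [hn]; ring
  have h2 : z.re - w.re = n * (2 * Real.pi) := by
    have := congrArg Complex.re h1
    simp at this
    linarith
  have h3 : n = 0 := by
    rw [h2, abs_mul, abs_of_pos Real.two_pi_pos] at h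
    have h4 : |(n : ℝ)| < 1 := by nlinarith [Real.two_pi_pos]
    exact Int.abs_lt_one_iff.1 (by exact_mod_cast h4)
  simpa [h3] using h1

/-- The inner map of a welding in the logarithmic coordinate. -/
noncomputable def innerLog (F : ℂ → ℂ) (z : ℂ) : ℂ := F (Complex.exp (z * Complex.I))

/-- The outer map of a welding in the conjugated logarithmic coordinate. -/
noncomputable def outerLog (h : ℂ → ℂ) (z : ℂ) : ℂ :=
  conj ((Complex.exp (-(conj z * Complex.I)))⁻¹ + h (Complex.exp (-(conj z * Complex.I))))

lemma norm_exp_conj (z : ℂ) : ‖Complex.exp (-(conj z * Complex.I))‖ = Real.exp (-z.im) := by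
  rw [Complex.norm_exp]; simp

section

variable {Q σ F h : ℂ → ℂ} {U V : Set ℂ} {R : ℝ} {e : ℝ → ℝ}

lemma Welding.differentiableOn_innerLog (hW : Welding (tauOf Q) F h R) :
    DifferentiableOn ℂ (innerLog F) {z | -Real.log R < z.im} := by
  have hR : 0 < R := by linarith [hW.one_lt]
  refine hW.diffF.comp (by fun_prop) fun z hz => ?_
  rw [mem_ball_zero_iff, norm_exp_mul_I', ← Real.lt_log_iff_exp_lt hR]
  have : -Real.log R < z.im := hz
  linarith

lemma Welding.differentiableOn_outerLog (hW : Welding (tauOf Q) F h R) :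
    DifferentiableOn ℂ (outerLog h) {z | -Real.log R < z.im} := by
  have hR : 0 < R := by linarith [hW.one_lt]
  have h1 : ∀ z : ℂ, -Real.log R < z.im →
      DifferentiableAt ℂ (fun w : ℂ => (Complex.exp (-(w * Complex.I)))⁻¹ +
        h (Complex.exp (-(w * Complex.I)))) (conj z) := by
    intro z hz
    have h2 : DifferentiableAt ℂ (fun w : ℂ => Complex.exp (-(w * Complex.I))) (conj z) := by fun_prop
    refine (h2.inv (Complex.exp_ne_zero _)).add (DifferentiableAt.comp (g := h) _ ?_ h2)
    refine hW.diffh.differentiableAt (isOpen_ball.mem_nhds ?_)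
    rw [mem_ball_zero_iff, norm_exp_conj, ← Real.lt_log_iff_exp_lt hR]
    linarith
  intro z hz
  exact (differentiableAt_conj_conj_iff.2 (h1 z hz)).differentiableWithinAt

end

section

variable {Q σ F h : ℂ → ℂ} {U V : Set ℂ} {R : ℝ} {e : ℝ → ℝ}

lemma Welding.innerLog_eq (hW : Welding (tauOf Q) F h R)
    (he : ∀ x : ℝ, (e x : ℂ) = x + Q (Complex.exp (x * Complex.I))) (x : ℝ) :
    innerLog F x = conj (outerLog h (e x)) := by
  rw [innerLog, hW.circle he, outerLog, Complex.conj_conj, Complex.conj_ofReal]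
  push_cast
  rw [neg_mul]

lemma Welding.seamLog (hG : Gluing (tauOf Q) σ U V) (hW : Welding (tauOf Q) F h R)
    (hQ : DifferentiableOn ℂ Q {0}ᶜ)
    (he : ∀ x : ℝ, (e x : ℂ) = x + Q (Complex.exp (x * Complex.I))) :
    Seam (innerLog F) (outerLog h) e (Real.log R) where
  pos := Real.log_pos hW.one_lt
  diff₁ := hW.differentiableOn_innerLog
  diff₂ := hW.differentiableOn_outerLog
  glue := hW.innerLog_eq he
  cross x := by
    refine ⟨fun z => conj (z + Q (Complex.exp (z * Complex.I))), ?_, ?_⟩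
    · have h1 : ContinuousAt (fun z : ℂ => conj (z + Q (Complex.exp (z * Complex.I)))) x := by
        refine Complex.continuous_conj.continuousAt.comp (continuousAt_id.add ?_)
        exact ContinuousAt.comp (g := Q) (hQ.differentiableAt (isOpen_compl_singleton.mem_nhds
          (Complex.exp_ne_zero _))).continuousAt (by fun_prop)
      have h2 := h1.tendsto
      rwa [← he, Complex.conj_ofReal] at h2
    · have h1 : Tendsto (fun z : ℂ => Complex.exp (z * Complex.I)) (𝓝 (x : ℂ))
          (𝓝 (Complex.exp (x * Complex.I))) := by
        have : Continuous fun z : ℂ => Complex.exp (z * Complex.I) := by fun_prop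
        exact this.tendsto _
      have hx : Complex.exp (x * Complex.I) ∈ sphere (0 : ℂ) 1 := by simp
      filter_upwards [h1.eventually (eventually_nhdsSet_iff_forall.1 hW.seam _ hx),
        h1.eventually (eventually_nhdsSet_iff_forall.1 hG.eventually_mem _ hx)] with z hz hzU him
      have h2 := hG.norm_gt _ hzU (by
        rw [norm_exp_mul_I']; exact Real.one_lt_exp_iff.2 (by linarith))
      rw [tauOf_exp] at hz h2
      constructor
      · rw [Complex.norm_exp, Real.exp_lt_one_iff] at h2
        simp at h2 ⊢
        linarith
      · rw [innerLog, hz, outerLog, Complex.conj_conj, Complex.conj_conj]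

lemma Welding.norm_outerLog_le (hG : Gluing (tauOf Q) σ U V) (hW : Welding (tauOf Q) F h R)
    (hh : ∀ ζ : ℂ, ‖ζ‖ ≤ 1 / 2 → ‖h ζ‖ ≤ 1) {z : ℂ} (hz : 0 ≤ z.im) (hz' : z.im ≤ Real.log 2) :
    ‖outerLog h z‖ ≤ 3 := by
  rw [outerLog, Complex.norm_conj]
  refine (hW.norm_le hG hh).2 _ ?_ ?_
  · rw [norm_exp_conj, Real.exp_neg, one_div, inv_le_inv₀ (by norm_num) (Real.exp_pos _)]
    rwa [← Real.le_log_iff_exp_le (by norm_num)]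
  · rw [norm_exp_conj]
    exact Real.exp_le_one_iff.2 (by linarith)

/-- A welding of discs, normalised at its pole, in the logarithmic coordinate. -/
theorem Welding.halfPlaneWelding (hG : Gluing (tauOf Q) σ U V) (hW : Welding (tauOf Q) F h R)
    (hh : ∀ ζ : ℂ, ‖ζ‖ ≤ 1 / 2 → ‖h ζ‖ ≤ 1)
    (he : ∀ x : ℝ, (e x : ℂ) = x + Q (Complex.exp (x * Complex.I))) :
    HalfPlaneWelding e (innerLog F) (outerLog h) where
  diff₁ := hW.differentiableOn_innerLog.mono fun z (hz : 0 < z.im) =>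
    show -Real.log R < z.im by linarith [Real.log_pos hW.one_lt]
  diff₂ := hW.differentiableOn_outerLog.mono fun z (hz : 0 < z.im) =>
    show -Real.log R < z.im by linarith [Real.log_pos hW.one_lt]
  bound₁ z hz := (hW.norm_le hG hh).1 _ (by
    rw [norm_exp_mul_I']; exact Real.exp_le_one_iff.2 (by linarith))
  bound₂ z hz := by
    rcases le_or_gt z.im (Real.log 2) with h1 | h1
    · linarith [hW.norm_outerLog_le hG hh hz h1, Real.exp_pos z.im]
    · have h2 : ‖Complex.exp (-(conj z * Complex.I))‖ ≤ 1 / 2 := by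
        rw [norm_exp_conj, Real.exp_neg, one_div, inv_le_inv₀ (Real.exp_pos _) (by norm_num)]
        exact ((Real.log_lt_iff_lt_exp (by norm_num)).1 h1).le
      rw [outerLog, Complex.norm_conj]
      refine (norm_add_le _ _).trans ?_
      rw [norm_inv, norm_exp_conj, Real.exp_neg, inv_inv]
      linarith [hh _ h2]
  glue := hW.innerLog_eq he
  inj₁ z w hz hw hre heq := by
    refine exp_mul_I_inj hre (hW.injOn hG ?_ ?_ heq) <;>
    · rw [mem_ball_zero_iff, norm_exp_mul_I']
      exact Real.exp_lt_one_iff.2 (by linarith)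
  inj₂ z w hz hw hre heq := by
    have h1 : Complex.exp (-(conj z * Complex.I)) = Complex.exp (-(conj w * Complex.I)) :=
      hW.injOn' hG ⟨by rw [mem_ball_zero_iff, norm_exp_conj]; exact Real.exp_lt_one_iff.2 (by linarith),
        Complex.exp_ne_zero _⟩
      ⟨by rw [mem_ball_zero_iff, norm_exp_conj]; exact Real.exp_lt_one_iff.2 (by linarith),
        Complex.exp_ne_zero _⟩ ((starRingEnd ℂ).injective heq)
    have h2 := exp_mul_I_inj (z := -conj z) (w := -conj w) (by
      simp only [Complex.neg_re, Complex.conj_re]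
      rwa [neg_sub_neg, abs_sub_comm]) (by
      simpa only [neg_mul] using h1)
    exact (starRingEnd ℂ).injective (neg_injective h2)
  disj z w hz hw := by
    rw [outerLog, Complex.conj_conj]
    refine hW.disjoint hG ?_ ?_ (Complex.exp_ne_zero _)
    · rw [norm_exp_mul_I']; exact Real.exp_lt_one_iff.2 (by linarith)
    · rw [norm_exp_conj]; exact Real.exp_lt_one_iff.2 (by linarith)
  osc c := by
    -- otherwise `ζ (G ζ - conj c)`, which takes the value `1` at `0`, violates the maximum principle
    by_contra! hcon
    have hR := hW.one_lt
    set N : ℂ → ℂ := fun ζ => 1 + ζ * (h ζ - conj c) with hN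
    have dN : DifferentiableOn ℂ N (ball 0 R) :=
      (differentiableOn_id.mul (hW.diffh.sub_const _)).const_add 1
    have hNs : ∀ ζ : ℂ, ‖ζ‖ = 1 → ‖N ζ‖ < 1 := by
      intro ζ hζ
      have hζ0 : ζ ≠ 0 := by rintro rfl; simp at hζ
      obtain ⟨x, hx, hxe⟩ : ∃ x ∈ Icc (0 : ℝ) (2 * Real.pi),
          Complex.exp (-(x * Complex.I)) = ζ := by
        refine ⟨toIcoMod Real.two_pi_pos 0 (-ζ.arg), ?_, ?_⟩
        · have := toIcoMod_mem_Ico Real.two_pi_pos 0 (-ζ.arg)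
          rw [zero_add] at this
          exact ⟨this.1, this.2.le⟩
        · have h1 : ((toIcoMod Real.two_pi_pos 0 (-ζ.arg) : ℝ) : ℂ) = -ζ.arg -
              toIcoDiv Real.two_pi_pos 0 (-ζ.arg) * (2 * Real.pi) := by
            rw [toIcoMod]; push_cast; simp
          have h2 : Complex.exp (-(((toIcoMod Real.two_pi_pos 0 (-ζ.arg) : ℝ) : ℂ) * Complex.I)) =
              Complex.exp (ζ.arg * Complex.I) :=
            Complex.exp_eq_exp_iff_exists_int.2 ⟨toIcoDiv Real.two_pi_pos 0 (-ζ.arg), by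
              rw [h1]; ring⟩
          have h3 := Complex.norm_mul_exp_arg_mul_I ζ
          rw [hζ, Complex.ofReal_one, one_mul] at h3
          rw [h2, h3]
      have h1 := hcon x hx
      have h2 : N ζ = ζ * conj (outerLog h x - c) := by
        rw [map_sub, outerLog, Complex.conj_conj, Complex.conj_ofReal, hxe, hN]
        field_simp
        ring
      rw [h2, norm_mul, hζ, one_mul, Complex.norm_conj]
      exact h1
    have hcl : closedBall (0 : ℂ) 1 ⊆ ball 0 R := closedBall_subset_ball hR
    obtain ⟨s, hs, hsmax⟩ := (isCompact_sphere (0 : ℂ) 1).exists_isMaxOn ⟨1, by simp⟩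
      ((dN.continuousOn.mono (sphere_subset_closedBall.trans hcl)).norm)
    have h3 := Complex.norm_le_of_forall_mem_frontier_norm_le (U := ball (0 : ℂ) 1) (f := N)
      (C := ‖N s‖) isBounded_ball (DifferentiableOn.diffContOnCl (by
        rw [closure_ball _ one_ne_zero]; exact dN.mono hcl)) (fun z hz => by
        rw [frontier_ball _ one_ne_zero] at hz
        exact hsmax hz) (z := 0) (subset_closure (mem_ball_self one_pos))
    have h4 := hNs s (by simpa using hs)
    have h5 : N 0 = 1 := by simp [hN]
    rw [h5, norm_one] at h3
    linarith

end

/-! ### Equicontinuous weldings -/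

lemma isOpen_window (x : ℝ) :
    IsOpen {z : ℂ | |z.re - x| < Real.pi ∧ 0 < z.im ∧ z.im < Real.log 2} := by
  refine IsOpen.and ?_ (IsOpen.and ?_ ?_)
  · exact isOpen_lt (by fun_prop) continuous_const
  · exact isOpen_lt continuous_const Complex.continuous_im
  · exact isOpen_lt Complex.continuous_im continuous_const

lemma exists_window_energy {V : ℂ → ℂ} (hd : DifferentiableOn ℂ V {z | 0 < z.im})
    (hi : ∀ z w : ℂ, 0 < z.im → 0 < w.im → |z.re - w.re| < 2 * Real.pi → V z = V w → z = w)
    (hb : ∀ z : ℂ, 0 ≤ z.im → z.im ≤ Real.log 2 → ‖V z‖ ≤ 3) (x : ℝ) :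
    ∃ μ : Measure ℂ, IsFiniteMeasure μ ∧ μ.real univ ≤ 9 * Real.pi ∧
      Energy V μ {z | |z.re - x| < Real.pi ∧ 0 < z.im ∧ z.im < Real.log 2} := by
  refine exists_energy (isOpen_window x) (hd.mono fun z hz => hz.2.1) ?_
    fun z hz => hb z hz.2.1.le hz.2.2.le
  intro z hz w hw heq
  refine hi z w hz.2.1 hw.2.1 ?_ heq
  have h1 := abs_lt.1 hz.1
  have h2 := abs_lt.1 hw.1
  rw [abs_lt]
  constructor <;> linarith [h1.1, h1.2, h2.1, h2.2]

lemma CircleLift.surjective {M : ℝ} {e : ℝ → ℝ} (he : CircleLift M e) : Function.Surjective e := by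
  intro x
  have h1 := he.add_period
  have h2 : ∀ k : ℕ, e (0 + k * (2 * Real.pi)) = e 0 + k * (2 * Real.pi) := by
    intro k
    induction k with
    | zero => simp
    | succ k ih =>
      rw [show (0 : ℝ) + (k + 1 : ℕ) * (2 * Real.pi) = (0 + k * (2 * Real.pi)) + 2 * Real.pi by
        push_cast; ring, h1, ih]
      push_cast; ring
  have h3 : ∀ k : ℕ, e (0 - k * (2 * Real.pi)) = e 0 - k * (2 * Real.pi) := by
    intro k
    induction k with
    | zero => simp
    | succ k ih =>
      have := h1 (0 - (k + 1 : ℕ) * (2 * Real.pi))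
      rw [show (0 : ℝ) - (k + 1 : ℕ) * (2 * Real.pi) + 2 * Real.pi = 0 - k * (2 * Real.pi) by
        push_cast; ring, ih] at this
      push_cast at this ⊢
      linarith
  obtain ⟨k, hk⟩ := exists_nat_gt (|x - e 0| / (2 * Real.pi))
  rw [div_lt_iff₀ Real.two_pi_pos] at hk
  have h4 := abs_lt.1 hk
  have := intermediate_value_univ (0 - k * (2 * Real.pi)) (0 + k * (2 * Real.pi)) he.cont
  obtain ⟨y, hy⟩ := this (show x ∈ Icc _ _ from ⟨by rw [h3]; linarith [h4.1], by rw [h2]; linarith [h4.2]⟩)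
  exact ⟨y, hy⟩

/-- The weldings of analytic approximations of `e`, with a modulus of continuity along the seam which
depends only on the doubling constant. -/
theorem exists_weldings {M : ℝ} (hM : 2 ≤ M) {e : ℝ → ℝ} (he : CircleLift M e) :
    ∃ (en : ℕ → ℝ → ℝ) (V₁ V₂ : ℕ → ℂ → ℂ), (∀ x, Tendsto (en · x) atTop (𝓝 (e x))) ∧
      (∀ n, HalfPlaneWelding (en n) (V₁ n) (V₂ n)) ∧
      ∀ ε > 0, ∃ δ > 0, ∀ n (x : ℝ) (z : ℂ), 0 ≤ z.im → ‖z - x‖ < δ →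
        ‖V₁ n z - V₁ n x‖ ≤ ε ∧ ‖V₂ n z - V₂ n x‖ ≤ ε := by
  obtain ⟨Q, en, hQ, hen, hdbl, hlow, hlim⟩ :=
    exists_analytic_approx hM he.dbl he.mono he.cont he.add_period
  have hlift : ∀ n, CircleLift M (en n) := by
    intro n
    obtain ⟨ε, hε, hl⟩ := hlow n
    refine ⟨hdbl n, fun x y hxy => ?_, (contDiff_lift (hQ n) (hen n)).continuous,
      lift_add_two_pi (hen n)⟩
    have := hl x y hxy.le
    have h2 : 0 < ε * (y - x) := mul_pos hε (sub_pos.2 hxy)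
    linarith
  have hex : ∀ n, ∃ V₁ V₂ : ℂ → ℂ, HalfPlaneWelding (en n) V₁ V₂ ∧ (∃ d, Seam V₁ V₂ (en n) d) ∧
      ∀ z : ℂ, 0 ≤ z.im → z.im ≤ Real.log 2 → ‖V₂ z‖ ≤ 3 := by
    intro n
    obtain ⟨ε, hε, hl⟩ := hlow n
    obtain ⟨σ, U, V, hG⟩ := exists_gluing (hQ n) (hen n) hε hl
    obtain ⟨F, h, R, hW⟩ := hG.exists_welding
    have hh : ∀ ζ : ℂ, ‖ζ‖ ≤ 1 / 2 → ‖h ζ‖ ≤ 1 := fun ζ hζ => hW.norm_h_le (hQ n) (hen n) hζ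
    exact ⟨innerLog F, outerLog h, hW.halfPlaneWelding hG hh (hen n), ⟨_, hW.seamLog hG (hQ n) (hen n)⟩,
      fun z => hW.norm_outerLog_le hG hh⟩
  choose V₁ V₂ hV hS hb using hex
  refine ⟨en, V₁, V₂, hlim, hV, fun ε hε => ?_⟩
  obtain ⟨δ, hδ, H⟩ := equicontinuity hM (A := 9 * Real.pi) (by positivity) hε
  have key : ∀ n (x : ℝ), (∀ z : ℂ, 0 ≤ z.im → ‖z - x‖ < δ → ‖V₁ n z - V₁ n x‖ ≤ ε) ∧
      ∀ z : ℂ, 0 ≤ z.im → ‖z - en n x‖ < δ → ‖V₂ n z - V₂ n (en n x)‖ ≤ ε := by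
    intro n x
    obtain ⟨d, hd⟩ := hS n
    obtain ⟨μ₁, f₁, t₁, E₁⟩ := exists_window_energy (hV n).diff₁ (hV n).inj₁
      (fun z hz _ => (hV n).bound₁ z hz) x
    obtain ⟨μ₂, f₂, t₂, E₂⟩ := exists_window_energy (hV n).diff₂ (hV n).inj₂ (hb n) (en n x)
    exact H _ _ _ _ _ _ _ (hlift n) hd f₁ f₂ t₁ t₂ E₁ E₂
  refine ⟨δ, hδ, fun n x z hz hzx => ⟨(key n x).1 z hz hzx, ?_⟩⟩
  obtain ⟨y, rfl⟩ := (hlift n).surjective x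
  exact (key n y).2 z hz hzx

end PartialWelding

namespace PartialWelding

open Set Filter Topology Metric ComplexConjugate

/-! ### Passage to the limit -/

lemma tendstoLocallyUniformlyOn_of_equicontinuous {l : Filter ℕ} [l.NeBot] {V : ℕ → ℂ → ℂ}
    {W : ℂ → ℂ} {S : Set ℂ}
    (heq : ∀ z ∈ S, ∀ ε > 0, ∃ δ > 0, ∀ n, ∀ w ∈ S, dist w z < δ → dist (V n w) (V n z) ≤ ε)
    (hl : ∀ z ∈ S, Tendsto (V · z) l (𝓝 (W z))) : TendstoLocallyUniformlyOn V W l S := by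
  rw [Metric.tendstoLocallyUniformlyOn_iff]
  intro ε hε z hz
  obtain ⟨δ, hδ, H⟩ := heq z hz (ε / 4) (by linarith)
  refine ⟨ball z δ ∩ S, inter_mem (mem_nhdsWithin_of_mem_nhds (ball_mem_nhds z hδ))
    self_mem_nhdsWithin, ?_⟩
  filter_upwards [(hl z hz).eventually (ball_mem_nhds (W z) (by linarith : (0 : ℝ) < ε / 4))]
    with n hn w hw
  have h1 : dist (W w) (W z) ≤ ε / 4 :=
    le_of_tendsto ((hl w hw.2).dist (hl z hz)) (Eventually.of_forall fun m => H m w hw.2 hw.1)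
  have h2 := H n w hw.2 hw.1
  have h3 : dist (V n z) (W z) < ε / 4 := hn
  have h4 := dist_triangle4 (W w) (W z) (V n z) (V n w)
  rw [dist_comm] at h2 h3
  linarith

/-- Hurwitz' theorem. -/
lemma eventually_eq_zero_of_tendsto {l : Filter ℕ} [l.NeBot] {f : ℕ → ℂ → ℂ} {W : ℂ → ℂ} {p : ℂ}
    {r : ℝ} (hr : 0 < r) (hd : ∀ n, DifferentiableOn ℂ (f n) (ball p r))
    (hne : ∀ n, ∀ z ∈ ball p r, f n z ≠ 0) (hl : TendstoLocallyUniformlyOn f W l (ball p r))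
    (h0 : W p = 0) : ∀ᶠ z in 𝓝 p, W z = 0 := by
  have dW : DifferentiableOn ℂ W (ball p r) :=
    hl.differentiableOn (Eventually.of_forall hd) isOpen_ball
  refine ((dW.analyticAt (ball_mem_nhds p hr)).eventually_eq_zero_or_eventually_ne_zero).resolve_right
    fun hW => ?_
  rw [eventually_nhdsWithin_iff, Metric.eventually_nhds_iff] at hW
  obtain ⟨δ, hδ, hW⟩ := hW
  set ρ := min δ r / 2 with hρ
  have hm : 0 < min δ r := lt_min hδ hr
  have hρ0 : 0 < ρ := by positivity
  have hρδ : ρ < δ := by linarith [min_le_left δ r]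
  have hρr : ρ < r := by linarith [min_le_right δ r]
  have hcl : closedBall p ρ ⊆ ball p r := closedBall_subset_ball hρr
  obtain ⟨s, hs, hsmin⟩ := (isCompact_sphere p ρ).exists_isMinOn
    (NormedSpace.sphere_nonempty.2 hρ0.le)
    ((dW.continuousOn.mono (sphere_subset_closedBall.trans hcl)).norm)
  have hWs : 0 < ‖W s‖ := by
    refine norm_pos_iff.2 (hW ?_ ?_)
    · rw [mem_sphere.1 hs]; exact hρδ
    · rintro rfl
      simp at hs
      linarith
  have hu := (tendstoLocallyUniformlyOn_iff_tendstoUniformlyOn_of_compact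
    (isCompact_closedBall p ρ)).1 (hl.mono hcl)
  rw [Metric.tendstoUniformlyOn_iff] at hu
  obtain ⟨n, hn⟩ := (hu (‖W s‖ / 2) (by positivity)).exists
  have h1 : ‖f n p‖ < ‖W s‖ / 2 := by
    have := hn p (mem_closedBall_self hρ0.le)
    rwa [h0, dist_zero_left] at this
  have h2 := Complex.norm_le_of_forall_mem_frontier_norm_le (U := ball p ρ)
    (f := fun z => (f n z)⁻¹) (C := (‖W s‖ / 2)⁻¹) isBounded_ball
    (DifferentiableOn.diffContOnCl (by
      rw [closure_ball _ hρ0.ne']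
      exact ((hd n).mono hcl).inv fun z hz => hne n z (hcl hz))) (fun z hz => by
      rw [frontier_ball _ hρ0.ne'] at hz
      have h3 := hn z (sphere_subset_closedBall hz)
      have h4 : ‖W s‖ ≤ ‖W z‖ := hsmin hz
      rw [dist_eq_norm] at h3
      have h5 := norm_sub_norm_le (W z) (W z - f n z)
      rw [sub_sub_cancel] at h5
      rw [norm_inv]
      exact inv_anti₀ (by positivity) (by linarith)) (z := p)
    (subset_closure (mem_ball_self hρ0))
  rw [norm_inv, inv_le_inv₀ (norm_pos_iff.2 (hne n p (mem_ball_self hr))) (by positivity)] at h2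
  linarith

/-- Equicontinuity on the closed half-plane: at interior points it follows from the Schwarz lemma. -/
lemma equicontinuous_halfPlane {V : ℕ → ℂ → ℂ}
    (hd : ∀ n, DifferentiableOn ℂ (V n) {z : ℂ | 0 < z.im})
    (hb : ∀ n (z : ℂ), 0 ≤ z.im → ‖V n z‖ ≤ Real.exp z.im + 5)
    (hc : ∀ ε > 0, ∃ δ > 0, ∀ n (x : ℝ) (z : ℂ), 0 ≤ z.im → ‖z - x‖ < δ → ‖V n z - V n x‖ ≤ ε) :
    ∀ z ∈ {z : ℂ | 0 ≤ z.im}, ∀ ε > 0, ∃ δ > 0, ∀ n, ∀ w ∈ {z : ℂ | 0 ≤ z.im}, dist w z < δ →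
      dist (V n w) (V n z) ≤ ε := by
  intro z (hz : 0 ≤ z.im) ε hε
  rcases hz.eq_or_lt with h0 | hpos
  · obtain ⟨δ, hδ, H⟩ := hc ε hε
    have hzre : ((z.re : ℝ) : ℂ) = z := Complex.ext (by simp) (by simpa using h0)
    refine ⟨δ, hδ, fun n w hw hwz => ?_⟩
    have := H n z.re w hw (by rwa [hzre, ← dist_eq_norm])
    rwa [hzre, ← dist_eq_norm] at this
  · set r := z.im with hr
    set B := 2 * (Real.exp (2 * r) + 5) with hB
    have hB0 : 0 < B := by positivity
    have him : ∀ w ∈ ball z r, 0 < w.im ∧ w.im < 2 * r := by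
      intro w hw
      have h1 : |(w - z).im| < r := (Complex.abs_im_le_norm _).trans_lt (by
        rwa [mem_ball, dist_eq_norm] at hw)
      rw [Complex.sub_im, ← hr] at h1
      have h2 := abs_lt.1 h1
      constructor <;> linarith [h2.1, h2.2]
    refine ⟨min r (ε * r / B), lt_min hpos (by positivity), fun n w _ hwz => ?_⟩
    have hw1 : w ∈ ball z r := hwz.trans_le (min_le_left _ _)
    have hbn : ∀ w ∈ ball z r, ‖V n w‖ ≤ B / 2 := fun w hw => by
      refine (hb n w (him w hw).1.le).trans ?_
      have := Real.exp_le_exp.2 (him w hw).2.le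
      linarith
    have h1 := Complex.dist_le_div_mul_dist_of_mapsTo_ball (R₂ := B)
      ((hd n).mono fun w hw => (him w hw).1) (fun w hw => by
        rw [mem_closedBall, dist_eq_norm]
        have := norm_sub_le (V n w) (V n z)
        linarith [hbn w hw, hbn z (mem_ball_self hpos)]) hw1
    have h2 : dist w z ≤ ε * r / B := hwz.le.trans (min_le_right _ _)
    calc _ ≤ B / r * dist w z := h1
      _ ≤ B / r * (ε * r / B) := by gcongr
      _ = ε := by field_simp

lemma exists_ultralimit {u : Ultrafilter ℕ} {a : ℕ → ℂ} {C : ℝ} (h : ∀ n, ‖a n‖ ≤ C) :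
    ∃ b, Tendsto a u (𝓝 b) := by
  obtain ⟨b, -, hb⟩ := (isCompact_closedBall (0 : ℂ) C).ultrafilter_le_nhds' (u.map a)
    (Ultrafilter.mem_map.2 (Filter.mem_of_superset univ_mem fun n _ => by simpa using h n))
  exact ⟨b, hb⟩

/-- Injectivity passes to a non-constant limit. -/
lemma limit_inj {l : Filter ℕ} [l.NeBot] {V : ℕ → ℂ → ℂ} {W : ℂ → ℂ}
    (hd : ∀ n, DifferentiableOn ℂ (V n) {z : ℂ | 0 < z.im})
    (hi : ∀ n (z w : ℂ), 0 < z.im → 0 < w.im → |z.re - w.re| < 2 * Real.pi → V n z = V n w → z = w)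
    (hl : TendstoLocallyUniformlyOn V W l {z : ℂ | 0 < z.im})
    (hnc : ∀ (c p : ℂ), 0 < p.im → ¬ ∀ᶠ z in 𝓝 p, W z = c) (z w : ℂ) (hz : 0 < z.im)
    (hw : 0 < w.im) (hre : |z.re - w.re| < 2 * Real.pi) (heq : W z = W w) : z = w := by
  by_contra hne
  have ho : IsOpen ({s : ℂ | 0 < s.im} ∩ {s : ℂ | |s.re - w.re| < 2 * Real.pi} ∩ {s | s ≠ w}) :=
    ((isOpen_lt continuous_const Complex.continuous_im).inter
      (isOpen_lt (by fun_prop) continuous_const)).inter isOpen_ne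
  obtain ⟨r, hr, hsub⟩ := Metric.isOpen_iff.1 ho z ⟨⟨hz, hre⟩, hne⟩
  have hs1 : ball z r ⊆ {s : ℂ | 0 < s.im} := fun s hs => (hsub hs).1.1
  refine hnc (W w) z hz ?_
  have := eventually_eq_zero_of_tendsto (l := l) (f := fun n s => V n s - V n w)
    (W := fun s => W s - W w) hr (fun n => ((hd n).mono hs1).sub_const _)
    (fun n s hs h0 => (hsub hs).2 (hi n s w (hsub hs).1.1 hw (hsub hs).1.2 (sub_eq_zero.1 h0)))
    ?_ (sub_eq_zero.2 heq)
  · filter_upwards [this] with s hs using sub_eq_zero.1 hs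
  · have hp := hl.tendsto_at hw
    rw [Metric.tendstoLocallyUniformlyOn_iff]
    intro ε hε s hs
    obtain ⟨t, ht, H⟩ := Metric.tendstoLocallyUniformlyOn_iff.1 (hl.mono hs1) (ε / 2) (by linarith) s hs
    refine ⟨t, ht, ?_⟩
    filter_upwards [H, Metric.tendsto_nhds.1 hp (ε / 2) (by linarith)] with n h1 h2 y hy
    have h3 := h1 y hy
    rw [dist_comm] at h2
    have := dist_sub_sub_le (W y) (W w) (V n y) (V n w)
    linarith

/-- Disjointness of the images passes to a non-constant limit. -/
lemma limit_ne {l : Filter ℕ} [l.NeBot] {V : ℕ → ℂ → ℂ} {W : ℂ → ℂ} {a : ℕ → ℂ} {b : ℂ}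
    (hd : ∀ n, DifferentiableOn ℂ (V n) {z : ℂ | 0 < z.im})
    (hi : ∀ n (z : ℂ), 0 < z.im → V n z ≠ a n)
    (hl : TendstoLocallyUniformlyOn V W l {z : ℂ | 0 < z.im}) (ha : Tendsto a l (𝓝 b))
    (hnc : ∀ (c p : ℂ), 0 < p.im → ¬ ∀ᶠ z in 𝓝 p, W z = c) (z : ℂ) (hz : 0 < z.im) : W z ≠ b := by
  intro heq
  obtain ⟨r, hr, hs1⟩ := Metric.isOpen_iff.1 (isOpen_im_gt 0) z hz
  refine hnc b z hz ?_
  have := eventually_eq_zero_of_tendsto (l := l) (f := fun n s => V n s - a n)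
    (W := fun s => W s - b) hr (fun n => ((hd n).mono hs1).sub_const _)
    (fun n s hs h0 => hi n s (hs1 hs) (sub_eq_zero.1 h0)) ?_ (sub_eq_zero.2 heq)
  · filter_upwards [this] with s hs using sub_eq_zero.1 hs
  · rw [Metric.tendstoLocallyUniformlyOn_iff]
    intro ε hε s hs
    obtain ⟨t, ht, H⟩ := Metric.tendstoLocallyUniformlyOn_iff.1 (hl.mono hs1) (ε / 2) (by linarith) s hs
    refine ⟨t, ht, ?_⟩
    filter_upwards [H, Metric.tendsto_nhds.1 ha (ε / 2) (by linarith)] with n h1 h2 y hy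
    have h3 := h1 y hy
    rw [dist_comm] at h2
    have := dist_sub_sub_le (W y) b (V n y) (a n)
    linarith

/-- Conformal welding of a doubling circle homeomorphism, in the logarithmic coordinate. -/
theorem exists_limit_welding {M : ℝ} (hM : 2 ≤ M) {e : ℝ → ℝ} (he : CircleLift M e) :
    ∃ W₁ W₂ : ℂ → ℂ, DifferentiableOn ℂ W₁ {z | 0 < z.im} ∧ DifferentiableOn ℂ W₂ {z | 0 < z.im} ∧
      ContinuousOn W₁ {z | 0 ≤ z.im} ∧ ContinuousOn W₂ {z | 0 ≤ z.im} ∧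
      (∀ x : ℝ, W₁ x = conj (W₂ (e x))) ∧
      (∀ z w : ℂ, 0 < z.im → 0 < w.im → |z.re - w.re| < 2 * Real.pi → W₁ z = W₁ w → z = w) ∧
      (∀ z w : ℂ, 0 < z.im → 0 < w.im → |z.re - w.re| < 2 * Real.pi → W₂ z = W₂ w → z = w) ∧
      ∀ z w : ℂ, 0 < z.im → 0 < w.im → W₁ z ≠ conj (W₂ w) := by
  obtain ⟨en, V₁, V₂, hlim, hV, hc⟩ := exists_weldings hM he
  set u : Ultrafilter ℕ := hyperfilter ℕ with hu
  have hex₁ : ∀ z : ℂ, ∃ b, 0 ≤ z.im → Tendsto (V₁ · z) u (𝓝 b) := by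
    intro z
    by_cases hz : 0 ≤ z.im
    · obtain ⟨b, hb⟩ := exists_ultralimit (u := u) fun n => (hV n).bound₁ z hz
      exact ⟨b, fun _ => hb⟩
    · exact ⟨0, fun h => absurd h hz⟩
  have hex₂ : ∀ z : ℂ, ∃ b, 0 ≤ z.im → Tendsto (V₂ · z) u (𝓝 b) := by
    intro z
    by_cases hz : 0 ≤ z.im
    · obtain ⟨b, hb⟩ := exists_ultralimit (u := u) fun n => (hV n).bound₂ z hz
      exact ⟨b, fun _ => hb⟩
    · exact ⟨0, fun h => absurd h hz⟩
  choose W₁ hW₁ using hex₁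
  choose W₂ hW₂ using hex₂
  have eq₁ := equicontinuous_halfPlane (V := V₁) (fun n => (hV n).diff₁)
    (fun n z hz => ((hV n).bound₁ z hz).trans (by linarith [Real.exp_pos z.im]))
    (fun ε hε => by
      obtain ⟨δ, hδ, H⟩ := hc ε hε
      exact ⟨δ, hδ, fun n x z hz hx => (H n x z hz hx).1⟩)
  have eq₂ := equicontinuous_halfPlane (V := V₂) (fun n => (hV n).diff₂)
    (fun n z hz => (hV n).bound₂ z hz)
    (fun ε hε => by
      obtain ⟨δ, hδ, H⟩ := hc ε hε
      exact ⟨δ, hδ, fun n x z hz hx => (H n x z hz hx).2⟩)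
  have hcont : ∀ {V : ℕ → ℂ → ℂ}, (∀ z ∈ {z : ℂ | 0 ≤ z.im}, ∀ ε > 0, ∃ δ > 0, ∀ n,
      ∀ w ∈ {z : ℂ | 0 ≤ z.im}, dist w z < δ → dist (V n w) (V n z) ≤ ε) →
      ∀ n, ContinuousOn (V n) {z : ℂ | 0 ≤ z.im} := by
    intro V hV n
    rw [Metric.continuousOn_iff]
    intro z hz ε hε
    obtain ⟨δ, hδ, H⟩ := hV z hz (ε / 2) (by linarith)
    exact ⟨δ, hδ, fun w hw hwz => (H n w hw hwz).trans_lt (by linarith)⟩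
  have tl₁ := tendstoLocallyUniformlyOn_of_equicontinuous (l := (u : Filter ℕ)) eq₁
    (fun z hz => hW₁ z hz)
  have tl₂ := tendstoLocallyUniformlyOn_of_equicontinuous (l := (u : Filter ℕ)) eq₂
    (fun z hz => hW₂ z hz)
  have c₁ : ContinuousOn W₁ {z | 0 ≤ z.im} :=
    tl₁.continuousOn (Eventually.of_forall (hcont eq₁)).frequently
  have c₂ : ContinuousOn W₂ {z | 0 ≤ z.im} :=
    tl₂.continuousOn (Eventually.of_forall (hcont eq₂)).frequently
  have hsub : {z : ℂ | 0 < z.im} ⊆ {z : ℂ | 0 ≤ z.im} := fun z (hz : 0 < z.im) => hz.le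
  have to₁ := tl₁.mono hsub
  have to₂ := tl₂.mono hsub
  have d₁ : DifferentiableOn ℂ W₁ {z | 0 < z.im} :=
    to₁.differentiableOn (Eventually.of_forall fun n => (hV n).diff₁) (isOpen_im_gt 0)
  have d₂ : DifferentiableOn ℂ W₂ {z | 0 < z.im} :=
    to₂.differentiableOn (Eventually.of_forall fun n => (hV n).diff₂) (isOpen_im_gt 0)
  have hglue : ∀ x : ℝ, W₁ x = conj (W₂ (e x)) := by
    intro x
    have h1 : Tendsto (fun n => V₂ n (en n x)) u (𝓝 (W₂ (e x))) := by
      rw [Metric.tendsto_nhds]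
      intro ε hε
      obtain ⟨δ, hδ, H⟩ := hc (ε / 2) (by linarith)
      have h2 : Tendsto (en · x) u (𝓝 (e x)) := (hlim x).mono_left Nat.hyperfilter_le_atTop
      filter_upwards [Metric.tendsto_nhds.1 (hW₂ (e x) (by simp)) (ε / 2) (by linarith),
        Metric.tendsto_nhds.1 h2 δ hδ] with n h3 h4
      have h5 := (H n (e x) (en n x) (by simp) (by
        rw [← Complex.ofReal_sub, Complex.norm_real]; exact h4)).2
      rw [← dist_eq_norm] at h5
      linarith [dist_triangle (V₂ n (en n x)) (V₂ n (e x)) (W₂ (e x))]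
    refine tendsto_nhds_unique (hW₁ x (by simp)) ?_
    have h2 := (Complex.continuous_conj.tendsto _).comp h1
    exact h2.congr fun n => ((hV n).glue x).symm
  have hnc : ∀ c : ℂ, ¬ ∀ x : ℝ, W₂ x = c := by
    intro c hcon
    have hK : IsCompact (Complex.ofReal '' Icc (0 : ℝ) (2 * Real.pi)) :=
      isCompact_Icc.image Complex.continuous_ofReal
    have hsubK : Complex.ofReal '' Icc (0 : ℝ) (2 * Real.pi) ⊆ {z : ℂ | 0 ≤ z.im} := by
      rintro _ ⟨x, -, rfl⟩; simp
    have h1 := (tendstoLocallyUniformlyOn_iff_tendstoUniformlyOn_of_compact hK).1 (tl₂.mono hsubK)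
    obtain ⟨n, hn⟩ := (Metric.tendstoUniformlyOn_iff.1 h1 1 one_pos).exists
    obtain ⟨x, hx, h2⟩ := (hV n).osc c
    have h3 := hn x (mem_image_of_mem _ hx)
    rw [hcon, dist_comm, dist_eq_norm] at h3
    linarith
  have hbd : ∀ {W : ℂ → ℂ}, DifferentiableOn ℂ W {z | 0 < z.im} → ContinuousOn W {z | 0 ≤ z.im} →
      ∀ c p : ℂ, 0 < p.im → (∀ᶠ z in 𝓝 p, W z = c) → ∀ x : ℝ, W x = c := by
    intro W dW cW c p hp hev x
    have h1 : EqOn W (fun _ => c) {z : ℂ | 0 < z.im} := fun z hz =>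
      eq_of_eventually_const dW hp hev z hz
    exact h1.of_subset_closure cW continuousOn_const hsub
      (by rw [Complex.closure_setOfPred_lt_im]) (show (0 : ℝ) ≤ (x : ℂ).im by simp)
  have hnc₂ : ∀ c p : ℂ, 0 < p.im → ¬ ∀ᶠ z in 𝓝 p, W₂ z = c := fun c p hp hev =>
    hnc c (hbd d₂ c₂ c p hp hev)
  have hnc₁ : ∀ c p : ℂ, 0 < p.im → ¬ ∀ᶠ z in 𝓝 p, W₁ z = c := by
    intro c p hp hev
    refine hnc (conj c) fun y => ?_
    obtain ⟨x, rfl⟩ := he.surjective y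
    rw [← hbd d₁ c₁ c p hp hev x, hglue, Complex.conj_conj]
  refine ⟨W₁, W₂, d₁, d₂, c₁, c₂, hglue,
    limit_inj (fun n => (hV n).diff₁) (fun n => (hV n).inj₁) to₁ hnc₁,
    limit_inj (fun n => (hV n).diff₂) (fun n => (hV n).inj₂) to₂ hnc₂, fun z w hz hw => ?_⟩
  exact limit_ne (fun n => (hV n).diff₁) (a := fun n => conj (V₂ n w))
    (fun n z hz => (hV n).disj z w hz hw) to₁
    ((Complex.continuous_conj.tendsto _).comp (hW₂ w hw.le)) hnc₁ z hz

/-! ### The half-plane in the logarithmic coordinate -/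

/-- The principal square root of `z + 2`. -/
noncomputable def rootC (z : ℂ) : ℂ := Complex.exp (Complex.log (z + 2) / 2)

/-- The complex version of `KR`. On the upper half-plane it is injective with values in a vertical
half-strip of width less than `2 π`, on which the logarithmic coordinate is injective. -/
noncomputable def KC (z : ℂ) : ℂ := kapScale * (-(1 + rootC z)⁻¹ - kapR (-1))

lemma rootC_sq {z : ℂ} (hz : z + 2 ∈ Complex.slitPlane) : rootC z ^ 2 = z + 2 := by
  rw [rootC, ← Complex.exp_nat_mul]
  push_cast
  rw [mul_div_cancel₀ _ (two_ne_zero), Complex.exp_log (Complex.slitPlane_ne_zero hz)]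

lemma rootC_re_pos {z : ℂ} (hz : z + 2 ∈ Complex.slitPlane) : 0 < (rootC z).re := by
  rw [rootC, Complex.exp_re]
  refine mul_pos (Real.exp_pos _) (Real.cos_pos_of_mem_Ioo ?_)
  have h1 := Complex.neg_pi_lt_arg (z + 2)
  have h2 := (Complex.arg_le_pi (z + 2)).lt_of_ne (Complex.mem_slitPlane_iff_arg.1 hz).1
  have h3 : (Complex.log (z + 2) / 2).im = Complex.arg (z + 2) / 2 := by
    rw [show (2 : ℂ) = ((2 : ℝ) : ℂ) by simp, Complex.div_ofReal_im, Complex.log_im]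
  rw [h3]
  constructor <;> linarith

lemma mem_slit_of_im_pos {z : ℂ} (hz : 0 < z.im) : z + 2 ∈ Complex.slitPlane := by
  refine Complex.mem_slitPlane_iff.2 (Or.inr ?_)
  simpa using hz.ne'

lemma mem_slit_of_real {x : ℝ} (hx : x ∈ Icc (-1 : ℝ) 1) : (x : ℂ) + 2 ∈ Complex.slitPlane := by
  refine Complex.mem_slitPlane_iff.2 (Or.inl ?_)
  simp
  linarith [hx.1]

lemma rootC_im_pos {z : ℂ} (hz : 0 < z.im) : 0 < (rootC z).im := by
  have h1 := rootC_re_pos (mem_slit_of_im_pos hz)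
  have h2 := congrArg Complex.im (rootC_sq (mem_slit_of_im_pos hz))
  rw [sq] at h2
  simp at h2
  by_contra! h
  nlinarith

lemma one_add_rootC_ne {z : ℂ} (hz : z + 2 ∈ Complex.slitPlane) : 1 + rootC z ≠ 0 := by
  intro h
  have h1 := congrArg Complex.re h
  simp at h1
  linarith [rootC_re_pos hz]

lemma KC_differentiableAt {z : ℂ} (hz : z + 2 ∈ Complex.slitPlane) : DifferentiableAt ℂ KC z := by
  have h1 : DifferentiableAt ℂ rootC z :=
    (((differentiableAt_id.add_const 2).clog hz).div_const 2).cexp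
  exact ((((h1.const_add 1).inv (one_add_rootC_ne hz)).neg).sub_const _).const_mul _

lemma KC_inj {z w : ℂ} (hz : z + 2 ∈ Complex.slitPlane) (hw : w + 2 ∈ Complex.slitPlane)
    (h : KC z = KC w) : z = w := by
  have h0 : (kapScale : ℂ) ≠ 0 := Complex.ofReal_ne_zero.2 kapScale_pos.ne'
  have h1 := sub_left_injective (mul_left_cancel₀ h0 h)
  have h2 : rootC z = rootC w := add_left_cancel (inv_injective (neg_injective h1))
  have h3 := rootC_sq hz
  rw [h2, rootC_sq hw] at h3
  exact (add_right_cancel h3).symm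

lemma KC_im_pos {z : ℂ} (hz : 0 < z.im) : 0 < (KC z).im := by
  have h1 := rootC_im_pos hz
  have h2 := one_add_rootC_ne (mem_slit_of_im_pos hz)
  have h3 : (KC z).im = kapScale * ((rootC z).im / Complex.normSq (1 + rootC z)) := by
    rw [KC, Complex.im_ofReal_mul]
    simp [Complex.inv_im, neg_div]
  rw [h3]
  exact mul_pos kapScale_pos (div_pos h1 (Complex.normSq_pos.2 h2))

lemma KC_re {z : ℂ} (hz : 0 < z.im) : ∃ t : ℝ, 0 < t ∧ t < 1 ∧
    (KC z).re = kapScale * (-t - kapR (-1)) := by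
  have h1 := rootC_re_pos (mem_slit_of_im_pos hz)
  have h2 := one_add_rootC_ne (mem_slit_of_im_pos hz)
  have h3 := Complex.normSq_pos.2 h2
  refine ⟨((1 + rootC z)⁻¹).re, ?_, ?_, ?_⟩
  · rw [Complex.inv_re]
    refine div_pos ?_ h3
    simp
    linarith
  · rw [Complex.inv_re, div_lt_one h3, Complex.normSq_apply]
    simp
    nlinarith [sq_nonneg (rootC z).im]
  · simp [KC]

lemma KC_width {z w : ℂ} (hz : 0 < z.im) (hw : 0 < w.im) :
    |(KC z).re - (KC w).re| < 2 * Real.pi := by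
  obtain ⟨s, hs0, hs1, hs⟩ := KC_re hz
  obtain ⟨t, ht0, ht1, ht⟩ := KC_re hw
  rw [hs, ht, ← mul_sub, abs_mul, abs_of_pos kapScale_pos]
  have h1 : |-s - kapR (-1) - (-t - kapR (-1))| < 1 := by
    rw [abs_lt]; constructor <;> linarith
  have := kapScale_lt
  have := kapScale_pos
  nlinarith

lemma KC_ofReal {x : ℝ} (hx : x ∈ Icc (-1 : ℝ) 1) : KC x = KR x := by
  have hpos : 0 < x + 2 := by linarith [hx.1]
  have h1 : rootC x = (Real.sqrt (x + 2) : ℝ) := by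
    rw [rootC, Real.sqrt_eq_rpow, Real.rpow_def_of_pos hpos]
    push_cast
    rw [Complex.ofReal_log hpos.le]
    push_cast
    congr 1; ring
  have h2 : ((kapR x : ℝ) : ℂ) = -(1 + (Real.sqrt (x + 2) : ℂ))⁻¹ := by
    rw [kapR]; push_cast; ring
  rw [KC, KR, h1, ← h2]
  push_cast
  ring

end PartialWelding

open Set Filter Topology Metric ComplexConjugate PartialWelding in
/-- **Partial welding.** Given open sets `Â, B̂ ⊆ ℂ`, boundary arcs
`γ_A ⊆ ∂Â`, `γ_B ⊆ ∂B̂`, a homeomorphism `f : γ_A → γ_B`, and Riemann maps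
`ψ_A : Â → ℍ`, `ψ_B : B̂ → -ℍ` extending continuously and injectively to the
arcs and carrying them onto `[-1,1]`, if the induced boundary map
`g = ψ_B ∘ f ∘ ψ_A⁻¹ : [-1,1] → [-1,1]` is `k`-quasisymmetric, then there are
injective holomorphic maps `Φ_A` on `Â` and `Φ_B` on `B̂`, continuous up to the
arcs, with disjoint images, such that `Φ_A = Φ_B ∘ f` on `γ_A`. -/
theorem partial_welding
    (Ahat Bhat : Set ℂ) (hAopen : IsOpen Ahat) (hBopen : IsOpen Bhat)
    (γA γB : Set ℂ) (hγA : γA ⊆ frontier Ahat) (hγB : γB ⊆ frontier Bhat)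
    (harcA : ∃ cA : ℝ → ℂ, ContinuousOn cA (Set.Icc 0 1) ∧
      Set.InjOn cA (Set.Icc 0 1) ∧ cA '' Set.Icc 0 1 = γA)
    (harcB : ∃ cB : ℝ → ℂ, ContinuousOn cB (Set.Icc 0 1) ∧
      Set.InjOn cB (Set.Icc 0 1) ∧ cB '' Set.Icc 0 1 = γB)
    (f : ℂ → ℂ) (hfbij : Set.BijOn f γA γB) (hfcont : ContinuousOn f γA)
    (hfinv : ∃ finv : ℂ → ℂ, ContinuousOn finv γB ∧ ∀ x ∈ γA, finv (f x) = x)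
    (ψA ψB : ℂ → ℂ)
    (hψA_hol : DifferentiableOn ℂ ψA Ahat)
    (hψA_bij : Set.BijOn ψA Ahat {z : ℂ | 0 < z.im})
    (hψA_cont : ContinuousOn ψA (Ahat ∪ γA))
    (hψA_inj : Set.InjOn ψA (Ahat ∪ γA))
    (hψA_arc : ψA '' γA = Complex.ofReal '' Set.Icc (-1 : ℝ) 1)
    (hψB_hol : DifferentiableOn ℂ ψB Bhat)
    (hψB_bij : Set.BijOn ψB Bhat {z : ℂ | z.im < 0})
    (hψB_cont : ContinuousOn ψB (Bhat ∪ γB))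
    (hψB_inj : Set.InjOn ψB (Bhat ∪ γB))
    (hψB_arc : ψB '' γB = Complex.ofReal '' Set.Icc (-1 : ℝ) 1)
    (g : ℝ → ℝ) (k : ℝ) (hk : 0 < k)
    (hg_compat : ∀ p ∈ γA, ψB (f p) = Complex.ofReal (g ((ψA p).re)))
    (hg_qs : QuasisymmetricOn g k (Set.Icc (-1 : ℝ) 1)) :
    ∃ ΦA ΦB : ℂ → ℂ,
      DifferentiableOn ℂ ΦA Ahat ∧ Set.InjOn ΦA Ahat
      ∧ ContinuousOn ΦA (Ahat ∪ γA)
      ∧ DifferentiableOn ℂ ΦB Bhat ∧ Set.InjOn ΦB Bhat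
      ∧ ContinuousOn ΦB (Bhat ∪ γB)
      ∧ Disjoint (ΦA '' Ahat) (ΦB '' Bhat)
      ∧ ∀ x ∈ γA, ΦA x = ΦB (f x) := by
  have hA : ∀ p ∈ γA, ∃ x ∈ Icc (-1 : ℝ) 1, ψA p = x := fun p hp => by
    obtain ⟨x, hx, h⟩ := hψA_arc.subset (mem_image_of_mem ψA hp)
    exact ⟨x, hx, h.symm⟩
  have hB : ∀ q ∈ γB, ∃ x ∈ Icc (-1 : ℝ) 1, ψB q = x := fun q hq => by
    obtain ⟨x, hx, h⟩ := hψB_arc.subset (mem_image_of_mem ψB hq)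
    exact ⟨x, hx, h.symm⟩
  have hAim : ∀ p ∈ Ahat, 0 < (ψA p).im := fun p hp => hψA_bij.mapsTo hp
  have hBim : ∀ p ∈ Bhat, 0 < (conj (ψB p)).im := fun p hp => by
    have : (ψB p).im < 0 := hψB_bij.mapsTo hp
    simpa using this
  -- `g` maps `[-1, 1]` onto itself, hence fixes the end points
  have hgm : ∀ x ∈ Icc (-1 : ℝ) 1, g x ∈ Icc (-1 : ℝ) 1 := by
    intro x hx
    obtain ⟨p, hp, hpx⟩ := hψA_arc.superset (mem_image_of_mem _ hx)
    obtain ⟨y, hy, hpy⟩ := hB (f p) (hfbij.mapsTo hp)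
    rw [hg_compat p hp, hpx, Complex.ofReal_re] at hpy
    rwa [Complex.ofReal_injective hpy]
  have hgs : ∀ y ∈ Icc (-1 : ℝ) 1, ∃ x ∈ Icc (-1 : ℝ) 1, g x = y := by
    intro y hy
    obtain ⟨q, hq, hqy⟩ := hψB_arc.superset (mem_image_of_mem _ hy)
    obtain ⟨p, hp, rfl⟩ := hfbij.surjOn hq
    obtain ⟨x, hx, hpx⟩ := hA p hp
    refine ⟨x, hx, ?_⟩
    rw [hg_compat p hp, hpx, Complex.ofReal_re] at hqy
    exact Complex.ofReal_injective hqy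
  have mem_m : (-1 : ℝ) ∈ Icc (-1 : ℝ) 1 := ⟨le_rfl, by norm_num⟩
  have mem_p : (1 : ℝ) ∈ Icc (-1 : ℝ) 1 := ⟨by norm_num, le_rfl⟩
  have gm : g (-1) = -1 := by
    obtain ⟨x, hx, hxy⟩ := hgs (-1) mem_m
    have := hg_qs.2.1.monotoneOn mem_m hx hx.1
    exact le_antisymm (by linarith) (hgm _ mem_m).1
  have gp : g 1 = 1 := by
    obtain ⟨x, hx, hxy⟩ := hgs 1 mem_p
    have := hg_qs.2.1.monotoneOn hx mem_p hx.2
    exact le_antisymm (hgm _ mem_p).2 (by linarith)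
  obtain ⟨M, e, hM, hD, hm, hc, hper, hKR⟩ := exists_circle_map hk hg_qs gm gp
  obtain ⟨W₁, W₂, d₁, d₂, c₁, c₂, hglue, inj₁, inj₂, disj⟩ :=
    exists_limit_welding hM ⟨hD, hm, hc, hper⟩
  have hslitA : ∀ p ∈ Ahat ∪ γA, ψA p + 2 ∈ Complex.slitPlane := by
    rintro p (hp | hp)
    · exact mem_slit_of_im_pos (hAim p hp)
    · obtain ⟨x, hx, h⟩ := hA p hp
      rw [h]; exact mem_slit_of_real hx
  have hslitB : ∀ p ∈ Bhat ∪ γB, conj (ψB p) + 2 ∈ Complex.slitPlane := by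
    rintro p (hp | hp)
    · exact mem_slit_of_im_pos (hBim p hp)
    · obtain ⟨x, hx, h⟩ := hB p hp
      rw [h, Complex.conj_ofReal]; exact mem_slit_of_real hx
  refine ⟨fun p => W₁ (KC (ψA p)), fun p => conj (W₂ (KC (conj (ψB p)))), ?_, ?_, ?_, ?_, ?_, ?_, ?_, ?_⟩
  · exact d₁.comp (fun p hp => (KC_differentiableAt (hslitA p (Or.inl hp))).comp_differentiableWithinAt
      p (hψA_hol p hp)) fun p hp => KC_im_pos (hAim p hp)
  · intro p hp q hq hpq
    have h1 := inj₁ _ _ (KC_im_pos (hAim p hp)) (KC_im_pos (hAim q hq))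
      (KC_width (hAim p hp) (hAim q hq)) hpq
    exact hψA_bij.injOn hp hq (KC_inj (hslitA p (Or.inl hp)) (hslitA q (Or.inl hq)) h1)
  · refine c₁.comp (fun p hp => (KC_differentiableAt (hslitA p hp)).continuousAt.comp_continuousWithinAt
      (hψA_cont p hp)) ?_
    rintro p (hp | hp)
    · exact (KC_im_pos (hAim p hp)).le
    · obtain ⟨x, hx, h⟩ := hA p hp
      show 0 ≤ (KC (ψA p)).im
      rw [h, KC_ofReal hx, Complex.ofReal_im]
  · intro p hp
    have h1 : DifferentiableAt ℂ (fun w => W₂ (KC w)) (conj (ψB p)) :=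
      DifferentiableAt.comp (g := W₂) _ (d₂.differentiableAt ((isOpen_im_gt 0).mem_nhds
        (KC_im_pos (hBim p hp)))) (KC_differentiableAt (hslitB p (Or.inl hp)))
    have h2 : DifferentiableAt ℂ (conj ∘ (fun w => W₂ (KC w)) ∘ conj) (ψB p) :=
      differentiableAt_conj_conj_iff.2 h1
    exact h2.comp_differentiableWithinAt p (hψB_hol p hp)
  · intro p hp q hq hpq
    have h1 := inj₂ _ _ (KC_im_pos (hBim p hp)) (KC_im_pos (hBim q hq))
      (KC_width (hBim p hp) (hBim q hq)) ((starRingEnd ℂ).injective hpq)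
    exact hψB_bij.injOn hp hq ((starRingEnd ℂ).injective
      (KC_inj (hslitB p (Or.inl hp)) (hslitB q (Or.inl hq)) h1))
  · have hcB : ContinuousOn (fun p => conj (ψB p)) (Bhat ∪ γB) :=
      Complex.continuous_conj.comp_continuousOn hψB_cont
    refine Complex.continuous_conj.comp_continuousOn (c₂.comp (fun p hp =>
      ContinuousAt.comp_continuousWithinAt (g := KC)
      (KC_differentiableAt (hslitB p hp)).continuousAt (hcB p hp)) ?_)
    rintro p (hp | hp)
    · exact (KC_im_pos (hBim p hp)).le
    · obtain ⟨x, hx, h⟩ := hB p hp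
      show 0 ≤ (KC (conj (ψB p))).im
      rw [h, Complex.conj_ofReal, KC_ofReal hx, Complex.ofReal_im]
  · rw [disjoint_left]
    rintro _ ⟨p, hp, rfl⟩ ⟨q, hq, hqp⟩
    exact disj _ _ (KC_im_pos (hAim p hp)) (KC_im_pos (hBim q hq)) hqp.symm
  · intro p hp
    obtain ⟨x, hx, h⟩ := hA p hp
    show W₁ (KC (ψA p)) = conj (W₂ (KC (conj (ψB (f p)))))
    rw [hg_compat p hp, h, Complex.conj_ofReal, Complex.ofReal_re, KC_ofReal hx, KC_ofReal (hgm x hx),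
      hglue, hKR x hx]
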